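/- arXiv:1002.1377 — 2 statements merged into one kernel-verified Lean document; each statement's English description precedes it below -/
import Mathlib

section
/- Let r < e^{-2} be a positive real number and let K_t(s) = (t−s)₊^{-1/2} |ln(t−s)₊|^{-1} (interpreted as 0 for s ≥ t). Consider the Volterra operator V : L₂[0,r] → C[0,r], (Vf)(t) = ∫₀ᵗ f(s) K_t(s) ds, and its adjoint V* : M[0,r] → L₂[0,r], (V*μ)(s) = ∫₀ʳ K_t(s) μ(dt), where M[0,r] is the space of signed measures of finite variation. Then there exists a numerical constant C such that for all positive integers n, max{ e_n(V), e_n(V*) } ≤ C · n^{-1/2}. -/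
open scoped ENNReal
open MeasureTheory

/-- The critical Volterra kernel `K_t(s) = (t-s)₊^{-1/2} |ln (t-s)₊|^{-1}`,
interpreted as `0` for `s ≥ t`. -/
noncomputable def Ker (t s : ℝ) : ℝ :=
  if s < t then (t - s) ^ (-(1 : ℝ) / 2) * |Real.log (t - s)|⁻¹ else 0

/-- The adjoint operator `V* : M[0,r] → L₂[0,r]`, `(V*μ)(s) = ∫₀ʳ K_t(s) μ(dt)`,
where the integral against the signed measure `μ` is computed through its Jordan
decomposition. -/
noncomputable def VstarInt (μ : MeasureTheory.SignedMeasure ℝ) (s : ℝ) : ℝ :=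
  (∫ t, Ker t s ∂μ.toJordanDecomposition.posPart) -
    ∫ t, Ker t s ∂μ.toJordanDecomposition.negPart

/-- The Volterra operator `V : L₂[0,r] → C[0,r]`, `(Vf)(t) = ∫₀ᵗ f(s) K_t(s) ds`. -/
noncomputable def Vint (f : ℝ → ℝ) (t : ℝ) : ℝ := ∫ s in Set.Ioc (0 : ℝ) t, f s * Ker t s

section
open scoped FourierTransform SchwartzMap

theorem ev_planch (f : ℝ → ℂ) (h1 : Integrable f) (h2 : MemLp f 2) :
    ∫⁻ x, ‖𝓕 f x‖ₑ ^ 2 = ∫⁻ x, ‖f x‖ₑ ^ 2 := by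
  set F : Lp ℂ 2 (volume : Measure ℝ) := h2.toLp f with hF
  have hFf : F =ᵐ[volume] f := h2.coeFn_toLp
  have hcont : Continuous (𝓕 f) := by
    exact VectorFourier.fourierIntegral_continuous Real.continuous_fourierChar (by fun_prop) h1
  have key : (𝓕 F : Lp ℂ 2 (volume : Measure ℝ)) =ᵐ[volume] 𝓕 f := by
    refine ae_eq_of_integral_contDiff_smul_eq ?_ ?_ ?_
    · exact (Lp.memLp (𝓕 F)).locallyIntegrable (by norm_num)
    · exact hcont.locallyIntegrable
    · intro g hg hgc
      have hc1 : HasCompactSupport (Complex.ofRealCLM ∘ g) := hgc.comp_left rfl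
      have hc2 : ContDiff ℝ (⊤ : ℕ∞) (Complex.ofRealCLM ∘ g) := Complex.ofRealCLM.contDiff.comp hg
      set G : 𝓢(ℝ, ℂ) := hc1.toSchwartzMap hc2 with hG
      have e1 : (∫ x, g x • (𝓕 F : Lp ℂ 2 (volume : Measure ℝ)) x) = Lp.toTemperedDistribution (𝓕 F) G := by
        rw [Lp.toTemperedDistribution_apply]
        simp [hG]
      rw [e1, ← Lp.fourier_toTemperedDistribution_eq, TemperedDistribution.fourier_apply,
        Lp.toTemperedDistribution_apply]
      have e2 : (∫ x, (𝓕 G) x • F x) = ∫ x, (𝓕 (G : ℝ → ℂ)) x • f x := by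
        refine integral_congr_ae ?_
        filter_upwards [hFf] with x hx
        rw [hx, SchwartzMap.fourier_coe]
      rw [e2]
      have := VectorFourier.integral_fourierIntegral_smul_eq_flip (L := innerₗ ℝ) (μ := volume) (ν := volume)
        Real.continuous_fourierChar (by fun_prop) G.integrable h1
      rw [flip_innerₗ] at this
      refine this.trans ?_
      refine integral_congr_ae (Filter.Eventually.of_forall fun x => ?_)
      simp [hG]
      left; rfl
  have h3 : eLpNorm (𝓕 F : Lp ℂ 2 (volume : Measure ℝ)) 2 volume = eLpNorm F 2 volume := by
    rw [← Lp.enorm_def, ← Lp.enorm_def, ← ofReal_norm, ← ofReal_norm, Lp.norm_fourier_eq]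
  rw [eLpNorm_congr_ae key, eLpNorm_congr_ae hFf] at h3
  rw [eLpNorm_eq_lintegral_rpow_enorm_toReal (by norm_num) (by norm_num),
    eLpNorm_eq_lintegral_rpow_enorm_toReal (by norm_num) (by norm_num)] at h3
  have h4 := ENNReal.rpow_left_injective (by norm_num) h3
  simpa using h4

/-- The kernel as a function of the difference, cut off at `exp (-2)`. -/
noncomputable def evK (u : ℝ) : ℝ :=
  if 0 < u ∧ u < Real.exp (-2) then u ^ (-(1 : ℝ) / 2) * |Real.log u|⁻¹ else 0

theorem evK_nonneg (u : ℝ) : 0 ≤ evK u := by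
  unfold evK
  split_ifs with h
  · exact mul_nonneg (Real.rpow_nonneg h.1.le _) (by positivity)
  · exact le_rfl

theorem evK_measurable : Measurable evK := by
  unfold evK
  refine Measurable.ite ?_ (by fun_prop) measurable_const
  exact measurableSet_Ioo

theorem evK_of_nonpos {u : ℝ} (hu : u ≤ 0) : evK u = 0 := by
  unfold evK
  rw [if_neg]
  intro h; linarith [h.1]

theorem evK_of_ge {u : ℝ} (hu : Real.exp (-2) ≤ u) : evK u = 0 := by
  unfold evK
  rw [if_neg]
  intro h; linarith [h.2]

theorem ev_log_neg {u : ℝ} (h0 : 0 < u) (h1 : u < Real.exp (-2)) : Real.log u < -2 := by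
  rwa [Real.log_lt_iff_lt_exp h0]

theorem evK_eq_sqrt {u : ℝ} (h0 : 0 < u) (h1 : u < Real.exp (-2)) :
    evK u = (√u * (-Real.log u))⁻¹ := by
  unfold evK
  have hl := ev_log_neg h0 h1
  rw [if_pos ⟨h0, h1⟩, abs_of_neg (by linarith), mul_inv, Real.sqrt_eq_rpow, ← Real.rpow_neg h0.le]
  norm_num

theorem evK_antitone {u v : ℝ} (hu : 0 < u) (huv : u ≤ v) : evK v ≤ evK u := by
  by_cases hv : v < Real.exp (-2)
  · have hv0 : 0 < v := by linarith
    rw [evK_eq_sqrt hv0 hv, evK_eq_sqrt hu (by linarith)]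
    have hlv := ev_log_neg hv0 hv
    have hlu := ev_log_neg hu (lt_of_le_of_lt huv hv)
    have h := Real.log_div_sqrt_antitoneOn (a := v⁻¹) (b := u⁻¹) (by
      show Real.exp 2 ≤ _
      rw [le_inv_comm₀ (Real.exp_pos _) hv0, ← Real.exp_neg]; exact hv.le) (by
      show Real.exp 2 ≤ _
      rw [le_inv_comm₀ (Real.exp_pos _) hu, ← Real.exp_neg]; linarith) (inv_anti₀ hu huv)
    simp only [Real.log_inv, Real.sqrt_inv, div_inv_eq_mul] at h
    apply inv_anti₀
    · apply mul_pos (Real.sqrt_pos.2 hu); linarith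
    · linarith
  · rw [evK_of_ge (not_lt.1 hv)]; exact evK_nonneg u

theorem evK_le_aux {u v : ℝ} (h0 : 0 < u) (huv : u ≤ v) (hv : v < Real.exp (-2)) :
    evK u ≤ u ^ (-(1 : ℝ) / 2) * (-Real.log v)⁻¹ := by
  unfold evK
  have hl := ev_log_neg (by linarith) hv
  have hlu := ev_log_neg h0 (lt_of_le_of_lt huv hv)
  rw [if_pos ⟨h0, by linarith⟩, abs_of_neg (by linarith)]
  apply mul_le_mul_of_nonneg_left _ (Real.rpow_nonneg h0.le _)
  apply inv_anti₀ (by linarith)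
  linarith [Real.log_le_log h0 huv]

theorem evK_le_half {u : ℝ} (h0 : 0 < u) :
    evK u ≤ u ^ (-(1 : ℝ) / 2) * (1 / 2) := by
  by_cases hu : u < Real.exp (-2)
  · refine (evK_le_aux h0 le_rfl hu).trans ?_
    apply mul_le_mul_of_nonneg_left _ (Real.rpow_nonneg h0.le _)
    rw [one_div]
    apply inv_anti₀ (by norm_num)
    linarith [ev_log_neg h0 hu]
  · rw [evK_of_ge (not_lt.1 hu)]
    have := Real.rpow_nonneg h0.le (-(1 : ℝ) / 2)
    positivity

theorem ev_rpow_int (v : ℝ) (hv : 0 ≤ v) :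
    IntegrableOn (fun u : ℝ => u ^ (-(1 : ℝ) / 2)) (Set.Ioc 0 v) ∧
      ∫ u in Set.Ioc 0 v, u ^ (-(1 : ℝ) / 2) = 2 * √v := by
  constructor
  · have := intervalIntegral.intervalIntegrable_rpow' (a := 0) (b := v) (r := -(1 : ℝ) / 2) (by norm_num)
    rwa [intervalIntegrable_iff_integrableOn_Ioc_of_le hv] at this
  · rw [← intervalIntegral.integral_of_le hv, integral_rpow (Or.inl (by norm_num)), Real.sqrt_eq_rpow]
    norm_num
    ring

theorem evK_integrableOn (v : ℝ) (hv : 0 ≤ v) : IntegrableOn evK (Set.Ioc 0 v) := by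
  refine Integrable.mono' ((ev_rpow_int v hv).1.mul_const (1 / 2)) evK_measurable.aestronglyMeasurable ?_
  refine (ae_restrict_iff' measurableSet_Ioc).2 (Filter.Eventually.of_forall fun u hu => ?_)
  rw [Real.norm_of_nonneg (evK_nonneg u)]
  exact evK_le_half hu.1

theorem evK_supp : Function.support evK ⊆ Set.Ioc 0 (Real.exp (-2)) := by
  intro u hu
  by_contra h
  apply hu
  unfold evK
  rw [if_neg]
  intro h'; exact h ⟨h'.1, h'.2.le⟩

theorem evK_integrable : Integrable evK :=
  (integrableOn_iff_integrable_of_support_subset evK_supp).1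
    (evK_integrableOn _ (Real.exp_pos _).le)

theorem evK_setInt_le_half (v : ℝ) (hv : 0 ≤ v) : ∫ u in Set.Ioc 0 v, evK u ≤ √v := by
  calc ∫ u in Set.Ioc 0 v, evK u ≤ ∫ u in Set.Ioc 0 v, u ^ (-(1 : ℝ) / 2) * (1 / 2) := by
        refine setIntegral_mono_on (evK_integrableOn v hv) ((ev_rpow_int v hv).1.mul_const _)
          measurableSet_Ioc (fun u hu => evK_le_half hu.1)
    _ = √v := by rw [integral_mul_const, (ev_rpow_int v hv).2]; ring

theorem evK_setInt_le (v : ℝ) (hv : 0 < v) (hv2 : v < Real.exp (-2)) :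
    ∫ u in Set.Ioc 0 v, evK u ≤ 2 * √v * (-Real.log v)⁻¹ := by
  calc ∫ u in Set.Ioc 0 v, evK u ≤ ∫ u in Set.Ioc 0 v, u ^ (-(1 : ℝ) / 2) * (-Real.log v)⁻¹ := by
        refine setIntegral_mono_on (evK_integrableOn v hv.le) ((ev_rpow_int v hv.le).1.mul_const _)
          measurableSet_Ioc (fun u hu => evK_le_aux hu.1 hu.2 hv2)
    _ = _ := by rw [integral_mul_const, (ev_rpow_int v hv.le).2]

theorem evK_int_le_one : ∫ u, evK u ≤ 1 := by
  rw [← setIntegral_eq_integral_of_forall_compl_eq_zero (s := Set.Ioc 0 (Real.exp (-2)))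
    (fun x hx => by by_contra h; exact hx (evK_supp h))]
  refine (evK_setInt_le_half _ (Real.exp_pos _).le).trans ?_
  rw [Real.sqrt_le_one]
  exact Real.exp_le_one_iff.2 (by norm_num)

theorem evK_sq_integrable : Integrable (fun u => evK u ^ 2) := by
  have hs : Function.support (fun u => evK u ^ 2) ⊆ Set.Ioc 0 (Real.exp (-2)) := by
    intro u hu
    apply evK_supp
    intro h; apply hu; simp [h]
  refine (integrableOn_iff_integrable_of_support_subset hs).1 ?_
  have h := intervalIntegral.integrableOn_deriv_of_nonneg (a := 0) (b := Real.exp (-2))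
    (g := fun u => -(Real.log u)⁻¹) (g' := fun u => u⁻¹ / (Real.log u) ^ 2) ?_ ?_ ?_
  · refine h.congr_fun_ae ?_
    rw [Filter.EventuallyEq, ae_restrict_iff' measurableSet_Ioc]
    have hne : ∀ᵐ u : ℝ, u ≠ Real.exp (-2) := by
      simp [ae_iff, measure_singleton]
    filter_upwards [hne] with u hu1 hu
    rw [evK_eq_sqrt hu.1 (lt_of_le_of_ne hu.2 hu1), inv_pow, mul_pow, Real.sq_sqrt hu.1.le, neg_sq,
      mul_inv]
    rfl
  · intro u hu
    by_cases h0 : u = 0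
    · subst h0
      apply ContinuousAt.continuousWithinAt
      rw [ContinuousAt]
      simp only [Real.log_zero, inv_zero, neg_zero]
      have h1 := Real.tendsto_log_nhdsNE_zero
      have h2 : Filter.Tendsto (fun u : ℝ => -(Real.log u)⁻¹) (nhdsWithin 0 {0}ᶜ) (nhds 0) := by
        simpa using (tendsto_inv_atBot_zero.comp h1).neg
      rw [← continuousAt_update_same] at h2
      have h3 : Function.update (fun u : ℝ => -(Real.log u)⁻¹) 0 0 = fun u : ℝ => -(Real.log u)⁻¹ := by
        rw [Function.update_eq_self_iff]; simp
      rw [h3] at h2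
      simpa [ContinuousAt] using h2
    · apply ContinuousAt.continuousWithinAt
      have hl : Real.log u ≠ 0 := by
        have : Real.log u ≤ -2 := by
          rw [Real.log_le_iff_le_exp (lt_of_le_of_ne hu.1 (Ne.symm h0))]; exact hu.2
        linarith
      exact ((Real.continuousAt_log h0).inv₀ hl).neg
  · intro u hu
    have hl := ev_log_neg hu.1 hu.2
    have := ((Real.hasDerivAt_log hu.1.ne').inv (by linarith)).neg
    rw [neg_div, neg_neg] at this
    exact this
  · intro u hu
    have := hu.1
    positivity

theorem evK_memLp : MemLp (fun u => (evK u : ℂ)) 2 := by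
  refine MemLp.ofReal ?_
  exact (memLp_two_iff_integrable_sq evK_measurable.aestronglyMeasurable).2 evK_sq_integrable

theorem evK_diff_int (v : ℝ) (hv : 0 ≤ v) :
    ∫ u, |evK u - evK (u + v)| ≤ 2 * ∫ u in Set.Ioc 0 v, evK u := by
  have hi2 : Integrable (fun u => evK (u + v)) := evK_integrable.comp_add_right v
  have hi : Integrable (fun u => |evK u - evK (u + v)|) := (evK_integrable.sub hi2).abs
  -- pointwise: |..| = (evK u - evK (u+v)) + 2 * indicator (Ioc (-v) 0) evK (u+v)
  have hp : ∀ u, |evK u - evK (u + v)| =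
      (evK u - evK (u + v)) + 2 * (Set.Ioc 0 v).indicator evK (u + v) := by
    intro u
    by_cases h : 0 < u
    · rw [Set.indicator_of_notMem (by intro h'; linarith [h'.2])]
      rw [abs_of_nonneg (by linarith [evK_antitone h (by linarith : u ≤ u + v)])]; ring
    · rw [evK_of_nonpos (not_lt.1 h)]
      by_cases h2 : 0 < u + v
      · rw [Set.indicator_of_mem (show u + v ∈ Set.Ioc 0 v from ⟨h2, by linarith⟩), zero_sub, abs_neg, abs_of_nonneg (evK_nonneg _)]
        ring
      · rw [Set.indicator_of_notMem (by intro h'; exact h2 h'.1), evK_of_nonpos (not_lt.1 h2)]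
        simp
  simp_rw [hp]
  have hind : Integrable ((Set.Ioc 0 v).indicator evK) := evK_integrable.indicator measurableSet_Ioc
  rw [integral_add (f := fun u => evK u - evK (u + v)) (evK_integrable.sub hi2) ((hind.comp_add_right v).const_mul 2),
    integral_sub evK_integrable hi2, integral_add_right_eq_self evK v, integral_const_mul,
    integral_add_right_eq_self ((Set.Ioc 0 v).indicator evK) v, integral_indicator measurableSet_Ioc]
  linarith

theorem evK_fourier_le_one (ξ : ℝ) : ‖𝓕 (fun u => (evK u : ℂ)) ξ‖ ≤ 1 := by
  refine (VectorFourier.norm_fourierIntegral_le_integral_norm _ _ _ _ _).trans ?_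
  refine le_trans (le_of_eq ?_) evK_int_le_one
  congr 1
  ext u
  simp [abs_of_nonneg (evK_nonneg u)]

theorem evK_fourier_le (ξ : ℝ) (hξ : ξ ≠ 0) :
    ‖𝓕 (fun u => (evK u : ℂ)) ξ‖ ≤ ∫ u in Set.Ioc 0 (1 / (2 * |ξ|)), evK u := by
  have key : ∀ w : ℝ, ‖∫ v : ℝ, Real.fourierChar (-(inner ℝ v ξ)) • ((evK v : ℂ) - (evK (v + w) : ℂ))‖
      ≤ ∫ u, |evK u - evK (u + w)| := by
    intro w
    refine (norm_integral_le_integral_norm _).trans (le_of_eq ?_)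
    congr 1
    ext u
    rw [Circle.norm_smul, ← Complex.ofReal_sub, Complex.norm_real, Real.norm_eq_abs]
  have h := fourierIntegral_eq_half_sub_half_period_translate (w := ξ)
    (f := fun u => (evK u : ℂ)) hξ evK_integrable.ofReal
  have h' : 𝓕 (fun u => (evK u : ℂ)) ξ = ∫ v : ℝ, Real.fourierChar (-(inner ℝ v ξ)) • (evK v : ℂ) := rfl
  rw [h', h, norm_smul]
  have hw : (1 / (2 * ‖ξ‖ ^ 2)) • ξ = 1 / (2 * ξ) := by
    rw [Real.norm_eq_abs, sq_abs, smul_eq_mul]; field_simp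
  simp only [hw]
  have hfin : ∫ u, |evK u - evK (u + 1 / (2 * ξ))| ≤ 2 * ∫ u in Set.Ioc 0 (1 / (2 * |ξ|)), evK u := by
    rcases lt_or_gt_of_ne hξ with hn | hp
    · have h2 := evK_diff_int (1 / (2 * |ξ|)) (by positivity)
      refine le_trans (le_of_eq ?_) h2
      rw [← integral_add_right_eq_self (fun u => |evK u - evK (u + 1 / (2 * ξ))|) (1 / (2 * |ξ|))]
      congr 1
      ext u
      rw [abs_sub_comm, abs_of_neg hn]
      congr 3
      field_simp
      ring
    · rw [abs_of_pos hp]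
      exact evK_diff_int _ (by positivity)
  have := key (1 / (2 * ξ))
  have h12 : ‖(1 / (2 : ℂ))‖ = 1 / 2 := by simp
  rw [h12]
  linarith

/-- Indicator of `[0,h)`. -/
noncomputable def evI (h u : ℝ) : ℝ := (Set.Ico 0 h).indicator (fun _ => (1 : ℝ)) u

theorem evI_measurable (h : ℝ) : Measurable (evI h) :=
  measurable_const.indicator measurableSet_Ico

theorem evI_integrable (h : ℝ) : Integrable (evI h) := by
  unfold evI
  exact (integrable_indicator_iff measurableSet_Ico).2 (by simp)

theorem evI_memLp (h : ℝ) : MemLp (fun u => (evI h u : ℂ)) 2 := by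
  refine MemLp.ofReal ?_
  exact memLp_indicator_const 2 measurableSet_Ico 1 (Or.inr (by simp))

theorem evI_fourier_lower (h ξ : ℝ) (hh : 0 < h) (hx : h * |ξ| ≤ 1 / 2) :
    h / 2 ≤ ‖𝓕 (fun u => (evI h u : ℂ)) ξ‖ := by
  have e1 : 𝓕 (fun u => (evI h u : ℂ)) ξ = ∫ u in (0 : ℝ)..h, Complex.exp ((-(2 * Real.pi * ξ) * Complex.I) * u) := by
    rw [Real.fourier_real_eq, intervalIntegral.integral_of_le hh.le, ← integral_Ico_eq_integral_Ioc,
      ← integral_indicator measurableSet_Ico]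
    congr 1
    ext u
    unfold evI
    by_cases hu : u ∈ Set.Ico 0 h
    · simp only [Set.indicator_of_mem hu, Circle.smul_def, Real.fourierChar_apply]
      simp only [Complex.ofReal_one, smul_eq_mul, mul_one]
      congr 1
      push_cast
      ring
    · simp [Set.indicator_of_notMem hu]
  rw [e1]
  by_cases h0 : ξ = 0
  · subst h0
    simp [abs_of_pos hh]
    linarith
  · have hpi := Real.pi_pos
    rw [integral_exp_mul_complex (by simp [h0, Real.pi_ne_zero])]
    rw [norm_div]
    have e2 : Complex.exp ((-(2 * Real.pi * ξ) * Complex.I) * h) - Complex.exp ((-(2 * Real.pi * ξ) * Complex.I) * (0 : ℝ))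
        = Complex.exp (Complex.I * ((-(2 * Real.pi * ξ * h) : ℝ) : ℂ)) - 1 := by
      congr 1
      · congr 1; push_cast; ring
      · simp
    rw [e2, Complex.norm_exp_I_mul_ofReal_sub_one]
    have e3 : ‖(-(2 * (Real.pi : ℂ) * ξ) * Complex.I)‖ = 2 * Real.pi * |ξ| := by
      simp [abs_of_pos hpi]
    rw [e3, Real.norm_eq_abs, abs_mul]
    have e4 : |Real.sin (-(2 * Real.pi * ξ * h) / 2)| = Real.sin (Real.pi * |ξ| * h) := by
      have : -(2 * Real.pi * ξ * h) / 2 = -(Real.pi * ξ * h) := by ring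
      rw [this, Real.sin_neg, abs_neg]
      have hs : 0 ≤ Real.sin (Real.pi * |ξ| * h) := by
        apply Real.sin_nonneg_of_nonneg_of_le_pi (by positivity)
        nlinarith
      rcases abs_choice ξ with hc | hc
      · rw [hc] at hs ⊢; exact abs_of_nonneg hs
      · rw [hc] at hs ⊢
        rw [← abs_of_nonneg hs, mul_neg, neg_mul, Real.sin_neg, abs_neg]
    rw [e4, le_div_iff₀ (by positivity), abs_two]
    have hJ := Real.mul_le_sin (x := Real.pi * |ξ| * h) (by positivity) (by nlinarith)
    have e5 : 2 / Real.pi * (Real.pi * |ξ| * h) = 2 * (|ξ| * h) := by field_simp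
    rw [e5] at hJ
    have : 0 < |ξ| * h := by positivity
    nlinarith [Real.pi_lt_d2]

theorem ev_symbol (ξ : ℝ) : ∃ j : ℕ, ‖𝓕 (fun u => (evK u : ℂ)) ξ‖ ^ 2 ≤
    6000 * (((j : ℝ) + 10)⁻¹ ^ 2 * 2 ^ j) * ‖𝓕 (fun u => (evI ((2 : ℝ)⁻¹ ^ j) u : ℂ)) ξ‖ ^ 2 := by
  classical
  have hex : ∃ j : ℕ, 2 * |ξ| ≤ 2 ^ j := by
    obtain ⟨j, hj⟩ := pow_unbounded_of_one_lt (2 * |ξ|) (by norm_num : (1 : ℝ) < 2)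
    exact ⟨j, hj.le⟩
  set j := Nat.find hex with hj
  have hj1 : 2 * |ξ| ≤ 2 ^ j := Nat.find_spec hex
  have h2j : (0 : ℝ) < 2 ^ j := by positivity
  have hlow := evI_fourier_lower ((2 : ℝ)⁻¹ ^ j) ξ (by positivity) (by
    rw [inv_pow, inv_mul_le_iff₀ h2j]; linarith)
  refine ⟨j, ?_⟩
  have hl2 : ((2 : ℝ)⁻¹ ^ j / 2) ^ 2 ≤ ‖𝓕 (fun u => (evI ((2 : ℝ)⁻¹ ^ j) u : ℂ)) ξ‖ ^ 2 := by
    gcongr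
  refine le_trans ?_ (mul_le_mul_of_nonneg_left hl2 (by positivity))
  have e1 : 6000 * (((j : ℝ) + 10)⁻¹ ^ 2 * 2 ^ j) * ((2 : ℝ)⁻¹ ^ j / 2) ^ 2 =
      1500 / (((j : ℝ) + 10) ^ 2 * 2 ^ j) := by
    rw [inv_pow, inv_pow]; field_simp; norm_num
  rw [e1]
  by_cases hj3 : j ≤ 3
  · have h1 : ‖𝓕 (fun u => (evK u : ℂ)) ξ‖ ^ 2 ≤ 1 := by
      have := evK_fourier_le_one ξ
      have h0 := norm_nonneg (𝓕 (fun u => (evK u : ℂ)) ξ)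
      nlinarith
    refine h1.trans ?_
    rw [le_div_iff₀ (by positivity), one_mul]
    have : ((j : ℝ) + 10) ^ 2 * 2 ^ j ≤ (3 + 10) ^ 2 * 2 ^ 3 := by
      gcongr
      · exact_mod_cast hj3
      · norm_num
    linarith
  · push Not at hj3
    obtain ⟨i, hi⟩ : ∃ i, j = i + 1 := ⟨j - 1, by omega⟩
    have hi3 : 3 ≤ i := by omega
    have hmin : (2 : ℝ) ^ i < 2 * |ξ| := by
      have := Nat.find_min hex (m := i) (by omega)
      linarith
    have h2i : (0 : ℝ) < 2 ^ i := by positivity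
    have hξ : ξ ≠ 0 := by
      rintro rfl
      simp at hmin
      linarith
    have hexp : ((2 : ℝ) ^ i)⁻¹ < Real.exp (-2) := by
      have h8 : ((2 : ℝ) ^ i)⁻¹ ≤ (2 ^ 3)⁻¹ := by
        apply inv_anti₀ (by norm_num)
        exact pow_le_pow_right₀ (by norm_num) hi3
      refine lt_of_le_of_lt h8 ?_
      rw [Real.exp_neg]
      apply inv_strictAnti₀ (Real.exp_pos _)
      have : Real.exp 2 = Real.exp 1 ^ 2 := by rw [← Real.exp_nat_mul]; norm_num
      rw [this]
      have := Real.exp_one_lt_d9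
      nlinarith [Real.exp_pos 1]
    have hb1 := evK_fourier_le ξ hξ
    have hb2 : ∫ u in Set.Ioc 0 (1 / (2 * |ξ|)), evK u ≤ ∫ u in Set.Ioc 0 ((2 : ℝ) ^ i)⁻¹, evK u := by
      refine setIntegral_mono_set (evK_integrableOn _ (by positivity))
        (Filter.Eventually.of_forall fun u => evK_nonneg u) ?_
      apply LE.le.eventuallyLE
      apply Set.Ioc_subset_Ioc_right
      rw [one_div]
      exact inv_anti₀ h2i hmin.le
    have hb3 := evK_setInt_le ((2 : ℝ) ^ i)⁻¹ (by positivity) hexp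
    have hb := (hb1.trans hb2).trans hb3
    rw [Real.log_inv, Real.log_pow, neg_neg] at hb
    have hsq : ‖𝓕 (fun u => (evK u : ℂ)) ξ‖ ^ 2 ≤ (2 * √((2 : ℝ) ^ i)⁻¹ * (i * Real.log 2)⁻¹) ^ 2 := by
      gcongr
    refine hsq.trans ?_
    have e2 : (2 * √((2 : ℝ) ^ i)⁻¹ * (i * Real.log 2)⁻¹) ^ 2 = 4 / (2 ^ i * (i * Real.log 2) ^ 2) := by
      rw [mul_pow, mul_pow, Real.sq_sqrt (by positivity), inv_pow]
      field_simp
      norm_num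
    have hi3' : (3 : ℝ) ≤ i := by exact_mod_cast hi3
    have hlog := Real.log_two_gt_d9
    rw [e2, hi, div_le_div_iff₀ (by positivity) (by positivity)]
    push_cast
    rw [pow_succ (2 : ℝ) i]
    have hm : ((i : ℝ) + 1 + 10) ^ 2 * 8 ≤ 1500 * (i * Real.log 2) ^ 2 := by
      have h1 : (i : ℝ) * 0.69 ≤ i * Real.log 2 := by gcongr; linarith
      have h2 : ((i : ℝ) * 0.69) ^ 2 ≤ (i * Real.log 2) ^ 2 := by gcongr
      nlinarith
    nlinarith

/-- Integral of a difference kernel against a measure. -/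
noncomputable def evP (φ : ℝ → ℝ) (μ : Measure ℝ) (s : ℝ) : ℝ := ∫ t, φ (t - s) ∂μ

theorem evP_measurable {φ : ℝ → ℝ} (hφ : Measurable φ) (μ : Measure ℝ) [IsFiniteMeasure μ] :
    Measurable (evP φ μ) := by
  have : StronglyMeasurable (Function.uncurry fun s t : ℝ => φ (t - s)) := by
    apply Measurable.stronglyMeasurable
    exact hφ.comp (measurable_snd.sub measurable_fst)
  exact (this.integral_prod_right (ν := μ)).measurable

theorem evP_prod_integrable {φ : ℝ → ℝ} (hφ : Measurable φ) (hi : Integrable φ)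
    (μ : Measure ℝ) [IsFiniteMeasure μ] :
    Integrable (fun p : ℝ × ℝ => φ (p.2 - p.1)) (volume.prod μ) := by
  have hm : Measurable (fun p : ℝ × ℝ => φ (p.2 - p.1)) := hφ.comp (measurable_snd.sub measurable_fst)
  rw [integrable_prod_iff' hm.aestronglyMeasurable]
  constructor
  · exact Filter.Eventually.of_forall fun t => hi.comp_sub_left t
  · have : (fun t : ℝ => ∫ s : ℝ, ‖φ (t - s)‖) = fun _ => ∫ u : ℝ, ‖φ u‖ := by
      ext t
      exact integral_sub_left_eq_self (fun u => ‖φ u‖) volume t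
    simp only [this]
    exact integrable_const _

theorem evP_integrable {φ : ℝ → ℝ} (hφ : Measurable φ) (hi : Integrable φ)
    (μ : Measure ℝ) [IsFiniteMeasure μ] : Integrable (evP φ μ) :=
  (evP_prod_integrable hφ hi μ).integral_prod_left

theorem evP_sq {φ : ℝ → ℝ} (hφ : Measurable φ) (μ : Measure ℝ) [IsFiniteMeasure μ] :
    ∫⁻ s, ‖evP φ μ s‖ₑ ^ 2 ≤ μ Set.univ ^ 2 * ∫⁻ u, ‖φ u‖ₑ ^ 2 := by
  have hm : Measurable (fun p : ℝ × ℝ => ‖φ (p.2 - p.1)‖ₑ ^ 2) :=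
    (hφ.comp (measurable_snd.sub measurable_fst)).enorm.pow_const 2
  have h1 : ∀ s, ‖evP φ μ s‖ₑ ^ 2 ≤ μ Set.univ * ∫⁻ t, ‖φ (t - s)‖ₑ ^ 2 ∂μ := by
    intro s
    have hms : Measurable (fun t => ‖φ (t - s)‖ₑ) := (hφ.comp (measurable_id.sub_const s)).enorm
    have h2 : ‖evP φ μ s‖ₑ ≤ ∫⁻ t, ‖φ (t - s)‖ₑ ∂μ := enorm_integral_le_lintegral_enorm _
    have h3 := ENNReal.lintegral_mul_le_Lp_mul_Lq μ Real.HolderConjugate.two_two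
      hms.aemeasurable (aemeasurable_const (b := (1 : ℝ≥0∞)))
    simp only [Pi.mul_apply, mul_one, ENNReal.one_rpow, lintegral_const, one_mul] at h3
    have h4 := h2.trans h3
    calc ‖evP φ μ s‖ₑ ^ 2 ≤ ((∫⁻ t, ‖φ (t - s)‖ₑ ^ (2 : ℝ) ∂μ) ^ (1 / (2 : ℝ)) * μ Set.univ ^ (1 / (2 : ℝ))) ^ 2 := by
          gcongr
      _ = _ := by
          rw [mul_pow, ← ENNReal.rpow_natCast, ← ENNReal.rpow_natCast, ← ENNReal.rpow_mul, ← ENNReal.rpow_mul]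
          norm_num
          rw [mul_comm]
  calc ∫⁻ s, ‖evP φ μ s‖ₑ ^ 2 ≤ ∫⁻ s, μ Set.univ * ∫⁻ t, ‖φ (t - s)‖ₑ ^ 2 ∂μ := lintegral_mono h1
    _ = μ Set.univ * ∫⁻ s, ∫⁻ t, ‖φ (t - s)‖ₑ ^ 2 ∂μ := by
        rw [lintegral_const_mul _ (Measurable.lintegral_prod_right hm)]
    _ = μ Set.univ * ∫⁻ t, (∫⁻ s, ‖φ (t - s)‖ₑ ^ 2) ∂μ := by
        rw [lintegral_lintegral_swap (f := fun s t => ‖φ (t - s)‖ₑ ^ 2) hm.aemeasurable]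
    _ = μ Set.univ * ∫⁻ t, (∫⁻ u, ‖φ u‖ₑ ^ 2) ∂μ := by
        congr 2
        ext t
        exact lintegral_sub_left_eq_self (fun u => ‖φ u‖ₑ ^ 2) t
    _ = _ := by rw [lintegral_const]; ring

theorem ev_sq_fin {φ : ℝ → ℝ} (hL : MemLp (fun u => (φ u : ℂ)) 2) : ∫⁻ u, ‖φ u‖ₑ ^ 2 < ⊤ := by
  have := lintegral_rpow_enorm_lt_top_of_eLpNorm_lt_top (by norm_num) (by norm_num) hL.2
  refine lt_of_le_of_lt (le_of_eq ?_) this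
  refine lintegral_congr fun u => ?_
  rw [← ofReal_norm, ← ofReal_norm, Complex.norm_real]
  simp

theorem evP_memLp {φ : ℝ → ℝ} (hφ : Measurable φ) (hL : MemLp (fun u => (φ u : ℂ)) 2)
    (μ : Measure ℝ) [IsFiniteMeasure μ] : MemLp (evP φ μ) 2 := by
  refine ⟨(evP_measurable hφ μ).aestronglyMeasurable, ?_⟩
  rw [eLpNorm_lt_top_iff_lintegral_rpow_enorm_lt_top (by norm_num) (by norm_num)]
  have := (evP_sq hφ μ).trans_lt (ENNReal.mul_lt_top (ENNReal.pow_lt_top (measure_lt_top μ _)) (ev_sq_fin hL))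
  simpa using this

theorem evP_fourier {φ : ℝ → ℝ} (hφ : Measurable φ) (hi : Integrable φ)
    (μ : Measure ℝ) [IsFiniteMeasure μ] (ξ : ℝ) :
    𝓕 (fun s => (evP φ μ s : ℂ)) ξ =
      𝓕 (fun u => (φ u : ℂ)) (-ξ) * ∫ t, (Real.fourierChar (-(t * ξ)) : ℂ) ∂μ := by
  rw [Real.fourier_real_eq, Real.fourier_real_eq]
  have h1 : ∀ s, (Real.fourierChar (-(s * ξ))) • (evP φ μ s : ℂ) =
      ∫ t, (Real.fourierChar (-(s * ξ)) : ℂ) * (φ (t - s) : ℂ) ∂μ := by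
    intro s
    rw [integral_const_mul, Circle.smul_def, smul_eq_mul]
    unfold evP
    rw [integral_complex_ofReal]
  simp_rw [h1]
  rw [integral_integral_swap]
  · have h2 : ∀ t, ∫ s, (Real.fourierChar (-(s * ξ)) : ℂ) * (φ (t - s) : ℂ) =
        (∫ v, Real.fourierChar (-(v * -ξ)) • (φ v : ℂ)) * (Real.fourierChar (-(t * ξ)) : ℂ) := by
      intro t
      rw [← integral_sub_left_eq_self (fun s => (Real.fourierChar (-(s * ξ)) : ℂ) * (φ (t - s) : ℂ)) volume t,
        ← integral_mul_const]
      congr 1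
      ext u
      have e : -((t - u) * ξ) = -(u * -ξ) + -(t * ξ) := by ring
      rw [e, AddChar.map_add_eq_mul, Circle.coe_mul, Circle.smul_def, smul_eq_mul, sub_sub_cancel]
      ring
    simp_rw [h2]
    rw [integral_const_mul]
  · have h3 := (evP_prod_integrable hφ hi μ).ofReal (𝕜 := ℂ)
    refine Integrable.mono h3 ?_ ?_
    · apply Measurable.aestronglyMeasurable
      unfold Function.uncurry
      refine Measurable.mul ?_ ?_
      · have : Continuous fun p : ℝ × ℝ => (Real.fourierChar (-(p.1 * ξ)) : ℂ) := by
          have := Real.continuous_fourierChar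
          fun_prop
        exact this.measurable
      · exact Complex.measurable_ofReal.comp (hφ.comp (measurable_snd.sub measurable_fst))
    · refine Filter.Eventually.of_forall fun p => ?_
      simp only [Function.uncurry]
      rw [norm_mul, Circle.norm_coe, one_mul]
      exact le_rfl

/-- Difference of the two potentials. -/
noncomputable def evS (φ : ℝ → ℝ) (μ ν : Measure ℝ) (s : ℝ) : ℝ := evP φ μ s - evP φ ν s

theorem evS_planch {φ : ℝ → ℝ} (hφ : Measurable φ) (hi : Integrable φ)
    (hL : MemLp (fun u => (φ u : ℂ)) 2) (μ ν : Measure ℝ) [IsFiniteMeasure μ] [IsFiniteMeasure ν] :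
    ∫⁻ s, ‖evS φ μ ν s‖ₑ ^ 2 = ∫⁻ ξ, ‖𝓕 (fun u => (φ u : ℂ)) (-ξ)‖ₑ ^ 2 *
      ‖(∫ t, (Real.fourierChar (-(t * ξ)) : ℂ) ∂μ) - ∫ t, (Real.fourierChar (-(t * ξ)) : ℂ) ∂ν‖ₑ ^ 2 := by
  have h1 : Integrable (fun s => (evS φ μ ν s : ℂ)) :=
    ((evP_integrable hφ hi μ).sub (evP_integrable hφ hi ν)).ofReal
  have h2 : MemLp (fun s => (evS φ μ ν s : ℂ)) 2 :=
    ((evP_memLp hφ hL μ).sub (evP_memLp hφ hL ν)).ofReal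
  have h3 := ev_planch _ h1 h2
  have h4 : ∫⁻ s, ‖evS φ μ ν s‖ₑ ^ 2 = ∫⁻ s, ‖(evS φ μ ν s : ℂ)‖ₑ ^ 2 := by
    congr 1; ext s
    rw [← ofReal_norm, ← ofReal_norm, Complex.norm_real]
  rw [h4, ← h3]
  congr 1
  ext ξ
  rw [← mul_pow, ← enorm_mul, mul_sub, ← evP_fourier hφ hi, ← evP_fourier hφ hi]
  congr 2
  have hconv : ∀ (μ : Measure ℝ) [IsFiniteMeasure μ],
      Integrable (fun v : ℝ => Real.fourierChar (-(v * ξ)) • (evP φ μ v : ℂ)) := by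
    intro μ _
    have hh : Integrable (fun s => (evP φ μ s : ℂ)) := (evP_integrable hφ hi μ).ofReal
    refine hh.mono ?_ (Filter.Eventually.of_forall fun p => ?_)
    · apply Measurable.aestronglyMeasurable
      have h7 : Continuous fun p : ℝ => (Real.fourierChar (-(p * ξ)) : ℂ) := by
        have := Real.continuous_fourierChar
        fun_prop
      exact h7.measurable.mul (Complex.measurable_ofReal.comp (evP_measurable hφ μ))
    · rw [Circle.norm_smul]
  have e : (fun s => (evS φ μ ν s : ℂ)) = fun s => (evP φ μ s : ℂ) - (evP φ ν s : ℂ) := by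
    ext s; simp [evS]
  rw [e, Real.fourier_real_eq, Real.fourier_real_eq, Real.fourier_real_eq, ← integral_sub]
  · simp_rw [smul_sub]
  · exact hconv μ
  · exact hconv ν

theorem ev_main_fourier (μ ν : Measure ℝ) [IsFiniteMeasure μ] [IsFiniteMeasure ν] :
    ∫⁻ s, ‖evS evK μ ν s‖ₑ ^ 2 ≤ ∑' j : ℕ, ENNReal.ofReal (6000 * (((j : ℝ) + 10)⁻¹ ^ 2 * 2 ^ j)) *
      ∫⁻ s, ‖evS (evI ((2 : ℝ)⁻¹ ^ j)) μ ν s‖ₑ ^ 2 := by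
  have hch : ∀ (μ : Measure ℝ) [IsFiniteMeasure μ], Measurable fun ξ : ℝ => ∫ t, (Real.fourierChar (-(t * ξ)) : ℂ) ∂μ := by
    intro μ _
    have : StronglyMeasurable (Function.uncurry fun ξ t : ℝ => (Real.fourierChar (-(t * ξ)) : ℂ)) := by
      apply Continuous.stronglyMeasurable
      have := Real.continuous_fourierChar
      unfold Function.uncurry
      fun_prop
    exact (this.integral_prod_right (ν := μ)).measurable
  have hF : ∀ φ : ℝ → ℝ, Integrable φ → Measurable fun ξ : ℝ => 𝓕 (fun u => (φ u : ℂ)) (-ξ) := by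
    intro φ hφ
    have hc : Continuous (𝓕 (fun u => (φ u : ℂ))) :=
      VectorFourier.fourierIntegral_continuous Real.continuous_fourierChar (by fun_prop) hφ.ofReal
    exact (hc.comp continuous_neg).measurable
  rw [evS_planch evK_measurable evK_integrable evK_memLp]
  simp_rw [evS_planch (evI_measurable _) (evI_integrable _) (evI_memLp _)]
  have hmeas : ∀ j : ℕ, Measurable fun ξ : ℝ => ‖𝓕 (fun u => (evI ((2 : ℝ)⁻¹ ^ j) u : ℂ)) (-ξ)‖ₑ ^ 2 *
      ‖(∫ t, (Real.fourierChar (-(t * ξ)) : ℂ) ∂μ) - ∫ t, (Real.fourierChar (-(t * ξ)) : ℂ) ∂ν‖ₑ ^ 2 :=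
    fun j => ((hF _ (evI_integrable _)).enorm.pow_const 2).mul (((hch μ).sub (hch ν)).enorm.pow_const 2)
  refine le_trans ?_ (le_of_eq (tsum_congr fun j => lintegral_const_mul _ (hmeas j)))
  rw [← lintegral_tsum (fun j => ((hmeas j).const_mul _).aemeasurable)]
  apply lintegral_mono
  intro ξ
  obtain ⟨j, hj⟩ := ev_symbol (-ξ)
  refine le_trans ?_ (ENNReal.le_tsum j)
  rw [← mul_assoc]
  apply mul_le_mul_left
  have := ENNReal.ofReal_le_ofReal hj
  rw [ENNReal.ofReal_mul (by positivity), ENNReal.ofReal_pow (norm_nonneg _), ENNReal.ofReal_pow (norm_nonneg _),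
    ofReal_norm, ofReal_norm] at this
  exact this

theorem ev_en (x : ℝ) : ‖x‖ₑ ^ 2 = ENNReal.ofReal (x ^ 2) := by
  rw [← ofReal_norm, ← ENNReal.ofReal_pow (norm_nonneg _), Real.norm_eq_abs, sq_abs]

/-- Signed mass of `[a,b)`. -/
noncomputable def evm (μ ν : Measure ℝ) (a b : ℝ) : ℝ := μ.real (Set.Ico a b) - ν.real (Set.Ico a b)

theorem ev_Ico_add (μ : Measure ℝ) [IsFiniteMeasure μ] {a b c : ℝ} (hab : a ≤ b) (hbc : b ≤ c) :
    μ.real (Set.Ico a c) = μ.real (Set.Ico a b) + μ.real (Set.Ico b c) := by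
  rw [← measureReal_union (Set.Ico_disjoint_Ico_same) measurableSet_Ico, Set.Ico_union_Ico_eq_Ico hab hbc]

theorem evm_add (μ ν : Measure ℝ) [IsFiniteMeasure μ] [IsFiniteMeasure ν] {a b c : ℝ}
    (hab : a ≤ b) (hbc : b ≤ c) : evm μ ν a c = evm μ ν a b + evm μ ν b c := by
  unfold evm
  rw [ev_Ico_add μ hab hbc, ev_Ico_add ν hab hbc]; ring

theorem ev_Ico_meas (μ : Measure ℝ) [IsFiniteMeasure μ] {a b : ℝ → ℝ} (ha : Measurable a)
    (hb : Measurable b) : Measurable fun s => μ (Set.Ico (a s) (b s)) := by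
  have hs : MeasurableSet {p : ℝ × ℝ | a p.1 ≤ p.2 ∧ p.2 < b p.1} :=
    (measurableSet_le (ha.comp measurable_fst) measurable_snd).inter
      (measurableSet_lt measurable_snd (hb.comp measurable_fst))
  exact measurable_measure_prodMk_left hs

theorem evm_meas (μ ν : Measure ℝ) [IsFiniteMeasure μ] [IsFiniteMeasure ν] {a b : ℝ → ℝ}
    (ha : Measurable a) (hb : Measurable b) :
    Measurable fun s => ENNReal.ofReal (evm μ ν (a s) (b s) ^ 2) := by
  refine ENNReal.measurable_ofReal.comp (Measurable.pow_const ?_ 2)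
  exact (ev_Ico_meas μ ha hb).ennreal_toReal.sub (ev_Ico_meas ν ha hb).ennreal_toReal

theorem evS_evI (μ ν : Measure ℝ) (h s : ℝ) : evS (evI h) μ ν s = evm μ ν s (s + h) := by
  have : ∀ μ : Measure ℝ, evP (evI h) μ s = μ.real (Set.Ico s (s + h)) := by
    intro μ
    unfold evP evI
    have e : (fun t : ℝ => (Set.Ico 0 h).indicator (fun _ => (1 : ℝ)) (t - s)) =
        (Set.Ico s (s + h)).indicator (fun _ => (1 : ℝ)) := by
      ext t
      simp only [Set.indicator_apply, Set.mem_Ico]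
      congr 1
      apply propext
      constructor <;> rintro ⟨h1, h2⟩ <;> constructor <;> linarith
    rw [e, integral_indicator measurableSet_Ico]
    simp
  unfold evS evm
  rw [this, this]

/-- Dyadic step. -/
noncomputable def evh (j : ℕ) : ℝ := (2 : ℝ)⁻¹ ^ j

/-- Left end of the dyadic cell. -/
noncomputable def eva (j : ℕ) (s : ℝ) : ℝ := ⌊s * 2 ^ j⌋ * evh j

theorem evh_pos (j : ℕ) : 0 < evh j := by unfold evh; positivity

theorem evh_mul (j : ℕ) : evh j * 2 ^ j = 1 := by
  unfold evh; rw [← mul_pow]; norm_num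

theorem evh_succ (j : ℕ) : evh j = 2 * evh (j + 1) := by
  unfold evh; rw [pow_succ]; ring

theorem eva_meas (j : ℕ) : Measurable (eva j) := by
  unfold eva
  exact (measurable_from_top.comp (Int.measurable_floor.comp (measurable_id.mul_const _))).mul_const _

theorem eva_le (j : ℕ) (s : ℝ) : eva j s ≤ s := by
  unfold eva
  have h1 := Int.floor_le (s * 2 ^ j)
  have h2 := evh_pos j
  have h3 := evh_mul j
  calc (⌊s * 2 ^ j⌋ : ℝ) * evh j ≤ s * 2 ^ j * evh j := by gcongr
    _ = s := by linear_combination s * h3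

theorem lt_eva (j : ℕ) (s : ℝ) : s < eva j s + evh j := by
  unfold eva
  have h1 := Int.lt_floor_add_one (s * 2 ^ j)
  have h2 := evh_pos j
  have h3 := evh_mul j
  calc s = s * 2 ^ j * evh j := by linear_combination -s * h3
    _ < (⌊s * 2 ^ j⌋ + 1) * evh j := by gcongr
    _ = _ := by ring

theorem eva_eq (j : ℕ) (s : ℝ) (k : ℤ) (h1 : k * evh j ≤ s) (h2 : s < (k + 1) * evh j) :
    eva j s = k * evh j := by
  have h3 := evh_mul j
  unfold eva
  have hp : (0 : ℝ) < 2 ^ j := by positivity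
  have : ⌊s * 2 ^ j⌋ = k := by
    rw [Int.floor_eq_iff]
    constructor
    · calc (k : ℝ) = k * evh j * 2 ^ j := by linear_combination -k * h3
        _ ≤ _ := by gcongr
    · calc s * 2 ^ j < (k + 1) * evh j * 2 ^ j := by gcongr
        _ = _ := by linear_combination (k + 1 : ℝ) * h3
  rw [this]

theorem eva_shift (j : ℕ) (s : ℝ) : eva j (s + evh j) = eva j s + evh j := by
  have := eva_eq j (s + evh j) (⌊s * 2 ^ j⌋ + 1)
    (by have := eva_le j s; unfold eva at this; push_cast; linarith)
    (by have := lt_eva j s; unfold eva at this; push_cast; linarith)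
  rw [this]; unfold eva; push_cast; ring

/-- the next cell is the left or the right half. -/
theorem eva_succ (j : ℕ) (s : ℝ) : eva (j + 1) s = eva j s ∨
    (eva (j + 1) s = eva j s + evh (j + 1) ∧ eva (j + 1) (s - evh (j + 1)) = eva j s) := by
  have h1 := eva_le j s
  have h2 := lt_eva j s
  have h3 := evh_succ j
  have e : eva j s = ((2 * ⌊s * 2 ^ j⌋ : ℤ) : ℝ) * evh (j + 1) := by
    push_cast; unfold eva; rw [h3]; ring
  rcases lt_or_ge s (eva j s + evh (j + 1)) with h | h
  · left
    rw [eva_eq (j + 1) s (2 * ⌊s * 2 ^ j⌋) (by rw [← e]; exact h1) (by rw [add_mul, ← e]; linarith), ← e]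
  · right
    constructor
    · rw [eva_eq (j + 1) s (2 * ⌊s * 2 ^ j⌋ + 1) (by push_cast at e ⊢; rw [add_mul, ← e]; linarith)
        (by push_cast at e ⊢; rw [add_mul, add_mul, ← e]; linarith)]
      push_cast at e ⊢; rw [add_mul, ← e]; ring
    · rw [eva_eq (j + 1) _ (2 * ⌊s * 2 ^ j⌋) (by rw [← e]; linarith) (by rw [add_mul, ← e]; linarith), ← e]

noncomputable def evQ (μ ν : Measure ℝ) (j : ℕ) : ℝ≥0∞ := ∫⁻ s, ENNReal.ofReal (evm μ ν (eva j s) s ^ 2)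
noncomputable def evR (μ ν : Measure ℝ) (j : ℕ) : ℝ≥0∞ :=
  ∫⁻ s, ENNReal.ofReal (evm μ ν (eva j s) (eva j s + evh j) ^ 2)
noncomputable def evF (μ ν : Measure ℝ) (j : ℕ) : ℝ≥0∞ := ∫⁻ s, ENNReal.ofReal (evm μ ν s (s + evh j) ^ 2)

section
variable (μ ν : Measure ℝ) [IsFiniteMeasure μ] [IsFiniteMeasure ν]

theorem evF_le (j : ℕ) : evF μ ν j ≤ 3 * (evR μ ν j + 2 * evQ μ ν j) := by
  have hsh : evQ μ ν j = ∫⁻ s, ENNReal.ofReal (evm μ ν (eva j s + evh j) (s + evh j) ^ 2) := by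
    unfold evQ
    rw [← lintegral_add_right_eq_self _ (evh j)]
    simp_rw [eva_shift]
  have hm1 := evm_meas μ ν (eva_meas j) measurable_id
  have hm2 := evm_meas μ ν (eva_meas j) ((eva_meas j).add_const (evh j))
  have hm3 := evm_meas μ ν ((eva_meas j).add_const (evh j)) (measurable_id.add_const (evh j))
  rw [two_mul]
  nth_rewrite 2 [hsh]
  unfold evF evR evQ
  simp only [id] at hm1 hm3
  rw [← lintegral_add_left hm1, ← lintegral_add_left hm2, ← lintegral_const_mul]
  · apply lintegral_mono
    intro s
    have h1 := eva_le j s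
    have h2 := lt_eva j s
    have h0 := evh_pos j
    have e1 := evm_add μ ν h1 h2.le
    have e2 := evm_add μ ν h2.le (by linarith : eva j s + evh j ≤ s + evh j)
    have e3 : (3 : ℝ≥0∞) = ENNReal.ofReal 3 := by simp
    simp only
    rw [e3, ← ENNReal.ofReal_add (sq_nonneg _) (sq_nonneg _), ← ENNReal.ofReal_add (sq_nonneg _) (by positivity),
      ← ENNReal.ofReal_mul (by norm_num)]
    apply ENNReal.ofReal_le_ofReal
    rw [e2]
    have e4 : evm μ ν s (eva j s + evh j) = evm μ ν (eva j s) (eva j s + evh j) - evm μ ν (eva j s) s := by linarith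
    rw [e4]
    generalize evm μ ν (eva j s) (eva j s + evh j) = x
    generalize evm μ ν (eva j s) s = y
    generalize evm μ ν (eva j s + evh j) (s + evh j) = z
    nlinarith [sq_nonneg (x + y), sq_nonneg (x - z), sq_nonneg (y + z)]
  · exact hm2.add (hm1.add hm3)

theorem evQ_le (j : ℕ) : evQ μ ν j ≤ ENNReal.ofReal (3 / 2) * evQ μ ν (j + 1) + 3 * evR μ ν (j + 1) := by
  have hsh : evR μ ν (j + 1) = ∫⁻ s, ENNReal.ofReal
      (evm μ ν (eva (j + 1) (s - evh (j + 1))) (eva (j + 1) (s - evh (j + 1)) + evh (j + 1)) ^ 2) := by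
    unfold evR
    exact (lintegral_sub_right_eq_self (fun s => ENNReal.ofReal
      (evm μ ν (eva (j + 1) s) (eva (j + 1) s + evh (j + 1)) ^ 2)) (evh (j + 1))).symm
  have hm1 := evm_meas μ ν (eva_meas (j + 1)) measurable_id
  have hmm : Measurable fun s => eva (j + 1) (s - evh (j + 1)) :=
    (eva_meas (j + 1)).comp (measurable_id.sub_const _)
  have hm2 := evm_meas μ ν hmm (hmm.add_const (evh (j + 1)))
  simp only [id] at hm1
  rw [hsh]
  unfold evQ
  rw [← lintegral_const_mul _ hm1, ← lintegral_const_mul _ hm2, ← lintegral_add_left (hm1.const_mul _)]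
  apply lintegral_mono
  intro s
  have h1 := eva_le (j + 1) s
  have h0 := evh_pos (j + 1)
  have e3 : (3 : ℝ≥0∞) = ENNReal.ofReal 3 := by simp
  simp only
  rw [e3, ← ENNReal.ofReal_mul (by norm_num), ← ENNReal.ofReal_mul (by norm_num),
    ← ENNReal.ofReal_add (by positivity) (by positivity)]
  apply ENNReal.ofReal_le_ofReal
  rcases eva_succ j s with h | ⟨h, h'⟩
  · rw [h]
    nlinarith [sq_nonneg (evm μ ν (eva j s) s), sq_nonneg (evm μ ν (eva (j + 1) (s - evh (j + 1))) (eva (j + 1) (s - evh (j + 1)) + evh (j + 1)))]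
  · rw [h', ← h]
    rw [evm_add μ ν (by linarith : eva j s ≤ eva (j + 1) s) h1]
    nlinarith [sq_nonneg (2 * evm μ ν (eva j s) (eva (j + 1) s) - evm μ ν (eva (j + 1) s) s)]

theorem ev_window (h : ℝ) : ∫⁻ s, μ (Set.Ico (s - h) (s + h)) = ENNReal.ofReal (2 * h) * μ Set.univ := by
  have e : ∀ s, μ (Set.Ico (s - h) (s + h)) = ∫⁻ t, (Set.Ioc (t - h) (t + h)).indicator 1 s ∂μ := by
    intro s
    rw [← lintegral_indicator_one measurableSet_Ico]
    congr 1
    ext t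
    simp only [Set.indicator_apply, Set.mem_Ico, Set.mem_Ioc]
    congr 1
    apply propext
    constructor <;> rintro ⟨h1, h2⟩ <;> constructor <;> linarith
  simp_rw [e]
  rw [lintegral_lintegral_swap]
  · simp_rw [lintegral_indicator_one measurableSet_Ioc, Real.volume_Ioc]
    have : ∀ t : ℝ, t + h - (t - h) = 2 * h := fun t => by ring
    simp [this]
  · apply Measurable.aemeasurable
    have hs : MeasurableSet {p : ℝ × ℝ | p.2 - h < p.1 ∧ p.1 ≤ p.2 + h} :=
      (measurableSet_lt (measurable_snd.sub_const h) measurable_fst).inter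
        (measurableSet_le measurable_fst (measurable_snd.add_const h))
    have h1 : Measurable fun p : ℝ × ℝ => Set.indicator {p : ℝ × ℝ | p.2 - h < p.1 ∧ p.1 ≤ p.2 + h} (1 : ℝ × ℝ → ℝ≥0∞) p :=
      measurable_one.indicator hs
    exact h1

theorem ev_crude (hμ : μ Set.univ ≤ 1) (hν : ν Set.univ ≤ 1) (j : ℕ) (a b : ℝ → ℝ)
    (hab : ∀ s, s - evh j ≤ a s ∧ b s ≤ s + evh j) :
    ∫⁻ s, ENNReal.ofReal (evm μ ν (a s) (b s) ^ 2) ≤ ENNReal.ofReal (4 * evh j) := by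
  have h0 := evh_pos j
  calc _ ≤ ∫⁻ s, (μ (Set.Ico (s - evh j) (s + evh j)) + ν (Set.Ico (s - evh j) (s + evh j))) := by
        apply lintegral_mono
        intro s
        simp only
        have hs : Set.Ico (a s) (b s) ⊆ Set.Ico (s - evh j) (s + evh j) :=
          Set.Ico_subset_Ico (hab s).1 (hab s).2
        refine le_trans ?_ (add_le_add (measure_mono hs) (measure_mono hs))
        have g1 : μ.real (Set.Ico (a s) (b s)) ≤ 1 := by
          apply ENNReal.toReal_le_of_le_ofReal (by norm_num)
          simpa using (measure_mono (Set.subset_univ _)).trans hμ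
        have g2 : ν.real (Set.Ico (a s) (b s)) ≤ 1 := by
          apply ENNReal.toReal_le_of_le_ofReal (by norm_num)
          simpa using (measure_mono (Set.subset_univ _)).trans hν
        rw [← ofReal_measureReal (μ := μ), ← ofReal_measureReal (μ := ν), ← ENNReal.ofReal_add measureReal_nonneg measureReal_nonneg]
        apply ENNReal.ofReal_le_ofReal
        unfold evm
        have g3 : 0 ≤ μ.real (Set.Ico (a s) (b s)) := measureReal_nonneg
        have g4 : 0 ≤ ν.real (Set.Ico (a s) (b s)) := measureReal_nonneg
        nlinarith
    _ = ENNReal.ofReal (2 * evh j) * μ Set.univ + ENNReal.ofReal (2 * evh j) * ν Set.univ := by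
        have hme : Measurable fun s => μ (Set.Ico (s - evh j) (s + evh j)) :=
          ev_Ico_meas μ (measurable_id.sub_const _) (measurable_id.add_const _)
        rw [lintegral_add_left hme, ev_window, ev_window]
    _ ≤ ENNReal.ofReal (2 * evh j) * 1 + ENNReal.ofReal (2 * evh j) * 1 := by gcongr
    _ = _ := by
        rw [mul_one, ← ENNReal.ofReal_add (by positivity) (by positivity)]
        congr 1; ring

theorem evQ_crude (hμ : μ Set.univ ≤ 1) (hν : ν Set.univ ≤ 1) (j : ℕ) :
    evQ μ ν j ≤ ENNReal.ofReal (4 * evh j) :=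
  ev_crude μ ν hμ hν j _ _ fun s => ⟨by have := lt_eva j s; linarith, by have := evh_pos j; linarith⟩

theorem evF_crude (hμ : μ Set.univ ≤ 1) (hν : ν Set.univ ≤ 1) (j : ℕ) :
    evF μ ν j ≤ ENNReal.ofReal (4 * evh j) :=
  ev_crude μ ν hμ hν j _ _ fun s => ⟨by have := evh_pos j; linarith, le_rfl⟩

theorem evR_crude (hμ : μ Set.univ ≤ 1) (hν : ν Set.univ ≤ 1) (j : ℕ) :
    evR μ ν j ≤ ENNReal.ofReal (4 * evh j) :=
  ev_crude μ ν hμ hν j _ _ fun s => ⟨by have := lt_eva j s; linarith, by have := eva_le j s; linarith⟩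
end

/-- Weighted summation of the recursion. -/
theorem ev_seq (q p : ℕ → ℝ) (hq : ∀ j, 0 ≤ q j) (hp : ∀ j, 0 ≤ p j)
    (hr : ∀ j, q j ≤ 3 / 4 * q (j + 1) + 3 / 2 * p (j + 1)) (D : ℕ) :
    ∑ j ∈ Finset.range D, ((j : ℝ) + 10)⁻¹ ^ 2 * q j ≤
      10 * (((D : ℝ) + 10)⁻¹ ^ 2 * q D) + 20 * ∑ j ∈ Finset.range (D + 1), ((j : ℝ) + 10)⁻¹ ^ 2 * p j := by
  have hw : ∀ j : ℕ, ((j : ℝ) + 10)⁻¹ ^ 2 ≤ 1.21 * (((j + 1 : ℕ) : ℝ) + 10)⁻¹ ^ 2 := by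
    intro j
    push_cast
    rw [inv_pow, inv_pow, ← div_eq_mul_inv, inv_le_comm₀ (by positivity) (by positivity), inv_div,
      div_le_iff₀ (by norm_num)]
    nlinarith [(Nat.cast_nonneg j : (0 : ℝ) ≤ j)]
  have h1 : ∀ j : ℕ, ((j : ℝ) + 10)⁻¹ ^ 2 * q j ≤ 0.9075 * ((((j + 1 : ℕ) : ℝ) + 10)⁻¹ ^ 2 * q (j + 1))
      + 1.815 * ((((j + 1 : ℕ) : ℝ) + 10)⁻¹ ^ 2 * p (j + 1)) := by
    intro j
    calc ((j : ℝ) + 10)⁻¹ ^ 2 * q j ≤ ((j : ℝ) + 10)⁻¹ ^ 2 * (3 / 4 * q (j + 1) + 3 / 2 * p (j + 1)) := by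
          have := hr j; gcongr
      _ ≤ (1.21 * (((j + 1 : ℕ) : ℝ) + 10)⁻¹ ^ 2) * (3 / 4 * q (j + 1) + 3 / 2 * p (j + 1)) := by
          have := hw j; have := hq (j + 1); have := hp (j + 1); gcongr
      _ = _ := by ring
  have h2 := Finset.sum_le_sum (s := Finset.range D) fun j _ => h1 j
  rw [Finset.sum_add_distrib, ← Finset.mul_sum, ← Finset.mul_sum] at h2
  have h3 := Finset.sum_range_succ' (fun j : ℕ => ((j : ℝ) + 10)⁻¹ ^ 2 * q j) D
  have h4 := Finset.sum_range_succ (fun j : ℕ => ((j : ℝ) + 10)⁻¹ ^ 2 * q j) D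
  have h5 := Finset.sum_range_succ' (fun j : ℕ => ((j : ℝ) + 10)⁻¹ ^ 2 * p j) D
  have h6 : 0 ≤ (((0 : ℕ) : ℝ) + 10)⁻¹ ^ 2 * q 0 := by have := hq 0; positivity
  have h7 : 0 ≤ (((0 : ℕ) : ℝ) + 10)⁻¹ ^ 2 * p 0 := by have := hp 0; positivity
  have h8 : 0 ≤ ((D : ℝ) + 10)⁻¹ ^ 2 * q D := by have := hq D; positivity
  have h9 : 0 ≤ ∑ j ∈ Finset.range D, (((j + 1 : ℕ) : ℝ) + 10)⁻¹ ^ 2 * p (j + 1) :=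
    Finset.sum_nonneg fun j _ => by have := hp (j + 1); positivity
  linarith

/-- Masses of dyadic cells. -/
noncomputable def evc (μ : Measure ℝ) (j : ℕ) (k : ℤ) : ℝ := μ.real (Set.Ico (k * evh j) ((k + 1) * evh j))

theorem evc_nonneg (μ : Measure ℝ) (j : ℕ) (k : ℤ) : 0 ≤ evc μ j k := measureReal_nonneg

theorem evc_split (μ : Measure ℝ) [IsFiniteMeasure μ] (j : ℕ) (k : ℤ) :
    evc μ j k = evc μ (j + 1) (2 * k) + evc μ (j + 1) (2 * k + 1) := by
  unfold evc
  have h0 := evh_pos (j + 1)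
  rw [ev_Ico_add μ (a := k * evh j) (b := (2 * k + 1) * evh (j + 1)) (c := (k + 1) * evh j)]
  · congr 3
    · push_cast; rw [evh_succ j]; ring
    · push_cast; ring
    · push_cast; ring
    · push_cast; rw [evh_succ j]; ring
  · rw [evh_succ j]; nlinarith
  · rw [evh_succ j]; nlinarith

/-- Weighted dyadic energy of the difference of two mass functions, `d` generations. -/
noncomputable def evErr (x y : ℕ → ℤ → ℝ) : ℕ → ℕ → ℤ → ℝ
  | 0, _, _ => 0
  | d + 1, j, k => ((j : ℝ) + 10)⁻¹ ^ 2 * (x j k - y j k) ^ 2 +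
      (evErr x y d (j + 1) (2 * k) + evErr x y d (j + 1) (2 * k + 1))

theorem evErr_nonneg (x y : ℕ → ℤ → ℝ) (d : ℕ) : ∀ j k, 0 ≤ evErr x y d j k := by
  induction d with
  | zero => intro j k; simp [evErr]
  | succ d ih =>
    intro j k
    have := ih (j + 1) (2 * k)
    have := ih (j + 1) (2 * k + 1)
    unfold evErr
    positivity

theorem evErr_eq (μ ν : Measure ℝ) [IsFiniteMeasure μ] [IsFiniteMeasure ν] (d : ℕ) : ∀ (j : ℕ) (k : ℤ),
    ∑ i ∈ Finset.range d, ENNReal.ofReal ((((j + i : ℕ) : ℝ) + 10)⁻¹ ^ 2 * 2 ^ (j + i)) *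
      ∫⁻ s in Set.Ico (k * evh j) ((k + 1) * evh j),
        ENNReal.ofReal (evm μ ν (eva (j + i) s) (eva (j + i) s + evh (j + i)) ^ 2) =
      ENNReal.ofReal (evErr (evc μ) (evc ν) d j k) := by
  induction d with
  | zero => intro j k; simp [evErr]
  | succ d ih =>
    intro j k
    have h0 := evh_pos (j + 1)
    rw [Finset.sum_range_succ']
    have hun : Set.Ico (k * evh j) ((k + 1) * evh j) =
        Set.Ico (((2 * k : ℤ) : ℝ) * evh (j + 1)) ((((2 * k : ℤ) : ℝ) + 1) * evh (j + 1)) ∪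
        Set.Ico (((2 * k + 1 : ℤ) : ℝ) * evh (j + 1)) ((((2 * k + 1 : ℤ) : ℝ) + 1) * evh (j + 1)) := by
      have e1 : ((2 * k + 1 : ℤ) : ℝ) * evh (j + 1) = (((2 * k : ℤ) : ℝ) + 1) * evh (j + 1) := by push_cast; ring
      rw [e1, Set.Ico_union_Ico_eq_Ico (by nlinarith) (by push_cast; nlinarith)]
      congr 1
      · push_cast; rw [evh_succ j]; ring
      · push_cast; rw [evh_succ j]; ring
    have hdis : Disjoint (Set.Ico (((2 * k : ℤ) : ℝ) * evh (j + 1)) ((((2 * k : ℤ) : ℝ) + 1) * evh (j + 1)))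
        (Set.Ico (((2 * k + 1 : ℤ) : ℝ) * evh (j + 1)) ((((2 * k + 1 : ℤ) : ℝ) + 1) * evh (j + 1))) := by
      have e1 : ((2 * k + 1 : ℤ) : ℝ) * evh (j + 1) = (((2 * k : ℤ) : ℝ) + 1) * evh (j + 1) := by push_cast; ring
      rw [e1]
      exact Set.Ico_disjoint_Ico_same
    have hA : ∑ i ∈ Finset.range d, ENNReal.ofReal ((((j + (i + 1) : ℕ) : ℝ) + 10)⁻¹ ^ 2 * 2 ^ (j + (i + 1))) *
      ∫⁻ s in Set.Ico (k * evh j) ((k + 1) * evh j),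
        ENNReal.ofReal (evm μ ν (eva (j + (i + 1)) s) (eva (j + (i + 1)) s + evh (j + (i + 1))) ^ 2) =
        ENNReal.ofReal (evErr (evc μ) (evc ν) d (j + 1) (2 * k)) + ENNReal.ofReal (evErr (evc μ) (evc ν) d (j + 1) (2 * k + 1)) := by
      rw [← ih (j + 1) (2 * k), ← ih (j + 1) (2 * k + 1), ← Finset.sum_add_distrib]
      refine Finset.sum_congr rfl fun i _ => ?_
      have e : j + (i + 1) = j + 1 + i := by ring
      rw [e, hun, lintegral_union measurableSet_Ico hdis, mul_add]
    rw [hA]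
    have hB : ∫⁻ s in Set.Ico (k * evh j) ((k + 1) * evh j),
        ENNReal.ofReal (evm μ ν (eva (j + 0) s) (eva (j + 0) s + evh (j + 0)) ^ 2) =
        ENNReal.ofReal ((evc μ j k - evc ν j k) ^ 2 * evh j) := by
      have : ∀ s ∈ Set.Ico (k * evh j) ((k + 1) * evh j),
          ENNReal.ofReal (evm μ ν (eva (j + 0) s) (eva (j + 0) s + evh (j + 0)) ^ 2) =
          ENNReal.ofReal ((evc μ j k - evc ν j k) ^ 2) := by
        intro s hs
        rw [add_zero, eva_eq j s k hs.1 hs.2]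
        unfold evm evc
        rw [add_mul, one_mul]
      rw [setLIntegral_congr_fun measurableSet_Ico this, setLIntegral_const, Real.volume_Ico,
        ENNReal.ofReal_mul (sq_nonneg _)]
      congr 2
      ring
    rw [hB, ← ENNReal.ofReal_mul (by positivity), ← ENNReal.ofReal_add (evErr_nonneg _ _ _ _ _) (evErr_nonneg _ _ _ _ _),
      ← ENNReal.ofReal_add (add_nonneg (evErr_nonneg _ _ _ _ _) (evErr_nonneg _ _ _ _ _))
      (by have := evh_pos j; positivity)]
    congr 1
    have := evh_mul j
    rw [evErr, add_zero]
    linear_combination (((j : ℝ) + 10)⁻¹ ^ 2 * (evc μ j k - evc ν j k) ^ 2) * this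

theorem evR_restrict (μ ν : Measure ℝ) (hμ : μ (Set.Ico 0 1)ᶜ = 0)
    (hν : ν (Set.Ico 0 1)ᶜ = 0) (j : ℕ) :
    evR μ ν j = ∫⁻ s in Set.Ico (((0 : ℤ) : ℝ) * evh 0) ((((0 : ℤ) : ℝ) + 1) * evh 0),
      ENNReal.ofReal (evm μ ν (eva j s) (eva j s + evh j) ^ 2) := by
  have e : Set.Ico (((0 : ℤ) : ℝ) * evh 0) ((((0 : ℤ) : ℝ) + 1) * evh 0) = Set.Ico 0 1 := by
    simp [evh]
  rw [e, ← lintegral_indicator measurableSet_Ico]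
  unfold evR
  congr 1
  ext s
  by_cases hs : s ∈ Set.Ico (0 : ℝ) 1
  · rw [Set.indicator_of_mem hs]
  · rw [Set.indicator_of_notMem hs]
    have hsub : Set.Ico (eva j s) (eva j s + evh j) ⊆ (Set.Ico 0 1)ᶜ := by
      have h3 := evh_mul j
      have h0 := evh_pos j
      simp only [Set.mem_Ico, not_and_or, not_le, not_lt] at hs
      intro t ht
      simp only [Set.mem_Ico, Set.mem_compl_iff, not_and_or, not_le, not_lt]
      rcases hs with hs | hs
      · left
        have : ⌊s * 2 ^ j⌋ < 0 := by
          rw [Int.floor_lt]; push_cast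
          exact mul_neg_of_neg_of_pos hs (by positivity)
        have h5 : (⌊s * 2 ^ j⌋ : ℝ) + 1 ≤ 0 := by exact_mod_cast this
        have := ht.2
        unfold eva at this
        nlinarith
      · right
        have : (2 ^ j : ℤ) ≤ ⌊s * 2 ^ j⌋ := by
          rw [Int.le_floor]; push_cast
          exact le_mul_of_one_le_left (by positivity) hs
        have h5 : (2 ^ j : ℝ) ≤ ⌊s * 2 ^ j⌋ := by exact_mod_cast this
        have := ht.1
        unfold eva at this
        nlinarith
    unfold evm
    rw [measureReal_def, measureReal_def, measure_mono_null hsub hμ, measure_mono_null hsub hν]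
    simp

theorem ev_tail (D : ℕ) : ∑' j : ℕ, ENNReal.ofReal (24000 * (((j + D : ℕ) : ℝ) + 10)⁻¹ ^ 2) ≤
    ENNReal.ofReal (24000 / ((D : ℝ) + 9)) := by
  apply ENNReal.tsum_le_of_sum_range_le
  intro m
  rw [← ENNReal.ofReal_sum_of_nonneg (fun i _ => by positivity)]
  apply ENNReal.ofReal_le_ofReal
  have : ∀ m : ℕ, ∑ i ∈ Finset.range m, 24000 * (((i + D : ℕ) : ℝ) + 10)⁻¹ ^ 2 ≤
      24000 / ((D : ℝ) + 9) - 24000 / ((m : ℝ) + D + 9) := by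
    intro m
    induction m with
    | zero => simp
    | succ m ih =>
      rw [Finset.sum_range_succ]
      have : 24000 * (((m + D : ℕ) : ℝ) + 10)⁻¹ ^ 2 ≤ 24000 / ((m : ℝ) + D + 9) - 24000 / (((m + 1 : ℕ) : ℝ) + D + 9) := by
        push_cast
        have hx : (0 : ℝ) ≤ (m : ℝ) + D := by positivity
        have e1 : (m : ℝ) + 1 + D + 9 = (m : ℝ) + D + 10 := by ring
        rw [e1]
        generalize (m : ℝ) + D = x at hx
        rw [div_sub_div _ _ (by positivity) (by positivity), inv_pow, ← div_eq_mul_inv,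
          div_le_div_iff₀ (by positivity) (by positivity)]
        nlinarith
      linarith
  refine (this m).trans ?_
  have : 0 ≤ 24000 / ((m : ℝ) + D + 9) := by positivity
  linarith

theorem ev_dyadic (μ ν : Measure ℝ) [IsFiniteMeasure μ] [IsFiniteMeasure ν]
    (hμ : μ Set.univ ≤ 1) (hν : ν Set.univ ≤ 1)
    (sμ : μ (Set.Ico 0 1)ᶜ = 0) (sν : ν (Set.Ico 0 1)ᶜ = 0) (D : ℕ) :
    ∫⁻ s, ENNReal.ofReal (evS evK μ ν s ^ 2) ≤
      ENNReal.ofReal (738000 * evErr (evc μ) (evc ν) (D + 1) 0 0 + 200000 / ((D : ℝ) + 1)) := by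
  have hE := evErr_nonneg (evc μ) (evc ν) (D + 1) 0 0
  set E := evErr (evc μ) (evc ν) (D + 1) 0 0 with hEdef
  have h1 := ev_main_fourier μ ν
  simp_rw [evS_evI, ev_en] at h1
  refine h1.trans ?_
  have hFF : ∀ j : ℕ, ∫⁻ s, ENNReal.ofReal (evm μ ν s (s + (2 : ℝ)⁻¹ ^ j) ^ 2) = evF μ ν j := fun j => rfl
  simp_rw [hFF]
  rw [← ENNReal.summable.sum_add_tsum_nat_add' (k := D)]
  set q : ℕ → ℝ := fun j => 2 ^ j * (evQ μ ν j).toReal with hq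
  set p : ℕ → ℝ := fun j => 2 ^ j * (evR μ ν j).toReal with hp
  have hq0 : ∀ j, 0 ≤ q j := fun j => by simp only [hq]; positivity
  have hp0 : ∀ j, 0 ≤ p j := fun j => by simp only [hp]; positivity
  have hQf : ∀ j, evQ μ ν j ≠ ⊤ := fun j => ne_top_of_le_ne_top ENNReal.ofReal_ne_top (evQ_crude μ ν hμ hν j)
  have hRf : ∀ j, evR μ ν j ≠ ⊤ := fun j => ne_top_of_le_ne_top ENNReal.ofReal_ne_top (evR_crude μ ν hμ hν j)
  have hq4 : ∀ j, q j ≤ 4 := by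
    intro j
    have h := ENNReal.toReal_le_of_le_ofReal (by have := evh_pos j; positivity) (evQ_crude μ ν hμ hν j)
    have h3 := evh_mul j
    calc q j ≤ 2 ^ j * (4 * evh j) := by simp only [hq]; gcongr
      _ = 4 := by linear_combination 4 * h3
  have hrec : ∀ j, q j ≤ 3 / 4 * q (j + 1) + 3 / 2 * p (j + 1) := by
    intro j
    have h := ENNReal.toReal_mono (ENNReal.add_ne_top.2 ⟨ENNReal.mul_ne_top ENNReal.ofReal_ne_top (hQf (j + 1)),
      ENNReal.mul_ne_top (by norm_num) (hRf (j + 1))⟩) (evQ_le μ ν j)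
    rw [ENNReal.toReal_add (ENNReal.mul_ne_top ENNReal.ofReal_ne_top (hQf (j + 1)))
      (ENNReal.mul_ne_top (by norm_num) (hRf (j + 1))), ENNReal.toReal_mul, ENNReal.toReal_mul,
      ENNReal.toReal_ofReal (by norm_num), ENNReal.toReal_ofNat] at h
    have h2 : (2 : ℝ) ^ j * (evQ μ ν j).toReal ≤ 2 ^ j * (3 / 2 * (evQ μ ν (j + 1)).toReal + 3 * (evR μ ν (j + 1)).toReal) := by
      gcongr
    simp only [hq, hp]
    rw [pow_succ]
    linarith
  have hsum := ev_seq q p hq0 hp0 hrec D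
  have hEE : ∑ j ∈ Finset.range (D + 1), ((j : ℝ) + 10)⁻¹ ^ 2 * p j = E := by
    have h := evErr_eq μ ν (D + 1) 0 0
    simp_rw [zero_add, ← evR_restrict μ ν sμ sν] at h
    have h2 : ∀ j : ℕ, ENNReal.ofReal (((j : ℝ) + 10)⁻¹ ^ 2 * 2 ^ j) * evR μ ν j =
        ENNReal.ofReal (((j : ℝ) + 10)⁻¹ ^ 2 * p j) := by
      intro j
      simp only [hp]
      rw [← mul_assoc, ENNReal.ofReal_mul (q := (evR μ ν j).toReal) (by positivity), ENNReal.ofReal_toReal (hRf j)]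
    simp_rw [h2] at h
    rw [← ENNReal.ofReal_sum_of_nonneg (fun i _ => by have := hp0 i; positivity)] at h
    rwa [ENNReal.ofReal_eq_ofReal_iff (Finset.sum_nonneg fun i _ => by have := hp0 i; positivity) hE] at h
  have hhead : ∑ j ∈ Finset.range D, ENNReal.ofReal (6000 * (((j : ℝ) + 10)⁻¹ ^ 2 * 2 ^ j)) * evF μ ν j ≤
      ENNReal.ofReal (18000 * (E + 2 * (10 * (((D : ℝ) + 10)⁻¹ ^ 2 * q D) + 20 * E))) := by
    have h2 : ∀ j ∈ Finset.range D, ENNReal.ofReal (6000 * (((j : ℝ) + 10)⁻¹ ^ 2 * 2 ^ j)) * evF μ ν j ≤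
        ENNReal.ofReal (18000 * (((j : ℝ) + 10)⁻¹ ^ 2 * p j + 2 * (((j : ℝ) + 10)⁻¹ ^ 2 * q j))) := by
      intro j _
      have h3 : 3 * (evR μ ν j + 2 * evQ μ ν j) = ENNReal.ofReal (3 * ((evR μ ν j).toReal + 2 * (evQ μ ν j).toReal)) := by
        rw [ENNReal.ofReal_mul (by norm_num), ENNReal.ofReal_add (by positivity) (by positivity), ENNReal.ofReal_mul (by norm_num),
          ENNReal.ofReal_toReal (hRf j), ENNReal.ofReal_toReal (hQf j)]
        simp
      calc _ ≤ ENNReal.ofReal (6000 * (((j : ℝ) + 10)⁻¹ ^ 2 * 2 ^ j)) * (3 * (evR μ ν j + 2 * evQ μ ν j)) := by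
            gcongr; exact evF_le μ ν j
        _ = _ := by
            rw [h3, ← ENNReal.ofReal_mul (by positivity)]
            congr 1
            simp only [hq, hp]
            ring
    refine (Finset.sum_le_sum h2).trans ?_
    rw [← ENNReal.ofReal_sum_of_nonneg (fun i _ => by have := hp0 i; have := hq0 i; positivity)]
    apply ENNReal.ofReal_le_ofReal
    rw [← Finset.mul_sum, Finset.sum_add_distrib, ← Finset.mul_sum]
    have h4 := Finset.sum_range_succ (fun j : ℕ => ((j : ℝ) + 10)⁻¹ ^ 2 * p j) D
    have h8 : 0 ≤ ((D : ℝ) + 10)⁻¹ ^ 2 * p D := by have := hp0 D; positivity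
    rw [hEE] at hsum h4
    linarith
  have htail : ∑' j : ℕ, ENNReal.ofReal (6000 * ((((j + D : ℕ) : ℝ) + 10)⁻¹ ^ 2 * 2 ^ (j + D))) * evF μ ν (j + D) ≤
      ENNReal.ofReal (24000 / ((D : ℝ) + 9)) := by
    refine le_trans (ENNReal.tsum_le_tsum fun j => ?_) (ev_tail D)
    calc _ ≤ ENNReal.ofReal (6000 * ((((j + D : ℕ) : ℝ) + 10)⁻¹ ^ 2 * 2 ^ (j + D))) * ENNReal.ofReal (4 * evh (j + D)) := by
          gcongr; exact evF_crude μ ν hμ hν _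
      _ = _ := by
          rw [← ENNReal.ofReal_mul (by positivity)]
          congr 1
          linear_combination (24000 * (((j + D : ℕ) : ℝ) + 10)⁻¹ ^ 2) * evh_mul (j + D)
  refine (add_le_add hhead htail).trans ?_
  have := hq0 D
  rw [← ENNReal.ofReal_add (by positivity) (by positivity)]
  apply ENNReal.ofReal_le_ofReal
  have h5 : ((D : ℝ) + 10)⁻¹ ^ 2 * q D ≤ 4 / 10 / ((D : ℝ) + 1) := by
    calc ((D : ℝ) + 10)⁻¹ ^ 2 * q D ≤ ((D : ℝ) + 10)⁻¹ ^ 2 * 4 := by have := hq4 D; gcongr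
      _ ≤ _ := by
        rw [inv_pow, mul_comm, ← div_eq_mul_inv, div_div, div_le_div_iff₀ (by positivity) (by positivity)]
        nlinarith [(Nat.cast_nonneg D : (0 : ℝ) ≤ D)]
  have h6 : 24000 / ((D : ℝ) + 9) ≤ 24000 / ((D : ℝ) + 1) := by gcongr; norm_num
  have h7 : 18000 * (2 * (10 * (4 / 10 / ((D : ℝ) + 1)))) + 24000 / ((D : ℝ) + 1) ≤ 200000 / ((D : ℝ) + 1) := by
    rw [div_div]
    have : 18000 * (2 * (10 * (4 / (10 * ((D : ℝ) + 1))))) + 24000 / ((D : ℝ) + 1) = 168000 / ((D : ℝ) + 1) := by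
      field_simp; norm_num
    rw [this]; gcongr; norm_num
  nlinarith

/-- Fingerprint trees. -/
inductive EvTree : Type
  | leaf : EvTree
  | node : ℕ → EvTree → EvTree → EvTree

/-- Cost of a tree. -/
noncomputable def evL : EvTree → ℝ
  | EvTree.leaf => 0
  | EvTree.node k l r => Real.log (4 * (k * (k + 1))) + (evL l + evL r)

/-- Trees of bounded depth with positive labels. -/
def evGood : ℕ → EvTree → Prop
  | _, EvTree.leaf => True
  | 0, EvTree.node _ _ _ => False
  | d + 1, EvTree.node k l r => 1 ≤ k ∧ evGood d l ∧ evGood d r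

theorem ev_count_aux (K : Finset ℕ) (hK : ∀ k ∈ K, 1 ≤ k) :
    ∑ k ∈ K, (4 * ((k : ℝ) * (k + 1)))⁻¹ ≤ 1 / 4 := by
  have h1 : ∀ m : ℕ, ∑ k ∈ Finset.range m, (4 * (((k + 1 : ℕ) : ℝ) * ((k + 1 : ℕ) + 1)))⁻¹ = 1 / 4 - 1 / (4 * ((m : ℝ) + 1)) := by
    intro m
    induction m with
    | zero => simp
    | succ m ih =>
      rw [Finset.sum_range_succ, ih]
      push_cast
      field_simp
      ring
  set m := K.sup id with hm
  have hsub : K ⊆ (Finset.range m).image Nat.succ := by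
    intro k hk
    rw [Finset.mem_image]
    have := hK k hk
    have h2 : k ≤ m := Finset.le_sup (f := id) hk
    exact ⟨k - 1, Finset.mem_range.2 (by omega), by omega⟩
  have h3 : ∑ k ∈ K, (4 * ((k : ℝ) * (k + 1)))⁻¹ ≤
      ∑ k ∈ (Finset.range m).image Nat.succ, (4 * ((k : ℝ) * (k + 1)))⁻¹ :=
    Finset.sum_le_sum_of_subset_of_nonneg hsub fun i _ _ => by positivity
  rw [Finset.sum_image (fun a _ b _ h => Nat.succ_injective h)] at h3
  have h4 := h1 m
  have : 0 ≤ 1 / (4 * ((m : ℝ) + 1)) := by positivity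
  simp only [Nat.succ_eq_add_one] at h3
  linarith

theorem ev_count (d : ℕ) : ∀ A : Finset EvTree, (∀ T ∈ A, evGood d T) → ∑ T ∈ A, Real.exp (-evL T) ≤ 2 := by
  classical
  induction d with
  | zero =>
    intro A hA
    have : A ⊆ {EvTree.leaf} := by
      intro T hT
      have := hA T hT
      cases T with
      | leaf => simp
      | node k l r => simp [evGood] at this
    calc _ ≤ ∑ T ∈ {EvTree.leaf}, Real.exp (-evL T) :=
          Finset.sum_le_sum_of_subset_of_nonneg this fun i _ _ => (Real.exp_pos _).le
      _ ≤ 2 := by simp [evL]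
  | succ d ih =>
    intro A hA
    let lab : EvTree → ℕ := fun T => match T with | EvTree.leaf => 1 | EvTree.node k _ _ => k
    let lef : EvTree → EvTree := fun T => match T with | EvTree.leaf => EvTree.leaf | EvTree.node _ l _ => l
    let rig : EvTree → EvTree := fun T => match T with | EvTree.leaf => EvTree.leaf | EvTree.node _ _ r => r
    set K := A.image lab with hKd
    set A1 := A.image lef with hA1
    set A2 := A.image rig with hA2
    have hK : ∀ k ∈ K, 1 ≤ k := by
      intro k hk
      obtain ⟨T, hT, rfl⟩ := Finset.mem_image.1 hk
      have := hA T hT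
      cases T with
      | leaf => exact le_rfl
      | node k l r => exact this.1
    have h1 : ∀ T ∈ A1, evGood d T := by
      intro k hk
      obtain ⟨T, hT, rfl⟩ := Finset.mem_image.1 hk
      have := hA T hT
      cases T with
      | leaf => simp [lef, evGood]
      | node k l r => exact this.2.1
    have h2 : ∀ T ∈ A2, evGood d T := by
      intro k hk
      obtain ⟨T, hT, rfl⟩ := Finset.mem_image.1 hk
      have := hA T hT
      cases T with
      | leaf => simp [rig, evGood]
      | node k l r => exact this.2.2
    let nd : ℕ × EvTree × EvTree → EvTree := fun p => EvTree.node p.1 p.2.1 p.2.2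
    have hinj : Function.Injective nd := by
      rintro ⟨a, b, c⟩ ⟨a', b', c'⟩ h
      simp only [nd, EvTree.node.injEq] at h
      simp [h]
    have hsub : A ⊆ insert EvTree.leaf ((K ×ˢ A1 ×ˢ A2).image nd) := by
      intro T hT
      cases T with
      | leaf => simp
      | node k l r =>
        apply Finset.mem_insert_of_mem
        rw [Finset.mem_image]
        refine ⟨(k, l, r), ?_, rfl⟩
        simp only [Finset.mem_product]
        exact ⟨Finset.mem_image.2 ⟨_, hT, rfl⟩, Finset.mem_image.2 ⟨_, hT, rfl⟩, Finset.mem_image.2 ⟨_, hT, rfl⟩⟩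
    have hL : EvTree.leaf ∉ (K ×ˢ A1 ×ˢ A2).image nd := by simp [nd]
    calc _ ≤ ∑ T ∈ insert EvTree.leaf ((K ×ˢ A1 ×ˢ A2).image nd), Real.exp (-evL T) :=
          Finset.sum_le_sum_of_subset_of_nonneg hsub fun i _ _ => (Real.exp_pos _).le
      _ = 1 + ∑ p ∈ K ×ˢ A1 ×ˢ A2, Real.exp (-evL (nd p)) := by
          rw [Finset.sum_insert hL, Finset.sum_image (fun a _ b _ h => hinj h)]
          simp [evL]
      _ = 1 + ∑ p ∈ K ×ˢ A1 ×ˢ A2, (4 * ((p.1 : ℝ) * (p.1 + 1)))⁻¹ * (Real.exp (-evL p.2.1) * Real.exp (-evL p.2.2)) := by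
          congr 1
          refine Finset.sum_congr rfl fun p hp => ?_
          have hk := hK p.1 (Finset.mem_product.1 hp).1
          have hk' : (1 : ℝ) ≤ p.1 := by exact_mod_cast hk
          simp only [nd, evL]
          rw [neg_add, neg_add, Real.exp_add, Real.exp_add, Real.exp_neg (Real.log _), Real.exp_log (by positivity)]
      _ = 1 + (∑ k ∈ K, (4 * ((k : ℝ) * (k + 1)))⁻¹) * ((∑ T ∈ A1, Real.exp (-evL T)) * ∑ T ∈ A2, Real.exp (-evL T)) := by
          rw [Finset.sum_product]
          simp_rw [Finset.sum_product, ← Finset.mul_sum]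
          rw [Finset.sum_mul, Finset.sum_mul_sum]
          simp_rw [← Finset.mul_sum]
      _ ≤ 1 + 1 / 4 * (2 * 2) := by
          have g1 := ih A1 h1
          have g2 := ih A2 h2
          have g3 := ev_count_aux K hK
          have g4 : 0 ≤ ∑ T ∈ A1, Real.exp (-evL T) := Finset.sum_nonneg fun i _ => (Real.exp_pos _).le
          have g5 : 0 ≤ ∑ T ∈ A2, Real.exp (-evL T) := Finset.sum_nonneg fun i _ => (Real.exp_pos _).le
          gcongr
      _ = 2 := by norm_num

theorem ev_count_card (d : ℕ) (c : ℝ) : ∃ S : Finset EvTree, (S.card : ℝ) ≤ 2 * Real.exp c ∧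
    ∀ T, evGood d T → evL T ≤ c → T ∈ S := by
  classical
  set U : Set EvTree := {T | evGood d T ∧ evL T ≤ c} with hU
  have hb : ∀ A : Finset EvTree, (A : Set EvTree) ⊆ U → (A.card : ℝ) ≤ 2 * Real.exp c := by
    intro A hA
    have h1 := ev_count d A fun T hT => (hA hT).1
    have h2 : ∑ T ∈ A, Real.exp (-c) ≤ ∑ T ∈ A, Real.exp (-evL T) :=
      Finset.sum_le_sum fun T hT => Real.exp_le_exp.2 (neg_le_neg (hA hT).2)
    rw [Finset.sum_const, nsmul_eq_mul, Real.exp_neg] at h2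
    have h3 := h2.trans h1
    rwa [← div_eq_mul_inv, div_le_iff₀ (Real.exp_pos _)] at h3
  have hfin : U.Finite := by
    by_contra hinf
    obtain ⟨m, hm⟩ := exists_nat_gt (2 * Real.exp c)
    obtain ⟨A, hA, hAc⟩ := Set.Infinite.exists_subset_card_eq hinf m
    have := hb A hA
    rw [hAc] at this
    linarith
  refine ⟨hfin.toFinset, hb _ (by simp), fun T h1 h2 => ?_⟩
  rw [Set.Finite.mem_toFinset]
  exact ⟨h1, h2⟩

/-- Fingerprint of a mass function. -/
noncomputable def evT (y : ℕ → ℤ → ℝ) : ℕ → ℕ → ℤ → EvTree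
  | 0, _, _ => EvTree.leaf
  | d + 1, j, k => if ⌊y j k / ((j : ℝ) + 10)⌋₊ = 0 then EvTree.leaf else
      EvTree.node ⌊y j k / ((j : ℝ) + 10)⌋₊ (evT y d (j + 1) (2 * k)) (evT y d (j + 1) (2 * k + 1))

theorem evT_good (y : ℕ → ℤ → ℝ) (d : ℕ) : ∀ j k, evGood d (evT y d j k) := by
  induction d with
  | zero => intro j k; simp [evT, evGood]
  | succ d ih =>
    intro j k
    unfold evT
    split_ifs with h
    · simp [evGood]
    · exact ⟨Nat.one_le_iff_ne_zero.2 h, ih _ _, ih _ _⟩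

theorem ev_label (y l : ℝ) (hl : 0 < l) (h : l ≤ y) :
    Real.log (4 * ((⌊y / l⌋₊ : ℝ) * (⌊y / l⌋₊ + 1))) ≤ 4 * (√y / √l) := by
  have ht : 1 ≤ y / l := by rw [le_div_iff₀ hl]; linarith
  rw [← Real.sqrt_div' y hl.le]
  set t := y / l
  have hk : (⌊t⌋₊ : ℝ) ≤ t := Nat.floor_le (by linarith)
  have hk1 : 1 ≤ ⌊t⌋₊ := Nat.le_floor (by simpa using ht)
  have hk1' : (1 : ℝ) ≤ ⌊t⌋₊ := by exact_mod_cast hk1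
  have hs : 0 < √t := Real.sqrt_pos.2 (by linarith)
  have hsq : √t ^ 2 = t := Real.sq_sqrt (by linarith)
  calc Real.log (4 * ((⌊t⌋₊ : ℝ) * (⌊t⌋₊ + 1))) ≤ Real.log (8 * (√t) ^ 4) := by
        apply Real.log_le_log (by positivity)
        have : √t ^ 4 = t * t := by rw [show √t ^ 4 = √t ^ 2 * √t ^ 2 by ring, hsq]
        rw [this]; nlinarith
    _ = 3 * Real.log 2 + 4 * Real.log (√t) := by
        rw [Real.log_mul (by norm_num) (by positivity), Real.log_pow, show (8 : ℝ) = 2 ^ 3 by norm_num, Real.log_pow]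
        norm_num
    _ ≤ 4 * √t := by
        have := Real.log_le_sub_one_of_pos hs
        have := Real.log_two_lt_d9
        linarith

theorem ev_sqrt_step (l : ℝ) (hl : 10 ≤ l) : 4 / √l + 10 * √l ≤ 10 * √(l + 1) := by
  have h0 : 0 < √l := Real.sqrt_pos.2 (by linarith)
  have h1 : √l ^ 2 = l := Real.sq_sqrt (by linarith)
  have h2 : √l + 0.4 / √l ≤ √(l + 1) := by
    apply Real.le_sqrt_of_sq_le
    have e : (√l + 0.4 / √l) ^ 2 = l + 0.8 + 0.16 / l := by
      field_simp
      rw [h1]; ring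
    rw [e]
    have : 0.16 / l ≤ 0.2 := by rw [div_le_iff₀ (by linarith)]; linarith
    linarith
  have : 4 / √l = 10 * (0.4 / √l) := by ring
  linarith

set_option maxHeartbeats 800000 in
theorem ev_cost (y : ℕ → ℤ → ℝ) (hy : ∀ j k, 0 ≤ y j k)
    (ha : ∀ j k, y j k = y (j + 1) (2 * k) + y (j + 1) (2 * k + 1)) (d : ℕ) : ∀ (j : ℕ) (k : ℤ),
    (((j : ℝ) + 10 ≤ y j k) → evL (evT y d j k) ≤ 11 * y j k - 10 * (√(y j k) * √((j : ℝ) + 10))) ∧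
    (¬ ((j : ℝ) + 10 ≤ y j k) → evL (evT y d j k) = 0) := by
  have hpos : ∀ (j : ℕ) (k : ℤ), ((j : ℝ) + 10 ≤ y j k) → 0 ≤ 11 * y j k - 10 * (√(y j k) * √((j : ℝ) + 10)) := by
    intro j k h
    have h1 : √((j : ℝ) + 10) ≤ √(y j k) := Real.sqrt_le_sqrt h
    have h2 : √(y j k) ^ 2 = y j k := Real.sq_sqrt (hy j k)
    have h3 := Real.sqrt_nonneg (y j k)
    nlinarith [hy j k]
  induction d with
  | zero =>
    intro j k
    exact ⟨fun h => by simpa [evT, evL] using hpos j k h, fun h => by simp [evT, evL]⟩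
  | succ d ih =>
    intro j k
    have hl0 : (0 : ℝ) < (j : ℝ) + 10 := by positivity
    constructor
    · intro h
      have hne : ⌊y j k / ((j : ℝ) + 10)⌋₊ ≠ 0 := by
        rw [Ne, Nat.floor_eq_zero, not_lt, le_div_iff₀ hl0]; linarith
      have hlab := ev_label (y j k) ((j : ℝ) + 10) hl0 h
      unfold evT
      rw [if_neg hne, evL]
      have i1 := ih (j + 1) (2 * k)
      have i2 := ih (j + 1) (2 * k + 1)
      have hstep := ev_sqrt_step ((j : ℝ) + 10) (by have := (Nat.cast_nonneg j : (0 : ℝ) ≤ j); linarith)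
      have ec : (((j + 1 : ℕ) : ℝ) + 10) = (j : ℝ) + 10 + 1 := by push_cast; ring
      rw [ec] at i1 i2
      have hak := ha j k
      generalize evL (evT y d (j + 1) (2 * k)) = L1 at *
      generalize evL (evT y d (j + 1) (2 * k + 1)) = L2 at *
      generalize Real.log (4 * ((⌊y j k / ((j : ℝ) + 10)⌋₊ : ℝ) * (⌊y j k / ((j : ℝ) + 10)⌋₊ + 1))) = L0 at *
      have hy1 := hy (j + 1) (2 * k)
      have hy2 := hy (j + 1) (2 * k + 1)
      generalize y (j + 1) (2 * k) = y1 at *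
      generalize y (j + 1) (2 * k + 1) = y2 at *
      have hyy := hy j k
      have hl10 : (10 : ℝ) ≤ (j : ℝ) + 10 := by have := (Nat.cast_nonneg j : (0 : ℝ) ≤ j); linarith
      generalize y j k = Y at *
      generalize (j : ℝ) + 10 = l at *
      clear ih hpos ha hy
      subst hak
      have sl : 0 < √l := Real.sqrt_pos.2 hl0
      have sl2 : √l ^ 2 = l := Real.sq_sqrt hl0.le
      have sY := Real.sqrt_nonneg (y1 + y2)
      have sY2 : √(y1 + y2) ^ 2 = y1 + y2 := Real.sq_sqrt hyy
      have hlY : √l ≤ √(y1 + y2) := Real.sqrt_le_sqrt h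
      have s1 := Real.sqrt_nonneg y1
      have s2 := Real.sqrt_nonneg y2
      have s12 : √y1 ^ 2 = y1 := Real.sq_sqrt hy1
      have s22 : √y2 ^ 2 = y2 := Real.sq_sqrt hy2
      have s1' := Real.sqrt_nonneg (l + 1)
      have hll : √l ≤ √(l + 1) := Real.sqrt_le_sqrt (by linarith)
      -- one heavy child
      have hone : ∀ u v : ℝ, 0 ≤ v → l + 1 ≤ u →
          4 * (√(u + v) / √l) + 10 * (√(u + v) * √l) ≤ 11 * v + 10 * (√u * √(l + 1)) := by
        intro u v hv hu
        have su : 0 < √u := Real.sqrt_pos.2 (by linarith)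
        have su2 : √u ^ 2 = u := Real.sq_sqrt (by linarith)
        have hlu : √l ≤ √u := Real.sqrt_le_sqrt (by linarith)
        have huv : √(u + v) ≤ √u + v / (2 * √u) := by
          apply Real.sqrt_le_iff.2
          constructor
          · positivity
          · have : (√u + v / (2 * √u)) ^ 2 = u + v + (v / (2 * √u)) ^ 2 := by
              field_simp
              rw [su2]; ring
            rw [this]; nlinarith [sq_nonneg (v / (2 * √u))]
        have e : 4 * (√(u + v) / √l) + 10 * (√(u + v) * √l) = √(u + v) * (4 / √l + 10 * √l) := by ring
        have hc : 4 / √l + 10 * √l ≤ 11 * √l := by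
          have : 4 / √l ≤ √l := by rw [div_le_iff₀ sl]; nlinarith
          linarith
        have hc0 : 0 ≤ 4 / √l + 10 * √l := by positivity
        rw [e]
        calc √(u + v) * (4 / √l + 10 * √l) ≤ (√u + v / (2 * √u)) * (4 / √l + 10 * √l) := by gcongr
          _ = √u * (4 / √l + 10 * √l) + v / (2 * √u) * (4 / √l + 10 * √l) := by ring
          _ ≤ √u * (10 * √(l + 1)) + v / (2 * √u) * (22 * √u) := by
              gcongr
              linarith
          _ = _ := by field_simp; ring
      by_cases h1 : l + 1 ≤ y1
      · have j1 := i1.1 h1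
        by_cases h2 : l + 1 ≤ y2
        · have j2 := i2.1 h2
          have hsub : √(y1 + y2) ≤ √y1 + √y2 := by
            apply Real.sqrt_le_iff.2
            exact ⟨by positivity, by nlinarith⟩
          have e : 4 * (√(y1 + y2) / √l) + 10 * (√(y1 + y2) * √l) = √(y1 + y2) * (4 / √l + 10 * √l) := by ring
          have : √(y1 + y2) * (4 / √l + 10 * √l) ≤ (√y1 + √y2) * (10 * √(l + 1)) := by
            have hc0 : 0 ≤ 4 / √l + 10 * √l := by positivity
            gcongr
          nlinarith
        · have j2 := i2.2 h2
          have := hone y1 y2 hy2 h1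
          linarith
      · have j1 := i1.2 h1
        by_cases h2 : l + 1 ≤ y2
        · have j2 := i2.1 h2
          have := hone y2 y1 hy1 h2
          rw [add_comm y2 y1] at this
          linarith
        · have j2 := i2.2 h2
          have e1 : 4 * (√(y1 + y2) / √l) ≤ y1 + y2 := by
            rw [← mul_div_assoc, div_le_iff₀ sl]
            have h3 : 4 ≤ √(y1 + y2) * √l := by
              calc (4 : ℝ) ≤ √l * √l := by rw [← sq, sl2]; linarith
                _ ≤ _ := by gcongr
            calc 4 * √(y1 + y2) ≤ (√(y1 + y2) * √l) * √(y1 + y2) := by gcongr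
              _ = √(y1 + y2) ^ 2 * √l := by ring
              _ = _ := by rw [sY2]
          have e2 : √(y1 + y2) * √l ≤ y1 + y2 := by
            calc √(y1 + y2) * √l ≤ √(y1 + y2) * √(y1 + y2) := by gcongr
              _ = _ := by rw [← sq, sY2]
          linarith
    · intro h
      have hz : ⌊y j k / ((j : ℝ) + 10)⌋₊ = 0 := by
        rw [Nat.floor_eq_zero, div_lt_iff₀ hl0]; linarith
      unfold evT
      rw [if_pos hz, evL]

theorem ev_cost_le (y : ℕ → ℤ → ℝ) (hy : ∀ j k, 0 ≤ y j k)
    (ha : ∀ j k, y j k = y (j + 1) (2 * k) + y (j + 1) (2 * k + 1)) (d j : ℕ) (k : ℤ) :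
    evL (evT y d j k) ≤ 11 * y j k := by
  have h := ev_cost y hy ha d j k
  by_cases h1 : (j : ℝ) + 10 ≤ y j k
  · have := h.1 h1
    have : 0 ≤ √(y j k) * √((j : ℝ) + 10) := by positivity
    linarith
  · rw [h.2 h1]
    have := hy j k
    positivity

theorem ev_err_split (x z : ℕ → ℤ → ℝ) (hx : ∀ j k, 0 ≤ x j k) (hz : ∀ j k, 0 ≤ z j k) (d : ℕ) : ∀ (j : ℕ) (k : ℤ),
    evErr x z d j k ≤ evErr x 0 d j k + evErr z 0 d j k := by
  induction d with
  | zero => intro j k; simp [evErr]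
  | succ d ih =>
    intro j k
    have := ih (j + 1) (2 * k)
    have := ih (j + 1) (2 * k + 1)
    unfold evErr
    have h1 : (x j k - z j k) ^ 2 ≤ x j k ^ 2 + z j k ^ 2 := by
      have := mul_nonneg (hx j k) (hz j k)
      nlinarith
    have h2 : ((j : ℝ) + 10)⁻¹ ^ 2 * (x j k - z j k) ^ 2 ≤ ((j : ℝ) + 10)⁻¹ ^ 2 * (x j k ^ 2 + z j k ^ 2) := by gcongr
    simp only [Pi.zero_apply, sub_zero]
    linarith

theorem ev_err_light (x : ℕ → ℤ → ℝ) (hx : ∀ j k, 0 ≤ x j k)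
    (ha : ∀ j k, x j k = x (j + 1) (2 * k) + x (j + 1) (2 * k + 1)) (d : ℕ) : ∀ (j : ℕ) (k : ℤ),
    evErr x 0 d j k ≤ x j k ^ 2 / ((j : ℝ) + 9) := by
  induction d with
  | zero => intro j k; simp only [evErr]; positivity
  | succ d ih =>
    intro j k
    have h1 := ih (j + 1) (2 * k)
    have h2 := ih (j + 1) (2 * k + 1)
    unfold evErr
    have ec : (((j + 1 : ℕ) : ℝ) + 9) = (j : ℝ) + 10 := by push_cast; ring
    rw [ec] at h1 h2
    simp only [Pi.zero_apply, sub_zero]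
    have hs : x (j + 1) (2 * k) ^ 2 + x (j + 1) (2 * k + 1) ^ 2 ≤ x j k ^ 2 := by
      rw [ha j k]
      have := mul_nonneg (hx (j + 1) (2 * k)) (hx (j + 1) (2 * k + 1))
      nlinarith
    calc _ ≤ ((j : ℝ) + 10)⁻¹ ^ 2 * x j k ^ 2 + (x (j + 1) (2 * k) ^ 2 / ((j : ℝ) + 10) + x (j + 1) (2 * k + 1) ^ 2 / ((j : ℝ) + 10)) := by
          gcongr
      _ = ((j : ℝ) + 10)⁻¹ ^ 2 * x j k ^ 2 + (x (j + 1) (2 * k) ^ 2 + x (j + 1) (2 * k + 1) ^ 2) / ((j : ℝ) + 10) := by ring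
      _ ≤ ((j : ℝ) + 10)⁻¹ ^ 2 * x j k ^ 2 + x j k ^ 2 / ((j : ℝ) + 10) := by gcongr
      _ = x j k ^ 2 * (((j : ℝ) + 11) / ((j : ℝ) + 10) ^ 2) := by field_simp; ring
      _ ≤ x j k ^ 2 * (1 / ((j : ℝ) + 9)) := by
          apply mul_le_mul_of_nonneg_left _ (sq_nonneg _)
          rw [div_le_div_iff₀ (by positivity) (by positivity)]
          nlinarith
      _ = _ := by ring

theorem ev_err_light2 (x : ℕ → ℤ → ℝ) (hx : ∀ j k, 0 ≤ x j k)
    (ha : ∀ j k, x j k = x (j + 1) (2 * k) + x (j + 1) (2 * k + 1)) (d : ℕ) (j : ℕ) (k : ℤ)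
    (hl : ⌊x j k / ((j : ℝ) + 10)⌋₊ = 0) : evErr x 0 d j k ≤ 2 * x j k := by
  refine (ev_err_light x hx ha d j k).trans ?_
  have hl0 : (0 : ℝ) < (j : ℝ) + 10 := by positivity
  rw [Nat.floor_eq_zero, div_lt_iff₀ hl0] at hl
  rw [div_le_iff₀ (by positivity)]
  nlinarith [hx j k, (Nat.cast_nonneg j : (0 : ℝ) ≤ j)]

theorem ev_err_same (x z : ℕ → ℤ → ℝ) (hx : ∀ j k, 0 ≤ x j k)
    (ha : ∀ j k, x j k = x (j + 1) (2 * k) + x (j + 1) (2 * k + 1)) (hz : ∀ j k, 0 ≤ z j k)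
    (hb : ∀ j k, z j k = z (j + 1) (2 * k) + z (j + 1) (2 * k + 1)) (d : ℕ) : ∀ (j : ℕ) (k : ℤ),
    evT x d j k = evT z d j k → evErr x z d j k ≤ evL (evT x d j k) + 2 * (x j k + z j k) := by
  induction d with
  | zero =>
    intro j k _
    have := hx j k
    have := hz j k
    simp only [evErr, evT, evL]; positivity
  | succ d ih =>
    intro j k h
    have hl0 : (0 : ℝ) < (j : ℝ) + 10 := by positivity
    by_cases h1 : ⌊x j k / ((j : ℝ) + 10)⌋₊ = 0
    · have h2 : ⌊z j k / ((j : ℝ) + 10)⌋₊ = 0 := by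
        by_contra h2
        rw [evT, evT, if_pos h1, if_neg h2] at h
        simp at h
      have e := ev_err_split x z hx hz (d + 1) j k
      have e1 := ev_err_light2 x hx ha (d + 1) j k h1
      have e2 := ev_err_light2 z hz hb (d + 1) j k h2
      rw [evT, if_pos h1, evL]
      linarith
    · have h2 : ⌊z j k / ((j : ℝ) + 10)⌋₊ ≠ 0 := by
        intro h2
        rw [evT, evT, if_neg h1, if_pos h2] at h
        simp at h
      rw [evT, evT, if_neg h1, if_neg h2, EvTree.node.injEq] at h
      obtain ⟨hk, hl, hr⟩ := h
      have g1 := ih _ _ hl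
      have g2 := ih _ _ hr
      rw [evT, if_neg h1, evL, evErr]
      have hxk := ha j k
      have hzk := hb j k
      have hlog : 1 ≤ Real.log (4 * ((⌊x j k / ((j : ℝ) + 10)⌋₊ : ℝ) * (⌊x j k / ((j : ℝ) + 10)⌋₊ + 1))) := by
        have : (1 : ℝ) ≤ ⌊x j k / ((j : ℝ) + 10)⌋₊ := by exact_mod_cast Nat.one_le_iff_ne_zero.2 h1
        rw [Real.le_log_iff_exp_le (by positivity)]
        have := Real.exp_one_lt_d9
        nlinarith
      have hterm : ((j : ℝ) + 10)⁻¹ ^ 2 * (x j k - z j k) ^ 2 ≤ 1 := by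
        rw [← mul_pow, sq_le_one_iff_abs_le_one]
        have a1 := Nat.floor_le (a := x j k / ((j : ℝ) + 10)) (by have := hx j k; positivity)
        have a2 := Nat.lt_floor_add_one (x j k / ((j : ℝ) + 10))
        have b1 := Nat.floor_le (a := z j k / ((j : ℝ) + 10)) (by have := hz j k; positivity)
        have b2 := Nat.lt_floor_add_one (z j k / ((j : ℝ) + 10))
        rw [← hk] at b1 b2
        have : ((j : ℝ) + 10)⁻¹ * (x j k - z j k) = x j k / ((j : ℝ) + 10) - z j k / ((j : ℝ) + 10) := by ring
        rw [this, abs_le]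
        constructor <;> linarith
      linarith

theorem ev_err_scale (c : ℝ) (x z : ℕ → ℤ → ℝ) (d : ℕ) : ∀ (j : ℕ) (k : ℤ),
    evErr (fun j k => c * x j k) (fun j k => c * z j k) d j k = c ^ 2 * evErr x z d j k := by
  induction d with
  | zero => intro j k; simp [evErr]
  | succ d ih =>
    intro j k
    rw [evErr, evErr, ih, ih]; ring

/-- Admissible measures. -/
structure EvAdm (μ : Measure ℝ) : Prop where
  fin : IsFiniteMeasure μ
  mass : μ Set.univ ≤ 1
  supp : μ (Set.Ico 0 1)ᶜ = 0

/-- Fingerprint at scale `n`. -/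
noncomputable def evFp (n : ℕ) (μ : Measure ℝ) : EvTree := evT (fun j k => n * evc μ j k) n 0 0

theorem evc_root (μ : Measure ℝ) (h : EvAdm μ) : evc μ 0 0 ≤ 1 := by
  have := h.fin
  unfold evc
  apply ENNReal.toReal_le_of_le_ofReal (by norm_num)
  simpa using (measure_mono (Set.subset_univ _)).trans h.mass

theorem evFp_count (n : ℕ) (hn : 0 < n) : ∃ S : Finset EvTree, (S.card : ℝ) ≤ Real.exp (12 * n) ∧
    ∀ μ, EvAdm μ → evFp n μ ∈ S := by
  obtain ⟨S, h1, h2⟩ := ev_count_card n (11 * n)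
  refine ⟨S, h1.trans ?_, fun μ h => h2 _ (evT_good _ _ _ _) ?_⟩
  · have e : Real.exp (12 * n) = Real.exp n * Real.exp (11 * n) := by rw [← Real.exp_add]; congr 1; ring
    rw [e]
    gcongr
    have : (1 : ℝ) ≤ n := by exact_mod_cast hn
    have := Real.add_one_le_exp (n : ℝ)
    linarith
  · have := h.fin
    refine (ev_cost_le _ (fun j k => mul_nonneg (Nat.cast_nonneg _) (evc_nonneg μ j k)) (fun j k => ?_) n 0 0).trans ?_
    · rw [evc_split μ j k]; ring
    · have := evc_root μ h
      nlinarith [(Nat.cast_nonneg n : (0 : ℝ) ≤ n)]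

theorem evFp_close (n : ℕ) (hn : 0 < n) (μ ν : Measure ℝ) (hμ : EvAdm μ) (hν : EvAdm ν)
    (h : evFp n μ = evFp n ν) :
    ∫⁻ s, ENNReal.ofReal (evS evK μ ν s ^ 2) ≤ ENNReal.ofReal (12000000 / n) := by
  have := hμ.fin
  have := hν.fin
  obtain ⟨D, rfl⟩ : ∃ D, n = D + 1 := ⟨n - 1, by omega⟩
  refine (ev_dyadic μ ν hμ.mass hν.mass hμ.supp hν.supp D).trans ?_
  apply ENNReal.ofReal_le_ofReal
  have hn0 : (0 : ℝ) < ((D + 1 : ℕ) : ℝ) := by exact_mod_cast hn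
  have h1 := ev_err_same (fun j k => ((D + 1 : ℕ) : ℝ) * evc μ j k) (fun j k => ((D + 1 : ℕ) : ℝ) * evc ν j k)
    (fun j k => mul_nonneg (Nat.cast_nonneg _) (evc_nonneg μ j k)) (fun j k => by rw [evc_split μ j k]; ring)
    (fun j k => mul_nonneg (Nat.cast_nonneg _) (evc_nonneg ν j k)) (fun j k => by rw [evc_split ν j k]; ring)
    (D + 1) 0 0 h
  have h2 := ev_cost_le (fun j k => ((D + 1 : ℕ) : ℝ) * evc μ j k) (fun j k => mul_nonneg (Nat.cast_nonneg _) (evc_nonneg μ j k))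
    (fun j k => by rw [evc_split μ j k]; ring) (D + 1) 0 0
  rw [ev_err_scale] at h1
  have m1 := evc_root μ hμ
  have m2 := evc_root ν hν
  have hE : evErr (evc μ) (evc ν) (D + 1) 0 0 ≤ 15 / ((D + 1 : ℕ) : ℝ) := by
    rw [le_div_iff₀ hn0]
    have h3 : ((D + 1 : ℕ) : ℝ) ^ 2 * evErr (evc μ) (evc ν) (D + 1) 0 0 ≤ 15 * ((D + 1 : ℕ) : ℝ) := by nlinarith
    nlinarith
  have e : 738000 * (15 / ((D + 1 : ℕ) : ℝ)) + 200000 / ((D : ℝ) + 1) = 11270000 / ((D + 1 : ℕ) : ℝ) := by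
    push_cast; ring
  have : 11270000 / ((D + 1 : ℕ) : ℝ) ≤ 12000000 / ((D + 1 : ℕ) : ℝ) := by gcongr; norm_num
  linarith

theorem ev_proj {H : Type*} [NormedAddCommGroup H] [InnerProductSpace ℝ H] [CompleteSpace H]
    (T : Set H) (hcl : IsClosed T) (hconv : Convex ℝ T) (h0 : (0 : H) ∈ T) (ε : ℝ) (hε : 0 < ε)
    (f : H) (hf : ‖f‖ ≤ 1) :
    ∃ x : H, (ε / 2) • x ∈ T ∧ ∀ h ∈ T, inner ℝ (f - x) h ≤ ε / 8 := by
  set S : Set H := (fun x => (ε / 2) • x) ⁻¹' T with hS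
  have hScl : IsClosed S := hcl.preimage (continuous_const_smul _)
  have hSconv : Convex ℝ S := hconv.is_linear_preimage (IsLinearMap.isLinearMap_smul (ε / 2))
  have hSne : S.Nonempty := ⟨0, by simpa [hS] using h0⟩
  obtain ⟨x, hx, hxe⟩ := exists_norm_eq_iInf_of_complete_convex hSne hScl.isComplete hSconv f
  rw [norm_eq_iInf_iff_real_inner_le_zero hSconv hx] at hxe
  refine ⟨x, hx, fun h hh => ?_⟩
  have h1 := hxe ((2 / ε) • h) (by
    simp only [hS, Set.mem_preimage, smul_smul]
    have : ε / 2 * (2 / ε) = 1 := by field_simp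
    rw [this, one_smul]; exact hh)
  rw [inner_sub_right, inner_smul_right] at h1
  have h2 : inner ℝ (f - x) x ≤ 1 / 4 := by
    have h3 : 0 ≤ ‖f - (2 : ℝ) • x‖ ^ 2 := by positivity
    rw [norm_sub_sq_real, norm_smul, inner_smul_right] at h3
    rw [inner_sub_left, real_inner_self_eq_norm_sq]
    have h4 : ‖f‖ ^ 2 ≤ 1 := by have := norm_nonneg f; nlinarith
    simp only [Real.norm_ofNat] at h3
    nlinarith
  have h5 : 2 / ε * inner ℝ (f - x) h ≤ 1 / 4 := by linarith
  rw [div_mul_eq_mul_div, div_le_iff₀ hε] at h5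
  linarith

theorem ev_dual_step {H : Type*} [NormedAddCommGroup H] [InnerProductSpace ℝ H] [CompleteSpace H]
    (T : Set H) (hcl : IsClosed T) (hconv : Convex ℝ T) (h0 : (0 : H) ∈ T) (ε : ℝ) (hε : 0 < ε)
    (N1 N2 : Finset H) (h1 : ∀ x ∈ T, ∃ g ∈ N1, ‖x - g‖ ≤ ε / 8)
    (h2 : ∀ f : H, ‖f‖ ≤ 1 → ∃ g ∈ N2, ∀ h ∈ T, inner ℝ (f - g) h ≤ 2 * ε) :
    ∃ N : Finset H, N.card ≤ N1.card * N2.card ∧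
      ∀ f : H, ‖f‖ ≤ 1 → ∃ g ∈ N, ∀ h ∈ T, inner ℝ (f - g) h ≤ ε := by
  classical
  refine ⟨(N1 ×ˢ N2).image fun p => (2 / ε) • (p.1 + (ε / 8) • p.2), ?_, ?_⟩
  · exact Finset.card_image_le.trans (by rw [Finset.card_product])
  · intro f hf
    obtain ⟨x, hx, hxh⟩ := ev_proj T hcl hconv h0 ε hε f hf
    obtain ⟨g1, hg1, hd⟩ := h1 _ hx
    have hu : ‖(8 / ε) • ((ε / 2) • x - g1)‖ ≤ 1 := by
      rw [norm_smul, Real.norm_of_nonneg (by positivity)]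
      calc 8 / ε * ‖(ε / 2) • x - g1‖ ≤ 8 / ε * (ε / 8) := by gcongr
        _ = 1 := by field_simp
    obtain ⟨g2, hg2, hd2⟩ := h2 _ hu
    refine ⟨_, Finset.mem_image.2 ⟨(g1, g2), Finset.mem_product.2 ⟨hg1, hg2⟩, rfl⟩, fun h hh => ?_⟩
    have e : f - (2 / ε) • (g1 + (ε / 8) • g2) =
        (f - x) + (1 / 4 : ℝ) • ((8 / ε) • ((ε / 2) • x - g1) - g2) := by
      simp only [smul_sub, smul_add, smul_smul]
      have e1 : 1 / 4 * (8 / ε * (ε / 2)) = 1 := by field_simp; norm_num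
      have e2 : 1 / 4 * (8 / ε) = 2 / ε := by field_simp; norm_num
      have e3 : 2 / ε * (ε / 8) = 1 / 4 := by field_simp; norm_num
      rw [e1, e2, e3, one_smul]
      abel
    simp only
    rw [e, inner_add_left, inner_smul_left]
    have a1 := hxh h hh
    have a2 := hd2 h hh
    simp only [conj_trivial]
    linarith

theorem ev_dual {H : Type*} [NormedAddCommGroup H] [InnerProductSpace ℝ H] [CompleteSpace H]
    (T : Set H) (hcl : IsClosed T) (hconv : Convex ℝ T) (h0 : (0 : H) ∈ T) (R : ℝ)
    (hR : ∀ h ∈ T, ‖h‖ ≤ R) (c : ℝ) (hc : 0 ≤ c)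
    (hcov : ∀ δ : ℝ, 0 < δ → ∃ N : Finset H, (N.card : ℝ) ≤ Real.exp (c / δ ^ 2) ∧ ∀ x ∈ T, ∃ g ∈ N, ‖x - g‖ ≤ δ)
    (ε : ℝ) (hε : 0 < ε) :
    ∃ N : Finset H, (N.card : ℝ) ≤ Real.exp (100 * c / ε ^ 2) ∧
      ∀ f : H, ‖f‖ ≤ 1 → ∃ g ∈ N, ∀ h ∈ T, inner ℝ (f - g) h ≤ ε := by
  have key : ∀ m : ℕ, ∀ ε : ℝ, 0 < ε → R ≤ 2 ^ m * ε → ∃ N : Finset H, (N.card : ℝ) ≤ Real.exp (100 * c / ε ^ 2) ∧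
      ∀ f : H, ‖f‖ ≤ 1 → ∃ g ∈ N, ∀ h ∈ T, inner ℝ (f - g) h ≤ ε := by
    intro m
    induction m with
    | zero =>
      intro ε hε hRε
      refine ⟨{0}, ?_, fun f hf => ⟨0, by simp, fun h hh => ?_⟩⟩
      · simp only [Finset.card_singleton, Nat.cast_one]
        exact Real.one_le_exp (by positivity)
      · rw [sub_zero]
        have := hR h hh
        calc inner ℝ f h ≤ ‖f‖ * ‖h‖ := real_inner_le_norm _ _
          _ ≤ 1 * ‖h‖ := by gcongr
          _ ≤ ε := by linarith
    | succ m ih =>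
      intro ε hε hRε
      obtain ⟨N2, hc2, hN2⟩ := ih (2 * ε) (by positivity) (by rw [pow_succ] at hRε; linarith)
      obtain ⟨N1, hc1, hN1⟩ := hcov (ε / 8) (by positivity)
      obtain ⟨N, hcN, hN⟩ := ev_dual_step T hcl hconv h0 ε hε N1 N2 hN1 hN2
      refine ⟨N, ?_, hN⟩
      calc (N.card : ℝ) ≤ N1.card * N2.card := by exact_mod_cast hcN
        _ ≤ Real.exp (c / (ε / 8) ^ 2) * Real.exp (100 * c / (2 * ε) ^ 2) := by gcongr
        _ = Real.exp (89 * c / ε ^ 2) := by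
            rw [← Real.exp_add]; congr 1; field_simp; ring
        _ ≤ _ := by
            apply Real.exp_le_exp.2
            gcongr
            norm_num
  obtain ⟨m, hm⟩ := pow_unbounded_of_one_lt (R / ε) (by norm_num : (1 : ℝ) < 2)
  exact key m ε hε (by rw [div_lt_iff₀ hε] at hm; exact hm.le)

/-- The Hilbert space. -/
abbrev EvH : Type := Lp ℝ 2 (volume : Measure ℝ)

theorem ev_norm_sq (h : EvH) (u : ℝ → ℝ) (hu : h =ᵐ[volume] u) :
    ENNReal.ofReal (‖h‖ ^ 2) = ∫⁻ s, ENNReal.ofReal (u s ^ 2) := by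
  have h1 : ENNReal.ofReal ‖h‖ = eLpNorm h 2 volume := by
    rw [Lp.norm_def, ENNReal.ofReal_toReal (Lp.eLpNorm_ne_top h)]
  rw [ENNReal.ofReal_pow (norm_nonneg _), h1, eLpNorm_congr_ae hu,
    eLpNorm_eq_lintegral_rpow_enorm_toReal (by norm_num) (by norm_num), ← ENNReal.rpow_natCast, ← ENNReal.rpow_mul]
  simp only [ENNReal.toReal_ofNat, Nat.cast_ofNat, one_div, ne_eq, OfNat.ofNat_ne_zero, not_false_eq_true,
    inv_mul_cancel₀, ENNReal.rpow_one]
  refine lintegral_congr fun s => ?_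
  rw [← ev_en]
  norm_cast

theorem ev_norm_le (h : EvH) (u : ℝ → ℝ) (hu : h =ᵐ[volume] u) (a : ℝ) (ha : 0 ≤ a)
    (hb : ∫⁻ s, ENNReal.ofReal (u s ^ 2) ≤ ENNReal.ofReal (a ^ 2)) : ‖h‖ ≤ a := by
  rw [← ev_norm_sq h u hu, ENNReal.ofReal_le_ofReal_iff (by positivity)] at hb
  exact le_of_sq_le_sq hb ha

/-- The symmetric convex set of potentials. -/
def evTset : Set EvH := {h | ∃ μ ν : Measure ℝ, EvAdm μ ∧ EvAdm ν ∧ h =ᵐ[volume] evS evK μ ν}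

theorem evP_ae_integrable (μ : Measure ℝ) [IsFiniteMeasure μ] :
    ∀ᵐ s : ℝ, Integrable (fun t => evK (t - s)) μ := by
  have h := evP_prod_integrable evK_measurable evK_integrable μ
  exact h.prod_right_ae

theorem evAdm_zero : EvAdm 0 := ⟨inferInstance, by simp, by simp⟩

theorem evAdm_dirac (t : ℝ) (ht : t ∈ Set.Ico (0 : ℝ) 1) : EvAdm (Measure.dirac t) := by
  refine ⟨inferInstance, by simp, ?_⟩
  rw [Measure.dirac_apply' _ measurableSet_Ico.compl]
  simp [ht.1, ht.2]

theorem evAdm_conv (μ ν : Measure ℝ) (hμ : EvAdm μ) (hν : EvAdm ν) (a b : ℝ) (ha : 0 ≤ a) (hb : 0 ≤ b)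
    (hab : a + b = 1) : EvAdm (ENNReal.ofReal a • μ + ENNReal.ofReal b • ν) := by
  have := hμ.fin
  have := hν.fin
  refine ⟨?_, ?_, ?_⟩
  · have := Measure.smul_finite μ (ENNReal.ofReal_ne_top (r := a))
    have := Measure.smul_finite ν (ENNReal.ofReal_ne_top (r := b))
    infer_instance
  · simp only [Measure.coe_add, Measure.coe_smul, Pi.add_apply, Pi.smul_apply, smul_eq_mul]
    calc _ ≤ ENNReal.ofReal a * 1 + ENNReal.ofReal b * 1 := by
          gcongr
          · exact hμ.mass
          · exact hν.mass
      _ = 1 := by rw [mul_one, mul_one, ← ENNReal.ofReal_add ha hb, hab, ENNReal.ofReal_one]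
  · simp [hμ.supp, hν.supp]

theorem evP_conv (μ ν : Measure ℝ) [IsFiniteMeasure μ] [IsFiniteMeasure ν] (a b : ℝ) (ha : 0 ≤ a) (hb : 0 ≤ b) :
    ∀ᵐ s : ℝ, evP evK (ENNReal.ofReal a • μ + ENNReal.ofReal b • ν) s = a * evP evK μ s + b * evP evK ν s := by
  filter_upwards [evP_ae_integrable μ, evP_ae_integrable ν] with s h1 h2
  unfold evP
  rw [integral_add_measure (h1.smul_measure ENNReal.ofReal_ne_top) (h2.smul_measure ENNReal.ofReal_ne_top),
    integral_smul_measure, integral_smul_measure, ENNReal.toReal_ofReal ha, ENNReal.toReal_ofReal hb]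
  simp

theorem evTset_convex : Convex ℝ evTset := by
  rintro x ⟨μ, ν, hμ, hν, hx⟩ y ⟨μ', ν', hμ', hν', hy⟩ a b ha hb hab
  have := hμ.fin
  have := hν.fin
  have := hμ'.fin
  have := hν'.fin
  refine ⟨_, _, evAdm_conv μ μ' hμ hμ' a b ha hb hab, evAdm_conv ν ν' hν hν' a b ha hb hab, ?_⟩
  filter_upwards [hx, hy, Lp.coeFn_add (a • x) (b • y), Lp.coeFn_smul a x, Lp.coeFn_smul b y,
    evP_conv μ μ' a b ha hb, evP_conv ν ν' a b ha hb] with s h1 h2 h3 h4 h5 h6 h7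
  rw [h3, Pi.add_apply, h4, h5, Pi.smul_apply, Pi.smul_apply, h1, h2]
  unfold evS
  rw [h6, h7]
  simp only [smul_eq_mul]
  ring

theorem evTset_zero : (0 : EvH) ∈ evTset := by
  refine ⟨0, 0, evAdm_zero, evAdm_zero, ?_⟩
  filter_upwards [Lp.coeFn_zero ℝ 2 (volume : Measure ℝ)] with s h
  rw [h]; simp [evS]

theorem ev_sq_two (u v : ℝ → ℝ) (hu : Measurable u) (a : ℝ) (ha : 0 ≤ a)
    (h1 : ∫⁻ s, ENNReal.ofReal (u s ^ 2) ≤ ENNReal.ofReal a) (h2 : ∫⁻ s, ENNReal.ofReal (v s ^ 2) ≤ ENNReal.ofReal a) :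
    ∫⁻ s, ENNReal.ofReal ((u s - v s) ^ 2) ≤ ENNReal.ofReal (4 * a) := by
  have hm : Measurable fun s => ENNReal.ofReal (2 * u s ^ 2) :=
    ENNReal.measurable_ofReal.comp ((hu.pow_const 2).const_mul 2)
  calc _ ≤ ∫⁻ s, (ENNReal.ofReal (2 * u s ^ 2) + ENNReal.ofReal (2 * v s ^ 2)) := by
        apply lintegral_mono
        intro s
        simp only
        rw [← ENNReal.ofReal_add (by positivity) (by positivity)]
        apply ENNReal.ofReal_le_ofReal
        nlinarith [sq_nonneg (u s + v s)]
    _ = 2 * (∫⁻ s, ENNReal.ofReal (u s ^ 2)) + 2 * ∫⁻ s, ENNReal.ofReal (v s ^ 2) := by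
        rw [lintegral_add_left hm]
        simp_rw [ENNReal.ofReal_mul (zero_le_two (α := ℝ))]
        rw [lintegral_const_mul' _ _ ENNReal.ofReal_ne_top, lintegral_const_mul' _ _ ENNReal.ofReal_ne_top]
        simp
    _ ≤ 2 * ENNReal.ofReal a + 2 * ENNReal.ofReal a := by gcongr
    _ = _ := by
        rw [← add_mul, ENNReal.ofReal_mul (by norm_num)]
        norm_num

theorem evTset_bdd : ∃ R : ℝ, 0 < R ∧ ∀ h ∈ evTset, ‖h‖ ≤ R := by
  set B := (∫⁻ u, ‖evK u‖ₑ ^ 2).toReal with hB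
  have hB0 : 0 ≤ B := ENNReal.toReal_nonneg
  have hBe : ∫⁻ u, ‖evK u‖ₑ ^ 2 = ENNReal.ofReal B := (ENNReal.ofReal_toReal (ev_sq_fin evK_memLp).ne).symm
  refine ⟨√(4 * B) + 1, by positivity, ?_⟩
  rintro h ⟨μ, ν, hμ, hν, hh⟩
  have hP : ∀ μ, EvAdm μ → ∫⁻ s, ENNReal.ofReal (evP evK μ s ^ 2) ≤ ENNReal.ofReal B := by
    intro μ hμ
    have := hμ.fin
    simp_rw [← ev_en]
    refine (evP_sq evK_measurable μ).trans ?_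
    rw [hBe]
    calc _ ≤ 1 ^ 2 * ENNReal.ofReal B := by
          gcongr; exact hμ.mass
      _ = _ := by simp
  have := hμ.fin
  have h1 := ev_sq_two _ _ (evP_measurable evK_measurable μ) B hB0 (hP μ hμ) (hP ν hν)
  have h2 : ‖h‖ ≤ √(4 * B) := by
    apply ev_norm_le h _ hh _ (Real.sqrt_nonneg _)
    rw [Real.sq_sqrt (by positivity)]
    exact h1
  linarith

theorem evTset_cover_n (n : ℕ) (hn : 0 < n) : ∃ N : Finset EvH, (N.card : ℝ) ≤ Real.exp (24 * n) ∧
    ∀ x ∈ evTset, ∃ g ∈ N, ‖x - g‖ ≤ √(48000000 / n) := by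
  classical
  obtain ⟨S, hS, hmem⟩ := evFp_count n hn
  let P : EvTree × EvTree → EvH → Prop := fun p h => ∃ μ ν : Measure ℝ, EvAdm μ ∧ EvAdm ν ∧
    h =ᵐ[volume] evS evK μ ν ∧ evFp n μ = p.1 ∧ evFp n ν = p.2
  let rep : EvTree × EvTree → EvH := fun p => if hp : ∃ h, P p h then hp.choose else 0
  refine ⟨(S ×ˢ S).image rep, ?_, ?_⟩
  · calc (((S ×ˢ S).image rep).card : ℝ) ≤ ((S ×ˢ S).card : ℝ) := by exact_mod_cast Finset.card_image_le
      _ = S.card * S.card := by rw [Finset.card_product]; push_cast; ring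
      _ ≤ Real.exp (12 * n) * Real.exp (12 * n) := by gcongr
      _ = _ := by rw [← Real.exp_add]; congr 1; ring
  · rintro x ⟨μ, ν, hμ, hν, hx⟩
    have hp : ∃ h, P (evFp n μ, evFp n ν) h := ⟨x, μ, ν, hμ, hν, hx, rfl, rfl⟩
    have hrep : rep (evFp n μ, evFp n ν) = hp.choose := dif_pos hp
    obtain ⟨μ', ν', hμ', hν', hx', e1, e2⟩ := hp.choose_spec
    refine ⟨rep (evFp n μ, evFp n ν), Finset.mem_image.2 ⟨_, Finset.mem_product.2 ⟨hmem μ hμ, hmem ν hν⟩, rfl⟩, ?_⟩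
    rw [hrep]
    generalize hp.choose = y at hx'
    have := hμ.fin
    have := hν.fin
    have := hμ'.fin
    have := hν'.fin
    have c1 := evFp_close n hn μ μ' hμ hμ' e1.symm
    have c2 := evFp_close n hn ν ν' hν hν' e2.symm
    have c3 := ev_sq_two _ _ ((evP_measurable evK_measurable μ).sub (evP_measurable evK_measurable μ'))
      (12000000 / n) (by positivity) c1 c2
    apply ev_norm_le (x - y) (fun s => evS evK μ μ' s - evS evK ν ν' s)
    · filter_upwards [hx, hx', Lp.coeFn_sub x y] with s h1 h2 h3
      rw [h3, Pi.sub_apply, h1, h2]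
      unfold evS; ring
    · positivity
    · rw [Real.sq_sqrt (by positivity)]
      refine c3.trans (le_of_eq ?_)
      congr 1; ring

theorem evTset_cover : ∃ c : ℝ, 0 < c ∧ ∀ δ : ℝ, 0 < δ → ∃ N : Finset EvH,
    (N.card : ℝ) ≤ Real.exp (c / δ ^ 2) ∧ ∀ x ∈ evTset, ∃ g ∈ N, ‖x - g‖ ≤ δ := by
  obtain ⟨R, hR0, hR⟩ := evTset_bdd
  refine ⟨24 * (48000000 + R ^ 2), by positivity, fun δ hδ => ?_⟩
  rcases le_or_gt R δ with h | h
  · refine ⟨{0}, ?_, fun x hx => ⟨0, by simp, ?_⟩⟩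
    · simp only [Finset.card_singleton, Nat.cast_one]
      exact Real.one_le_exp (by positivity)
    · rw [sub_zero]; exact (hR x hx).trans h
  · set n := ⌈48000000 / δ ^ 2⌉₊ with hn
    have hn0 : 0 < n := Nat.ceil_pos.2 (by positivity)
    have hn1 : 48000000 / δ ^ 2 ≤ n := Nat.le_ceil _
    have hn2 : (n : ℝ) < 48000000 / δ ^ 2 + 1 := Nat.ceil_lt_add_one (by positivity)
    obtain ⟨N, h1, h2⟩ := evTset_cover_n n hn0
    refine ⟨N, h1.trans ?_, fun x hx => ?_⟩
    · apply Real.exp_le_exp.2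
      have : 1 ≤ R ^ 2 / δ ^ 2 := by rw [one_le_div (by positivity)]; gcongr
      have e : 24 * (48000000 + R ^ 2) / δ ^ 2 = 24 * (48000000 / δ ^ 2 + R ^ 2 / δ ^ 2) := by ring
      rw [e]; linarith
    · obtain ⟨g, hg, hgd⟩ := h2 x hx
      refine ⟨g, hg, hgd.trans ?_⟩
      apply Real.sqrt_le_iff.2
      refine ⟨hδ.le, ?_⟩
      have : (0 : ℝ) < n := by exact_mod_cast hn0
      rw [div_le_iff₀ (by positivity)] at hn1 ⊢
      linarith

theorem ev_both : ∃ c : ℝ, 0 < c ∧ ∀ ε : ℝ, 0 < ε →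
    (∃ N : Finset EvH, (N.card : ℝ) ≤ Real.exp (c / ε ^ 2) ∧ ∀ x ∈ evTset, ∃ g ∈ N, ‖x - g‖ ≤ ε) ∧
    (∃ N : Finset EvH, (N.card : ℝ) ≤ Real.exp (c / ε ^ 2) ∧
      ∀ f : EvH, ‖f‖ ≤ 1 → ∃ g ∈ N, ∀ h ∈ evTset, inner ℝ (f - g) h ≤ ε) := by
  obtain ⟨c, hc, hcov⟩ := evTset_cover
  obtain ⟨R, hR0, hR⟩ := evTset_bdd
  refine ⟨100 * c, by positivity, fun ε hε => ⟨?_, ?_⟩⟩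
  · obtain ⟨N, h1, h2⟩ := hcov ε hε
    refine ⟨N, h1.trans (Real.exp_le_exp.2 ?_), h2⟩
    gcongr; linarith
  · have hcovcl : ∀ δ : ℝ, 0 < δ → ∃ N : Finset EvH,
        (N.card : ℝ) ≤ Real.exp (c / δ ^ 2) ∧ ∀ x ∈ closure evTset, ∃ g ∈ N, ‖x - g‖ ≤ δ := by
      intro δ hδ
      obtain ⟨N, h1, h2⟩ := hcov δ hδ
      refine ⟨N, h1, fun x hx => ?_⟩
      have hcl : IsClosed (⋃ g ∈ N, Metric.closedBall g δ) :=
        N.finite_toSet.isClosed_biUnion fun g _ => Metric.isClosed_closedBall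
      have hsub : evTset ⊆ ⋃ g ∈ N, Metric.closedBall g δ := by
        intro y hy
        obtain ⟨g, hg, hd⟩ := h2 y hy
        exact Set.mem_biUnion hg (by rw [Metric.mem_closedBall, dist_eq_norm]; exact hd)
      have := closure_minimal hsub hcl hx
      simp only [Set.mem_iUnion, Metric.mem_closedBall, dist_eq_norm] at this
      obtain ⟨g, hg, hd⟩ := this
      exact ⟨g, hg, hd⟩
    have hRcl : ∀ h ∈ closure evTset, ‖h‖ ≤ R := by
      intro h hh
      have hsub : evTset ⊆ Metric.closedBall 0 R := fun y hy => by simpa using hR y hy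
      have := closure_minimal hsub Metric.isClosed_closedBall hh
      simpa using this
    obtain ⟨N, h1, h2⟩ := ev_dual (closure evTset) isClosed_closure evTset_convex.closure
      (subset_closure evTset_zero) R hRcl c hc.le hcovcl ε hε
    refine ⟨N, h1, fun f hf => ?_⟩
    obtain ⟨g, hg, hgd⟩ := h2 f hf
    exact ⟨g, hg, fun h hh => hgd h (subset_closure hh)⟩

theorem ev_card (m n : ℕ) (hn : 0 < n) (h : (m : ℝ) ≤ Real.exp (n / 4)) : m ≤ 2 ^ (n - 1) := by
  have he : Real.exp (1 / 2) < 2 := by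
    have h1 : Real.exp (1 / 2) ^ 2 = Real.exp 1 := by rw [← Real.exp_nat_mul]; norm_num
    have h2 := Real.exp_one_lt_d9
    have h3 := Real.exp_pos (1 / 2)
    nlinarith
  rcases Nat.lt_or_ge 1 n with h1 | h1
  · obtain ⟨k, rfl⟩ : ∃ k, n = k + 1 := ⟨n - 1, by omega⟩
    have hk : (1 : ℝ) ≤ k := by exact_mod_cast (by omega : 1 ≤ k)
    have : (m : ℝ) ≤ 2 ^ k := by
      refine h.trans ?_
      calc Real.exp (((k + 1 : ℕ) : ℝ) / 4) ≤ Real.exp (k * (1 / 2)) := by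
            apply Real.exp_le_exp.2; push_cast; linarith
        _ = Real.exp (1 / 2) ^ k := by rw [Real.exp_nat_mul]
        _ ≤ 2 ^ k := by gcongr
    have h2 : m ≤ 2 ^ k := by exact_mod_cast this
    simpa using h2
  · have : n = 1 := by omega
    subst this
    have h2 : (m : ℝ) < 2 := by
      refine h.trans_lt (lt_of_le_of_lt (Real.exp_le_exp.2 ?_) he)
      norm_num
    have h3 : m < 2 := by exact_mod_cast h2
    simp; omega

theorem ev_ker {r t s : ℝ} (hr : r < Real.exp (-2)) (ht : t ∈ Set.Icc 0 r) (hs : 0 < s) :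
    Ker t s = evK (t - s) := by
  have h1 := ht.2
  unfold Ker evK
  by_cases h : s < t
  · rw [if_pos h, if_pos ⟨by linarith, by linarith⟩]
  · rw [if_neg h, if_neg]
    rintro ⟨h2, -⟩
    exact h (by linarith)

theorem ev_Icc_sub {r : ℝ} (hr : r < Real.exp (-2)) : Set.Icc 0 r ⊆ Set.Ico (0 : ℝ) 1 := by
  intro t ht
  refine ⟨ht.1, ht.2.trans_lt (hr.trans ?_)⟩
  rw [Real.exp_lt_one_iff]
  norm_num

noncomputable def evkt (t : ℝ) : EvH := (evP_memLp evK_measurable evK_memLp (Measure.dirac t)).toLp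

theorem evkt_coe (t : ℝ) : evkt t =ᵐ[volume] fun s => evK (t - s) := by
  refine (MemLp.coeFn_toLp _).trans (Filter.Eventually.of_forall fun s => ?_)
  simp [evP]

theorem evkt_mem {t : ℝ} (ht : t ∈ Set.Ico (0 : ℝ) 1) : evkt t ∈ evTset := by
  refine ⟨Measure.dirac t, 0, evAdm_dirac t ht, evAdm_zero, ?_⟩
  filter_upwards [evkt_coe t] with s hs
  rw [hs]
  simp [evS, evP]

theorem evkt_neg_mem {t : ℝ} (ht : t ∈ Set.Ico (0 : ℝ) 1) : -evkt t ∈ evTset := by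
  refine ⟨0, Measure.dirac t, evAdm_zero, evAdm_dirac t ht, ?_⟩
  filter_upwards [evkt_coe t, Lp.coeFn_neg (evkt t)] with s hs h2
  rw [h2, Pi.neg_apply, hs]
  simp [evS, evP]

theorem ev_V_part (r ε : ℝ) (hr : r < Real.exp (-2)) (m : ℕ) (N : Finset EvH) (hN : N.card ≤ m)
    (h : ∀ f : EvH, ‖f‖ ≤ 1 → ∃ g ∈ N, ∀ h ∈ evTset, inner ℝ (f - g) h ≤ ε) :
    ∃ N : Finset (ℝ → ℝ), N.card ≤ m ∧
          ∀ f : ℝ → ℝ, Measurable f →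
            (∫⁻ s in Set.Ioc (0 : ℝ) r, ENNReal.ofReal (f s ^ 2)) ≤ 1 →
            ∃ g ∈ N, ∀ t ∈ Set.Icc (0 : ℝ) r, |Vint f t - g t| ≤ ε := by
  classical
  refine ⟨N.image (fun g t => inner ℝ g (evkt t)), Finset.card_image_le.trans hN, fun f hf hf1 => ?_⟩
  set u : ℝ → ℝ := (Set.Ioc 0 r).indicator f with hu
  have hum : Measurable u := hf.indicator measurableSet_Ioc
  have hsq : ∫⁻ s, ENNReal.ofReal (u s ^ 2) ≤ 1 := by
    rw [← lintegral_indicator measurableSet_Ioc] at hf1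
    refine le_trans (lintegral_mono fun s => ?_) hf1
    by_cases hs : s ∈ Set.Ioc 0 r <;> simp [hu, hs]
  have hL : MemLp u 2 := by
    refine ⟨hum.aestronglyMeasurable, ?_⟩
    rw [eLpNorm_lt_top_iff_lintegral_rpow_enorm_lt_top (by norm_num) (by norm_num)]
    refine lt_of_le_of_lt (le_trans (le_of_eq (lintegral_congr fun s => ?_)) hsq) ENNReal.one_lt_top
    rw [← ofReal_norm, ENNReal.ofReal_rpow_of_nonneg (norm_nonneg _) (by norm_num)]
    simp
  set F : EvH := hL.toLp with hF
  have hFu : F =ᵐ[volume] u := hL.coeFn_toLp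
  have hF1 : ‖F‖ ≤ 1 := ev_norm_le F u hFu 1 zero_le_one (by simpa using hsq)
  obtain ⟨g, hg, hgh⟩ := h F hF1
  refine ⟨_, Finset.mem_image_of_mem _ hg, fun t ht => ?_⟩
  have htI := ev_Icc_sub hr ht
  have key : Vint f t = inner ℝ F (evkt t) := by
    rw [L2.inner_def, Vint, ← integral_indicator measurableSet_Ioc]
    refine integral_congr_ae ?_
    filter_upwards [hFu, evkt_coe t] with s h1 h2
    rw [h1, h2]
    simp only [RCLike.inner_apply, conj_trivial]
    by_cases hs : s ∈ Set.Ioc 0 t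
    · have hs' : s ∈ Set.Ioc 0 r := ⟨hs.1, hs.2.trans ht.2⟩
      rw [Set.indicator_of_mem hs, hu, Set.indicator_of_mem hs', ev_ker hr ht hs.1, mul_comm]
    · rw [Set.indicator_of_notMem hs]
      by_cases hs0 : 0 < s
      · have : t < s := by
          by_contra hh
          exact hs ⟨hs0, not_lt.1 hh⟩
        rw [evK_of_nonpos (by linarith), zero_mul]
      · rw [hu, Set.indicator_of_notMem (fun hh => hs0 hh.1), mul_zero]
  have h1 := hgh _ (evkt_mem htI)
  have h2 := hgh _ (evkt_neg_mem htI)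
  rw [inner_neg_right] at h2
  rw [inner_sub_left] at h1 h2
  simp only [key]
  rw [abs_le]
  constructor <;> linarith

theorem ev_Vs_part (r ε : ℝ) (hr : r < Real.exp (-2)) (m : ℕ) (N : Finset EvH) (hN : N.card ≤ m)
    (h : ∀ x ∈ evTset, ∃ g ∈ N, ‖x - g‖ ≤ ε) :
    ∃ N : Finset (ℝ → ℝ), N.card ≤ m ∧
          ∀ μ : MeasureTheory.SignedMeasure ℝ,
            μ.totalVariation (Set.Icc (0 : ℝ) r)ᶜ = 0 →
            μ.totalVariation Set.univ ≤ 1 →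
            ∃ g ∈ N,
              (∫⁻ s in Set.Ioc (0 : ℝ) r, ENNReal.ofReal ((VstarInt μ s - g s) ^ 2)) ≤
                ENNReal.ofReal (ε ^ 2) := by
  classical
  refine ⟨N.image (fun g : EvH => (g : ℝ → ℝ)), Finset.card_image_le.trans hN, fun μ h0 h1 => ?_⟩
  rw [SignedMeasure.totalVariation, Measure.add_apply] at h0 h1
  set p := μ.toJordanDecomposition.posPart with hp
  set q := μ.toJordanDecomposition.negPart with hq
  have hp0 : p (Set.Icc 0 r)ᶜ = 0 := (add_eq_zero.1 h0).1
  have hq0 : q (Set.Icc 0 r)ᶜ = 0 := (add_eq_zero.1 h0).2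
  have hsub := Set.compl_subset_compl.2 (ev_Icc_sub hr)
  have hpA : EvAdm p := ⟨inferInstance, le_self_add.trans h1, measure_mono_null hsub hp0⟩
  have hqA : EvAdm q := ⟨inferInstance, le_add_self.trans h1, measure_mono_null hsub hq0⟩
  have hL : MemLp (evS evK p q) 2 :=
    (evP_memLp evK_measurable evK_memLp p).sub (evP_memLp evK_measurable evK_memLp q)
  set x : EvH := hL.toLp with hx
  have hxe : x =ᵐ[volume] evS evK p q := hL.coeFn_toLp
  obtain ⟨g, hg, hxg⟩ := h x ⟨p, q, hpA, hqA, hxe⟩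
  refine ⟨_, Finset.mem_image_of_mem _ hg, ?_⟩
  have hI : ∀ (π : Measure ℝ), π (Set.Icc 0 r)ᶜ = 0 → ∀ s, 0 < s → ∫ t, Ker t s ∂π = evP evK π s := by
    intro π hπ s hs
    refine integral_congr_ae ?_
    have : ∀ᵐ t ∂π, t ∈ Set.Icc 0 r := hπ
    filter_upwards [this] with t ht
    exact ev_ker hr ht hs
  have e1 : ∫⁻ s in Set.Ioc (0 : ℝ) r, ENNReal.ofReal ((VstarInt μ s - g s) ^ 2)
      = ∫⁻ s in Set.Ioc (0 : ℝ) r, ENNReal.ofReal ((evS evK p q s - g s) ^ 2) := by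
    refine setLIntegral_congr_fun measurableSet_Ioc fun s hs => ?_
    simp only [VstarInt, evS]
    rw [hI _ hp0 s hs.1, hI _ hq0 s hs.1]
  have e2 : (x - g : EvH) =ᵐ[volume] fun s => evS evK p q s - g s := by
    filter_upwards [Lp.coeFn_sub x g, hxe] with s h1 h2
    rw [h1, Pi.sub_apply, h2]
  rw [e1]
  refine (setLIntegral_le_lintegral _ _).trans ?_
  rw [← ev_norm_sq _ _ e2]
  exact ENNReal.ofReal_le_ofReal (pow_le_pow_left₀ (norm_nonneg _) hxg 2)

end

/-- Critical Volterra operator: `max{e_n(V), e_n(V*)} ≤ C n^{-1/2}` for a numerical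
constant `C`. For every `ε` exceeding `C n^{-1/2}`: the image under `V` of the unit
ball of `L₂[0,r]` can be covered by `2^{n-1}` balls of radius `ε` in the supremum
norm on `[0,r]`, and the image under `V*` of the unit ball of `M[0,r]` (signed
measures of total variation at most `1` supported on `[0,r]`) can be covered by
`2^{n-1}` balls of radius `ε` in `L₂[0,r]`. -/
theorem entropy_critical_volterra :
    ∃ C : ℝ, 0 < C ∧ ∀ r : ℝ, 0 < r → r < Real.exp (-2) → ∀ n : ℕ, 0 < n →
      ∀ ε : ℝ, C * (n : ℝ) ^ (-(1 : ℝ) / 2) < ε →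
        (∃ N : Finset (ℝ → ℝ), N.card ≤ 2 ^ (n - 1) ∧
          ∀ f : ℝ → ℝ, Measurable f →
            (∫⁻ s in Set.Ioc (0 : ℝ) r, ENNReal.ofReal (f s ^ 2)) ≤ 1 →
            ∃ g ∈ N, ∀ t ∈ Set.Icc (0 : ℝ) r, |Vint f t - g t| ≤ ε) ∧
        (∃ N : Finset (ℝ → ℝ), N.card ≤ 2 ^ (n - 1) ∧
          ∀ μ : MeasureTheory.SignedMeasure ℝ,
            μ.totalVariation (Set.Icc (0 : ℝ) r)ᶜ = 0 →
            μ.totalVariation Set.univ ≤ 1 →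
            ∃ g ∈ N,
              (∫⁻ s in Set.Ioc (0 : ℝ) r, ENNReal.ofReal ((VstarInt μ s - g s) ^ 2)) ≤
                ENNReal.ofReal (ε ^ 2)) := by
  obtain ⟨c, hc, hb⟩ := ev_both
  refine ⟨2 * √c, by positivity, fun r _ hr n hn ε hε => ?_⟩
  have hn' : (0 : ℝ) < n := by exact_mod_cast hn
  have hpos : 0 < 2 * √c * (n : ℝ) ^ (-(1 : ℝ) / 2) := by positivity
  have hε0 : 0 < ε := hpos.trans hε
  have hsq : 4 * c / n ≤ ε ^ 2 := by
    have h1 := pow_le_pow_left₀ hpos.le hε.le 2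
    have h2 : ((n : ℝ) ^ (-(1 : ℝ) / 2)) ^ 2 = (n : ℝ)⁻¹ := by
      rw [← Real.rpow_natCast, ← Real.rpow_mul hn'.le]
      norm_num [Real.rpow_neg_one]
    rw [mul_pow, mul_pow, Real.sq_sqrt hc.le, h2] at h1
    rw [div_eq_mul_inv]
    linarith
  have hexp : Real.exp (c / ε ^ 2) ≤ Real.exp (n / 4) := by
    refine Real.exp_le_exp.2 ?_
    rw [div_le_iff₀ hn'] at hsq
    rw [div_le_iff₀ (by positivity)]
    linarith
  obtain ⟨⟨N1, hN1, h1⟩, N2, hN2, h2⟩ := hb ε hε0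
  exact ⟨ev_V_part r ε hr _ N2 (ev_card _ _ hn (hN2.trans hexp)) h2,
    ev_Vs_part r ε hr _ N1 (ev_card _ _ hn (hN1.trans hexp)) h1⟩
end

section
/- Let r < e^{-2} and K_t(s) = (t−s)₊^{-1/2}|ln(t−s)₊|^{-1}. Fix a positive integer n and a signed measure μ on [0,r] with total variation ‖μ‖₁ ≤ 1. Let 𝕀ⁿ_μ be the n-essential partition of [0,r]: starting from [0,r], a binary interval I = (i·r·2^{-l}, (i+1)·r·2^{-l}] of level l is divided into two halves while ‖μ‖₁(I) ≥ l/n, and is placed into the partition once ‖μ‖₁(I) < l/n. Define V*_{𝕀} μ = Σ_{I∈𝕀} μ(I) K_{t_I} ∈ L₂[0,r], where t_I is the left endpoint of I, and let Δ_{𝕀} = V* − V*_{𝕀} where (V*μ)(s) = ∫₀ʳ K_t(s) μ(dt). Then there is a numerical constant C such that ‖Δ_{𝕀ⁿ_μ} μ‖₂ ≤ C · n^{-1/2}. -/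
open scoped ENNReal
open MeasureTheory

/-- The binary interval of level `l` and index `i` in `[0,r]`:
`(i·r·2^{-l}, (i+1)·r·2^{-l}]`. -/
def binInt (r : ℝ) (l i : ℕ) : Set ℝ :=
  Set.Ioc ((i : ℝ) * r / 2 ^ l) (((i : ℝ) + 1) * r / 2 ^ l)

/-- The left endpoint `t_I` of the binary interval of level `l`, index `i`. -/
noncomputable def leftPt (r : ℝ) (l i : ℕ) : ℝ := (i : ℝ) * r / 2 ^ l

/-- The dividing condition for a binary interval of level `l`:
`‖μ‖₁(I) ≥ l/n`, with `‖μ‖₁(I)` the total variation of `μ` on `I`. -/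
def DivCond (μ : MeasureTheory.SignedMeasure ℝ) (r : ℝ) (n l i : ℕ) : Prop :=
  (l : ℝ) / (n : ℝ) ≤ (μ.totalVariation (binInt r l i)).toReal

/-- `Divided μ r n l i` : in the construction of the `n`-essential partition the
binary interval of level `l`, index `i` was divided, i.e. it was reached (its
parent was divided; the root `(0,0)` is always reached) and it satisfies the
dividing condition `‖μ‖₁(I) ≥ l/n`. -/
def Divided (μ : MeasureTheory.SignedMeasure ℝ) (r : ℝ) (n : ℕ) : ℕ → ℕ → Prop
  | 0, i => i = 0
  | l + 1, i => Divided μ r n l (i / 2) ∧ DivCond μ r n (l + 1) i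

/-- Membership of the binary interval of level `l`, index `i` in the `n`-essential
partition `𝕀ⁿ_μ`: its parent was divided but the interval itself fails the
dividing condition (so it was placed into the partition). -/
def InPartition (μ : MeasureTheory.SignedMeasure ℝ) (r : ℝ) (n : ℕ) : ℕ → ℕ → Prop
  | 0, _ => False
  | l + 1, i => Divided μ r n l (i / 2) ∧ ¬ DivCond μ r n (l + 1) i

/-- The finite rank operator `V*_𝕀` generated by the `n`-essential partition:
`V*_𝕀 μ = Σ_{I ∈ 𝕀ⁿ_μ} μ(I) K_{t_I}`. -/
noncomputable def VstarPart (μ : MeasureTheory.SignedMeasure ℝ) (r : ℝ) (n : ℕ) (s : ℝ) : ℝ :=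
  ∑' p : {p : ℕ × ℕ // InPartition μ r n p.1 p.2},
    μ (binInt r p.1.1 p.1.2) * Ker (leftPt r p.1.1 p.1.2) s

noncomputable def kk (x : ℝ) : ℝ := x ^ (-(1 : ℝ) / 2) * |Real.log x|⁻¹

lemma Ker_of_lt {t s : ℝ} (h : s < t) : Ker t s = kk (t - s) := by simp [Ker, kk, h]
lemma Ker_of_le {t s : ℝ} (h : t ≤ s) : Ker t s = 0 := by simp [Ker, not_lt.2 h]

lemma kk_nonneg {x : ℝ} (hx : 0 ≤ x) : 0 ≤ kk x := by unfold kk; positivity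

lemma Ker_nonneg (t s : ℝ) : 0 ≤ Ker t s := by
  rcases lt_or_ge s t with h | h
  · rw [Ker_of_lt h]; exact kk_nonneg (by linarith)
  · rw [Ker_of_le h]

lemma measurable_Ker : Measurable (fun p : ℝ × ℝ => Ker p.1 p.2) := by
  unfold Ker
  refine Measurable.ite (measurableSet_lt measurable_snd measurable_fst) ?_ measurable_const
  have h1 : Measurable (fun p : ℝ × ℝ => p.1 - p.2) := measurable_fst.sub measurable_snd
  have h2 : Measurable (fun p : ℝ × ℝ => |Real.log (p.1 - p.2)|) :=
    (Real.measurable_log.comp h1).abs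
  exact (h1.pow_const _).mul h2.inv

lemma measurable_Ker_left (s : ℝ) : Measurable (fun t => Ker t s) :=
  measurable_Ker.comp (measurable_id.prodMk measurable_const)
lemma measurable_Ker_right (t : ℝ) : Measurable (fun s => Ker t s) :=
  measurable_Ker.comp (measurable_const.prodMk measurable_id)

lemma kk_anti {x y : ℝ} (hx : 0 < x) (hxy : x ≤ y) (hy : y < Real.exp (-2)) : kk y ≤ kk x := by
  have hy0 : 0 < y := hx.trans_le hxy
  have key := Real.log_div_sqrt_antitoneOn (a := y⁻¹) (b := x⁻¹)
    (by
      rw [Set.mem_Ici]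
      rw [Real.exp_neg] at hy
      exact (le_inv_comm₀ (Real.exp_pos _) hy0).2 hy.le)
    (by
      rw [Set.mem_Ici]
      rw [Real.exp_neg] at hy
      exact (le_inv_comm₀ (Real.exp_pos _) hx).2 (hxy.trans hy.le))
    (inv_anti₀ hx hxy)
  have hl : ∀ z, 0 < z → z < Real.exp (-2) → Real.log z < -2 := fun z hz h =>
    (Real.log_lt_iff_lt_exp hz).2 h
  have hly := hl y hy0 hy
  have hlx := hl x hx (hxy.trans_lt hy)
  have e : ∀ z, 0 < z → Real.log z < -2 →
      kk z = (Real.log z⁻¹ / Real.sqrt z⁻¹)⁻¹ := by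
    intro z hz h
    unfold kk
    rw [Real.log_inv, Real.sqrt_inv, abs_of_neg (by linarith), Real.sqrt_eq_rpow,
      show (-(1:ℝ)/2) = -(1/2) by norm_num, Real.rpow_neg hz.le]
    rw [div_inv_eq_mul, mul_inv, mul_comm]
  simp only at key
  rw [e y hy0 hly, e x hx hlx]
  apply inv_anti₀ _ key
  rw [Real.log_inv]
  have : 0 < Real.sqrt x⁻¹ := Real.sqrt_pos.2 (inv_pos.2 hx)
  apply div_pos _ this
  linarith

lemma kk_sq {x : ℝ} (hx : 0 < x) : kk x ^ 2 = x⁻¹ / Real.log x ^ 2 := by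
  unfold kk
  rw [mul_pow, inv_pow, sq_abs, ← Real.rpow_natCast, ← Real.rpow_mul hx.le]
  norm_num [Real.rpow_neg_one]
  rfl

lemma lint_kk_sq {h : ℝ} (h0 : 0 < h) (h1 : h < Real.exp (-2)) :
    ∫⁻ x in Set.Ioc 0 h, ENNReal.ofReal (kk x ^ 2) = ENNReal.ofReal (1 / (-Real.log h)) := by
  have hlt1 : h < 1 := h1.trans (by rw [Real.exp_lt_one_iff]; norm_num)
  have hder : ∀ x ∈ Set.Ioo 0 h,
      HasDerivAt (fun x => -(Real.log x)⁻¹) (x⁻¹ / Real.log x ^ 2) x := by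
    intro x hx
    have hl : Real.log x ≠ 0 := (Real.log_neg hx.1 (hx.2.trans hlt1)).ne
    have := ((Real.hasDerivAt_log hx.1.ne').inv hl).neg
    exact this.congr_deriv (by rw [neg_div, neg_neg])
  have hcont : ContinuousOn (fun x => -(Real.log x)⁻¹) (Set.Icc 0 h) := by
    intro x hx
    rcases eq_or_lt_of_le hx.1 with h2 | h2
    · subst h2
      have h3 : Filter.Tendsto (fun x => -(Real.log x)⁻¹) (nhdsWithin 0 (Set.Ioi 0)) (nhds 0) := by
        have := (tendsto_inv_atBot_zero.comp Real.tendsto_log_nhdsGT_zero).neg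
        simpa using this
      have h4 : ContinuousWithinAt (fun x => -(Real.log x)⁻¹) (Set.Ioi 0) (0:ℝ) := by
        unfold ContinuousWithinAt
        simpa using h3
      have h5 := continuousWithinAt_insert_self.2 h4
      apply h5.mono
      intro y hy
      rcases eq_or_lt_of_le hy.1 with h6 | h6
      · left; exact h6.symm
      · right; exact h6
    · have hl : Real.log x ≠ 0 := (Real.log_neg h2 (hx.2.trans_lt hlt1)).ne
      exact ((Real.continuousAt_log h2.ne').inv₀ hl).neg.continuousWithinAt
  have hpos : ∀ x ∈ Set.Ioo 0 h, 0 ≤ x⁻¹ / Real.log x ^ 2 := by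
    intro x hx
    have := hx.1
    positivity
  have hInt := intervalIntegral.integrableOn_deriv_of_nonneg hcont hder hpos
  have hval := intervalIntegral.integral_eq_sub_of_hasDerivAt_of_le h0.le hcont hder
    ((intervalIntegrable_iff_integrableOn_Ioc_of_le h0.le).2 hInt)
  rw [intervalIntegral.integral_of_le h0.le] at hval
  rw [setLIntegral_congr_fun measurableSet_Ioc
    (g := fun x => ENNReal.ofReal (x⁻¹ / Real.log x ^ 2))
    (fun x hx => by simp only; rw [kk_sq hx.1])]
  rw [← ofReal_integral_eq_lintegral_ofReal hInt, hval]
  · congr 1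
    simp
  · refine (ae_restrict_iff' measurableSet_Ioc).2 (Filter.Eventually.of_forall fun x hx => ?_)
    have := hx.1
    simp only [Pi.zero_apply]
    positivity

lemma fold_lint {h : ℝ} (h0 : 0 < h) (f : ℝ → ℝ≥0∞) (hf : Measurable f) (N : ℕ) :
    ∫⁻ s in Set.Ico 0 ((N:ℝ) * h), f s =
      ∫⁻ x in Set.Ioc 0 h, ∑ j ∈ Finset.range N, f (((j:ℝ) + 1) * h - x) := by
  induction N with
  | zero => simp
  | succ N ih =>
    have hu : Set.Ico 0 (((N+1:ℕ):ℝ) * h) =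
        Set.Ico 0 ((N:ℝ) * h) ∪ Set.Ico ((N:ℝ)*h) (((N:ℝ)+1) * h) := by
      rw [Set.Ico_union_Ico_eq_Ico]
      · push_cast; rfl
      · positivity
      · nlinarith
    have hd : Disjoint (Set.Ico 0 ((N:ℝ) * h)) (Set.Ico ((N:ℝ)*h) (((N:ℝ)+1) * h)) := by
      rw [Set.Ico_disjoint_Ico]; simp
    rw [hu, lintegral_union measurableSet_Ico hd, ih]
    simp_rw [Finset.sum_range_succ]
    rw [lintegral_add_right _ (by fun_prop)]
    congr 1
    have mp := Measure.measurePreserving_sub_left (volume : Measure ℝ) (((N:ℝ)+1) * h)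
    rw [← mp.setLIntegral_comp_preimage measurableSet_Ico hf]
    congr 2
    rw [Set.preimage_const_sub_Ico]
    congr 1 <;> ring

noncomputable def av (r : ℝ) (l i : ℕ) (s : ℝ) : ℝ :=
  if s < leftPt r l i then Ker (leftPt r l i) s - Ker (leftPt r l (i+1)) s else 0

lemma measurable_av (r : ℝ) (l i : ℕ) : Measurable (av r l i) := by
  unfold av
  exact Measurable.ite measurableSet_Iio
    ((measurable_Ker_right _).sub (measurable_Ker_right _)) measurable_const

lemma leftPt_mono {r : ℝ} (hr : 0 < r) (l : ℕ) {i j : ℕ} (h : i ≤ j) :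
    leftPt r l i ≤ leftPt r l j := by
  unfold leftPt
  gcongr

lemma leftPt_le {r : ℝ} (hr : 0 < r) {l i : ℕ} (h : i ≤ 2 ^ l) : leftPt r l i ≤ r := by
  have := leftPt_mono hr l h
  refine this.trans (le_of_eq ?_)
  unfold leftPt
  push_cast
  field_simp

lemma Ker_anti {r : ℝ} (hr' : r < Real.exp (-2)) {s t u : ℝ} (hs : 0 ≤ s)
    (hst : s < t) (htu : t ≤ u) (hu : u ≤ r) : Ker u s ≤ Ker t s := by
  rw [Ker_of_lt hst, Ker_of_lt (hst.trans_le htu)]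
  exact kk_anti (by linarith) (by linarith) (by linarith)

lemma av_nonneg {r : ℝ} (hr : 0 < r) (hr' : r < Real.exp (-2)) {l i : ℕ} (hi : i < 2 ^ l)
    {s : ℝ} (hs : 0 ≤ s) : 0 ≤ av r l i s := by
  unfold av
  split_ifs with h
  · have := Ker_anti hr' hs h (leftPt_mono hr l (Nat.le_succ i)) (leftPt_le hr hi)
    simpa using this
  · exact le_rfl

lemma av_shift {r : ℝ} (hr : 0 < r) (l c j : ℕ) {x : ℝ} (hx : x ∈ Set.Ioc 0 (r / 2 ^ l)) :
    av r l c (((j:ℝ)+1) * (r / 2 ^ l) - x) =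
      kk (((c - (j+1) : ℕ) : ℝ) * (r / 2 ^ l) + x) - kk (((c - j : ℕ) : ℝ) * (r / 2 ^ l) + x) := by
  have hh : 0 < r / 2 ^ l := by positivity
  have e : ∀ c : ℕ, leftPt r l c = c * (r / 2 ^ l) := fun c => by unfold leftPt; ring
  unfold av
  rw [e, e]
  set h := r / 2 ^ l
  rcases Nat.lt_or_ge j c with hjc | hjc
  · have h1 : ((j:ℝ)+1) * h ≤ c * h := by
      gcongr; exact_mod_cast hjc
    have h2 : ((j:ℝ)+1) * h - x < c * h := by linarith [hx.1]
    have h3 : ((j:ℝ)+1) * h - x < (c+1:ℕ) * h := by push_cast; linarith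
    rw [if_pos h2, Ker_of_lt h2, Ker_of_lt h3, Nat.cast_sub hjc, Nat.cast_sub hjc.le]
    congr 2 <;> push_cast <;> ring
  · have h1 : (c:ℝ) * h ≤ j * h := by gcongr
    rw [if_neg (by linarith [hx.2]), Nat.sub_eq_zero_of_le hjc, Nat.sub_eq_zero_of_le (by omega)]
    simp

lemma lemma_one {r : ℝ} (hr : 0 < r) (hr' : r < Real.exp (-2)) {l i : ℕ} (hi : i < 2 ^ l) :
    ∫⁻ s in Set.Ico 0 r, ENNReal.ofReal (av r l i s * ∑ c ∈ Finset.range (2 ^ l), av r l c s) ≤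
      ENNReal.ofReal (1 / (-Real.log (r / 2 ^ l))) := by
  have hh : 0 < r / 2 ^ l := by positivity
  have hle : r / 2 ^ l ≤ r := div_le_self hr.le (one_le_pow₀ (by norm_num))
  have hN : r = ((2 ^ l : ℕ) : ℝ) * (r / 2 ^ l) := by push_cast; field_simp
  have hm : Measurable (fun s => ENNReal.ofReal
      (av r l i s * ∑ c ∈ Finset.range (2 ^ l), av r l c s)) :=
    ((measurable_av r l i).mul
      (Finset.measurable_fun_sum _ fun c _ => measurable_av r l c)).ennreal_ofReal
  rw [← lint_kk_sq hh (hle.trans_lt hr')]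
  have := fold_lint hh _ hm (2 ^ l)
  rw [← hN] at this
  rw [this]
  refine setLIntegral_mono' measurableSet_Ioc fun x hx => ?_
  have hs0 : ∀ j : ℕ, 0 ≤ ((j:ℝ)+1) * (r / 2 ^ l) - x := by
    intro j
    have : 0 ≤ (j:ℝ) * (r / 2 ^ l) := by positivity
    linarith [hx.2]
  have hkpos : ∀ m : ℕ, 0 ≤ kk ((m:ℝ) * (r / 2 ^ l) + x) := fun m =>
    kk_nonneg (by have := hx.1; positivity)
  have hS : ∀ j : ℕ, ∑ c ∈ Finset.range (2 ^ l), av r l c (((j:ℝ)+1) * (r / 2 ^ l) - x) ≤ kk x := by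
    intro j
    have e : ∀ c ∈ Finset.range (2 ^ l), av r l c (((j:ℝ)+1) * (r / 2 ^ l) - x) =
        (fun c : ℕ => kk (((c - (j+1) : ℕ) : ℝ) * (r / 2 ^ l) + x)) c -
        (fun c : ℕ => kk (((c - (j+1) : ℕ) : ℝ) * (r / 2 ^ l) + x)) (c + 1) := by
      intro c _
      rw [av_shift hr l c j hx]
      simp only [Nat.add_sub_add_right]
    rw [Finset.sum_congr rfl e, Finset.sum_range_sub']
    have := hkpos (2 ^ l - (j+1))
    simp
    simpa using this
  have hA : ∑ j ∈ Finset.range (2 ^ l), av r l i (((j:ℝ)+1) * (r / 2 ^ l) - x) ≤ kk x := by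
    have e : ∀ j ∈ Finset.range (2 ^ l), av r l i (((j:ℝ)+1) * (r / 2 ^ l) - x) =
        (fun j : ℕ => kk (((i - j : ℕ) : ℝ) * (r / 2 ^ l) + x)) (j + 1) -
        (fun j : ℕ => kk (((i - j : ℕ) : ℝ) * (r / 2 ^ l) + x)) j := by
      intro j _
      rw [av_shift hr l i j hx]
    rw [Finset.sum_congr rfl e, Finset.sum_range_sub (fun j : ℕ => kk (((i - j : ℕ) : ℝ) * (r / 2 ^ l) + x))]
    have := hkpos i
    simp only [Nat.sub_eq_zero_of_le hi.le]
    simp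
    exact this
  have hk0 : 0 ≤ kk x := kk_nonneg hx.1.le
  rw [← ENNReal.ofReal_sum_of_nonneg]
  · apply ENNReal.ofReal_le_ofReal
    calc _ ≤ ∑ j ∈ Finset.range (2 ^ l), av r l i (((j:ℝ)+1) * (r / 2 ^ l) - x) * kk x := by
            refine Finset.sum_le_sum fun j _ => ?_
            exact mul_le_mul_of_nonneg_left (hS j) (av_nonneg hr hr' hi (hs0 j))
      _ ≤ kk x ^ 2 := by
            rw [← Finset.sum_mul, sq]
            exact mul_le_mul_of_nonneg_right hA hk0
  · intro j _
    exact mul_nonneg (av_nonneg hr hr' hi (hs0 j)) (Finset.sum_nonneg fun c hc =>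
      av_nonneg hr hr' (Finset.mem_range.1 hc) (hs0 j))

section Comb
variable {μ : SignedMeasure ℝ} {r : ℝ} {n : ℕ}

lemma divided_anc (k : ℕ) : ∀ (d c : ℕ), Divided μ r n (k + d) c → Divided μ r n k (c / 2 ^ d) := by
  intro d
  induction d with
  | zero => intro c h; simpa using h
  | succ d ih =>
    intro c h
    have := ih _ h.1
    rwa [Nat.div_div_eq_div_mul, ← pow_succ'] at this

lemma inPart_not_divided {k i : ℕ} (h : InPartition μ r n k i) : ¬ Divided μ r n k i := by
  cases k with
  | zero => exact h.elim
  | succ k => exact fun h' => h.2 h'.2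

lemma inPart_anc {k d c : ℕ} (h : InPartition μ r n (k + (d + 1)) c) :
    Divided μ r n k (c / 2 ^ (d + 1)) := by
  have := divided_anc k d _ h.1
  rwa [Nat.div_div_eq_div_mul, ← pow_succ'] at this

lemma inPart_unique {k i k' i' : ℕ} (h : InPartition μ r n k i) (h' : InPartition μ r n k' i')
    (hk : k ≤ k') (he : i' / 2 ^ (k' - k) = i) : k = k' ∧ i = i' := by
  rcases eq_or_lt_of_le hk with rfl | hlt
  · simp at he; exact ⟨rfl, he.symm⟩
  · exfalso
    obtain ⟨d, rfl⟩ := Nat.exists_eq_add_of_lt hlt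
    have := inPart_anc (k := k) (d := d) h'
    rw [show k + d + 1 - k = d + 1 by omega] at he
    rw [he] at this
    exact inPart_not_divided h this

lemma divided_lt {l : ℕ} : ∀ {i : ℕ}, Divided μ r n l i → i < 2 ^ l := by
  induction l with
  | zero => intro i h; have : i = 0 := h; simp [this]
  | succ l ih => intro i h; have := ih h.1; rw [pow_succ]; omega

lemma inPart_lt {l i : ℕ} (h : InPartition μ r n l i) : i < 2 ^ l := by
  cases l with
  | zero => exact h.elim
  | succ l => have := divided_lt h.1; rw [pow_succ]; omega

lemma divided_level (hn : 0 < n) (h1 : μ.totalVariation Set.univ ≤ 1) {l i : ℕ}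
    (h : Divided μ r n l i) : l ≤ n := by
  cases l with
  | zero => omega
  | succ l =>
    have h2 := h.2
    unfold DivCond at h2
    have h3 : (μ.totalVariation (binInt r (l+1) i)).toReal ≤ 1 :=
      ENNReal.toReal_le_of_le_ofReal (by norm_num)
        (by simpa using (measure_mono (Set.subset_univ _)).trans h1)
    have h4 := h2.trans h3
    rw [div_le_one (by exact_mod_cast hn)] at h4
    exact_mod_cast h4

lemma inPart_level (hn : 0 < n) (h1 : μ.totalVariation Set.univ ≤ 1) {l i : ℕ}
    (h : InPartition μ r n l i) : l ≤ n + 1 := by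
  cases l with
  | zero => omega
  | succ l => have := divided_level hn h1 h.1; omega

lemma inPart_mass {l i : ℕ} (h : InPartition μ r n l i) :
    (μ.totalVariation.real (binInt r l i)) ≤ l / n := by
  cases l with
  | zero => exact h.elim
  | succ l => exact (not_le.1 h.2).le

lemma inPart_exists (hn : 0 < n) (h1 : μ.totalVariation Set.univ ≤ 1) {c : ℕ}
    (hc : c < 2 ^ (n + 1)) : ∃ k ≤ n + 1, InPartition μ r n k (c / 2 ^ (n + 1 - k)) := by
  by_contra! hcon
  have : ∀ k ≤ n + 1, Divided μ r n k (c / 2 ^ (n + 1 - k)) := by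
    intro k
    induction k with
    | zero => intro _; exact Nat.div_eq_of_lt (by simpa using hc)
    | succ k ih =>
      intro hk
      have h2 := ih (by omega)
      have h3 := hcon (k+1) hk
      have e : c / 2 ^ (n + 1 - (k + 1)) / 2 = c / 2 ^ (n + 1 - k) := by
        rw [Nat.div_div_eq_div_mul, ← pow_succ]
        congr 2; omega
      rw [← e] at h2
      refine ⟨h2, ?_⟩
      by_contra h4
      exact h3 ⟨h2, h4⟩
  have := divided_level hn h1 (this (n+1) le_rfl)
  omega

open Classical in
noncomputable def PF (μ : SignedMeasure ℝ) (r : ℝ) (n : ℕ) : Finset (ℕ × ℕ) :=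
  (Finset.range (n + 2) ×ˢ Finset.range (2 ^ (n + 1))).filter
    (fun p => InPartition μ r n p.1 p.2)

lemma mem_PF (hn : 0 < n) (h1 : μ.totalVariation Set.univ ≤ 1) (p : ℕ × ℕ) :
    p ∈ PF μ r n ↔ InPartition μ r n p.1 p.2 := by
  unfold PF
  simp only [Finset.mem_filter, Finset.mem_product, Finset.mem_range, and_iff_right_iff_imp]
  intro h
  have := inPart_level hn h1 h
  exact ⟨by omega, (inPart_lt h).trans_le (Nat.pow_le_pow_right (by norm_num) this)⟩

lemma VstarPart_eq (hn : 0 < n) (h1 : μ.totalVariation Set.univ ≤ 1) (s : ℝ) :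
    VstarPart μ r n s =
      ∑ p ∈ PF μ r n, μ (binInt r p.1 p.2) * Ker (leftPt r p.1 p.2) s := by
  unfold VstarPart
  rw [← Finset.tsum_subtype (PF μ r n)
    (fun p : ℕ × ℕ => μ (binInt r p.1 p.2) * Ker (leftPt r p.1 p.2) s)]
  have e : ∀ p : ℕ × ℕ, InPartition μ r n p.1 p.2 ↔ p ∈ PF μ r n :=
    fun p => (mem_PF hn h1 p).symm
  exact Equiv.tsum_eq (Equiv.subtypeEquivRight e)
    (fun p : {p // p ∈ PF μ r n} => μ (binInt r p.1.1 p.1.2) * Ker (leftPt r p.1.1 p.1.2) s)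

lemma leftPt_refine (r : ℝ) {k l : ℕ} (hk : k ≤ l) (i : ℕ) :
    leftPt r k i = leftPt r l (i * 2 ^ (l - k)) := by
  unfold leftPt
  obtain ⟨d, rfl⟩ := Nat.exists_eq_add_of_le hk
  rw [Nat.add_sub_cancel_left]
  push_cast
  rw [pow_add]
  field_simp

lemma binInt_eq (r : ℝ) (l i : ℕ) : binInt r l i = Set.Ioc (leftPt r l i) (leftPt r l (i+1)) := by
  unfold binInt leftPt; push_cast; rfl

lemma leftPt_lt (hr : 0 < r) {l i j : ℕ} : leftPt r l i < leftPt r l j ↔ i < j := by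
  unfold leftPt
  rw [div_lt_div_iff_of_pos_right (by positivity), mul_lt_mul_iff_left₀ hr, Nat.cast_lt]

lemma inPart_disj_aux (hr : 0 < r) {k i k' i' : ℕ} (h : InPartition μ r n k i)
    (h' : InPartition μ r n k' i') (hk : k ≤ k') {t : ℝ} (ht : t ∈ binInt r k i)
    (ht' : t ∈ binInt r k' i') : k = k' ∧ i = i' := by
  apply inPart_unique h h' hk
  rw [binInt_eq] at ht ht'
  rw [leftPt_refine r hk, leftPt_refine r hk] at ht
  have a := (leftPt_lt hr).1 (ht.1.trans_le ht'.2)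
  have b := (leftPt_lt hr).1 (ht'.1.trans_le ht.2)
  refine Nat.div_eq_of_lt_le ?_ ?_
  · omega
  · exact b

lemma inPart_disj (hr : 0 < r) {p q : ℕ × ℕ} (h : InPartition μ r n p.1 p.2)
    (h' : InPartition μ r n q.1 q.2) {t : ℝ} (ht : t ∈ binInt r p.1 p.2)
    (ht' : t ∈ binInt r q.1 q.2) : p = q := by
  rcases le_total p.1 q.1 with hk | hk
  · have := inPart_disj_aux hr h h' hk ht ht'
    exact Prod.ext this.1 this.2
  · have := inPart_disj_aux hr h' h hk ht' ht
    exact Prod.ext this.1.symm this.2.symm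

/-- left-closed version of the binary interval -/
def binIco (r : ℝ) (l i : ℕ) : Set ℝ := Set.Ico (leftPt r l i) (leftPt r l (i+1))

lemma inPart_disj_Ico (hr : 0 < r) {p q : ℕ × ℕ} (h : InPartition μ r n p.1 p.2)
    (h' : InPartition μ r n q.1 q.2) {t : ℝ} (ht : t ∈ binIco r p.1 p.2)
    (ht' : t ∈ binIco r q.1 q.2) : p = q := by
  unfold binIco at ht ht'
  have hm : t < min (leftPt r p.1 (p.2+1)) (leftPt r q.1 (q.2+1)) := lt_min ht.2 ht'.2
  refine inPart_disj hr h h' (t := min (leftPt r p.1 (p.2+1)) (leftPt r q.1 (q.2+1))) ?_ ?_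
  · rw [binInt_eq]; exact ⟨ht.1.trans_lt hm, min_le_left _ _⟩
  · rw [binInt_eq]; exact ⟨ht'.1.trans_lt hm, min_le_right _ _⟩

lemma PF_cover (hr : 0 < r) (hn : 0 < n) (h1 : μ.totalVariation Set.univ ≤ 1) :
    Set.Ioc 0 r ⊆ ⋃ p ∈ PF μ r n, binInt r p.1 p.2 := by
  intro t ht
  have hh : 0 < r / 2 ^ (n+1) := by positivity
  have e : ∀ c : ℕ, leftPt r (n+1) c = c * (r / 2 ^ (n+1)) := fun c => by unfold leftPt; ring
  have hx : 0 < t / (r / 2 ^ (n+1)) := div_pos ht.1 hh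
  have hc0 : 0 < ⌈t / (r / 2 ^ (n+1))⌉₊ := Nat.ceil_pos.2 hx
  obtain ⟨c, hc⟩ : ∃ c, ⌈t / (r / 2 ^ (n+1))⌉₊ = c + 1 := ⟨_, (Nat.succ_pred_eq_of_pos hc0).symm⟩
  have hb1 : t ≤ leftPt r (n+1) (c+1) := by
    rw [e, ← div_le_iff₀ hh, ← hc]; exact Nat.le_ceil _
  have hb2 : leftPt r (n+1) c < t := by
    rw [e, ← lt_div_iff₀ hh]
    exact Nat.lt_ceil.1 (by omega)
  have hc2 : c < 2 ^ (n+1) := by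
    have : leftPt r (n+1) c < leftPt r (n+1) (2 ^ (n+1)) := by
      refine hb2.trans_le (ht.2.trans (le_of_eq ?_))
      unfold leftPt; push_cast; field_simp
    exact (leftPt_lt hr).1 this
  obtain ⟨k, hk, hP⟩ := inPart_exists (μ := μ) (r := r) hn h1 hc2
  simp only [Set.mem_iUnion]
  refine ⟨(k, c / 2 ^ (n+1-k)), (mem_PF hn h1 _).2 hP, ?_⟩
  rw [binInt_eq]
  simp only
  rw [leftPt_refine r hk, leftPt_refine r hk]
  constructor
  · exact (leftPt_mono hr _ (Nat.div_mul_le_self _ _)).trans_lt hb2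
  · refine hb1.trans (leftPt_mono hr _ ?_)
    have := Nat.lt_mul_div_succ c (b := 2 ^ (n+1-k)) (by positivity)
    rw [mul_comm]
    omega

lemma av_le_sum (hr : 0 < r) (hr' : r < Real.exp (-2)) {k l i : ℕ} (hk : k ≤ l) (hi : i < 2 ^ k)
    {s : ℝ} (hs : 0 ≤ s) :
    av r k i s ≤ ∑ c ∈ Finset.Ico (i * 2 ^ (l - k)) ((i + 1) * 2 ^ (l - k)), av r l c s := by
  by_cases h : s < leftPt r k i
  · unfold av
    rw [if_pos h]
    rw [leftPt_refine r hk, leftPt_refine r hk]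
    rw [leftPt_refine r hk] at h
    have hle : i * 2 ^ (l - k) ≤ (i + 1) * 2 ^ (l - k) := Nat.mul_le_mul_right _ (by omega)
    have e : ∀ c ∈ Finset.Ico (i * 2 ^ (l - k)) ((i + 1) * 2 ^ (l - k)),
        (if s < leftPt r l c then Ker (leftPt r l c) s - Ker (leftPt r l (c+1)) s else 0) =
        -((fun c => Ker (leftPt r l c) s) (c+1) - (fun c => Ker (leftPt r l c) s) c) := by
      intro c hc
      rw [if_pos (h.trans_le (leftPt_mono hr l (Finset.mem_Ico.1 hc).1))]
      simp
    rw [Finset.sum_congr rfl e, Finset.sum_neg_distrib,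
      Finset.sum_Ico_sub (fun c => Ker (leftPt r l c) s) hle]
    simp
  · have : av r k i s = 0 := by unfold av; rw [if_neg h]
    rw [this]
    refine Finset.sum_nonneg fun c hc => av_nonneg hr hr' ?_ hs
    refine (Finset.mem_Ico.1 hc).2.trans_le ?_
    calc (i+1) * 2 ^ (l-k) ≤ 2 ^ k * 2 ^ (l-k) := Nat.mul_le_mul_right _ hi
      _ = 2 ^ l := by rw [← pow_add]; congr 1; omega

lemma sum_av_le (hr : 0 < r) (hr' : r < Real.exp (-2)) (hn : 0 < n)
    (h1 : μ.totalVariation Set.univ ≤ 1) (l : ℕ) {s : ℝ} (hs : 0 ≤ s) :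
    ∑ p ∈ (PF μ r n).filter (fun p => p.1 ≤ l), av r p.1 p.2 s ≤
      ∑ c ∈ Finset.range (2 ^ l), av r l c s := by
  have hin : ∀ p ∈ (PF μ r n).filter (fun p => p.1 ≤ l), InPartition μ r n p.1 p.2 ∧ p.1 ≤ l := by
    intro p hp
    rw [Finset.mem_filter, mem_PF hn h1] at hp
    exact hp
  calc _ ≤ ∑ p ∈ (PF μ r n).filter (fun p => p.1 ≤ l),
        ∑ c ∈ Finset.Ico (p.2 * 2 ^ (l - p.1)) ((p.2 + 1) * 2 ^ (l - p.1)), av r l c s :=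
        Finset.sum_le_sum fun p hp =>
          av_le_sum hr hr' (hin p hp).2 (inPart_lt (hin p hp).1) hs
    _ = ∑ c ∈ ((PF μ r n).filter (fun p => p.1 ≤ l)).biUnion
        (fun p => Finset.Ico (p.2 * 2 ^ (l - p.1)) ((p.2 + 1) * 2 ^ (l - p.1))), av r l c s := by
        rw [Finset.sum_biUnion]
        intro p hp q hq hpq
        rw [Function.onFun, Finset.disjoint_left]
        intro c hc hc'
        rw [Finset.mem_Ico] at hc hc'
        obtain ⟨hp1, hp2⟩ := hin p hp
        obtain ⟨hq1, hq2⟩ := hin q hq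
        apply hpq
        refine inPart_disj hr hp1 hq1 (t := leftPt r l (c+1)) ?_ ?_
        · rw [binInt_eq, leftPt_refine r hp2, leftPt_refine r hp2]
          exact ⟨(leftPt_lt hr).2 (by omega), leftPt_mono hr l (by omega)⟩
        · rw [binInt_eq, leftPt_refine r hq2, leftPt_refine r hq2]
          exact ⟨(leftPt_lt hr).2 (by omega), leftPt_mono hr l (by omega)⟩
    _ ≤ _ := by
        apply Finset.sum_le_sum_of_subset_of_nonneg
        · intro c hc
          rw [Finset.mem_biUnion] at hc
          obtain ⟨p, hp, hc⟩ := hc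
          obtain ⟨hp1, hp2⟩ := hin p hp
          rw [Finset.mem_range]
          refine (Finset.mem_Ico.1 hc).2.trans_le ?_
          calc (p.2+1) * 2 ^ (l-p.1) ≤ 2 ^ p.1 * 2 ^ (l-p.1) :=
                Nat.mul_le_mul_right _ (inPart_lt hp1)
            _ = 2 ^ l := by rw [← pow_add]; congr 1; omega
        · intro c hc _
          exact av_nonneg hr hr' (Finset.mem_range.1 hc) hs

end Comb

lemma cs_lint {α : Type*} [MeasurableSpace α] (m : Measure α) {f : α → ℝ≥0∞} (hf : Measurable f) :
    (∫⁻ a, f a ∂m) ^ 2 ≤ m Set.univ * ∫⁻ a, f a ^ 2 ∂m := by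
  have h := ENNReal.lintegral_mul_le_Lp_mul_Lq m (p := 2) (q := 2)
    (Real.holderConjugate_iff.2 ⟨by norm_num, by norm_num⟩)
    (f := fun _ => 1) (g := f) aemeasurable_const hf.aemeasurable
  have h2 := pow_le_pow_left' h 2
  rw [mul_pow] at h2
  have e : ∀ x : ℝ≥0∞, (x ^ (1/2 : ℝ)) ^ 2 = x := by
    intro x
    rw [← ENNReal.rpow_natCast, ← ENNReal.rpow_mul]
    norm_num
  rw [e, e] at h2
  simpa using h2

section Bd
variable {μ : SignedMeasure ℝ} {r : ℝ} {n : ℕ}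

lemma measurableSet_binInt (l i : ℕ) : MeasurableSet (binInt r l i) := measurableSet_Ioc

lemma measurableSet_binIco (l i : ℕ) : MeasurableSet (binIco r l i) := measurableSet_Ico

lemma sum_mass_le (hr : 0 < r) (hn : 0 < n) (h1 : μ.totalVariation Set.univ ≤ 1) :
    ∑ p ∈ PF μ r n, μ.totalVariation.real (binInt r p.1 p.2) ≤ 1 := by
  rw [← measureReal_biUnion_finset]
  · refine (measureReal_mono (Set.subset_univ _)).trans ?_
    exact ENNReal.toReal_le_of_le_ofReal (by norm_num) (by simpa using h1)
  · intro p hp q hq hpq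
    rw [Function.onFun, Set.disjoint_left]
    intro t ht ht'
    exact hpq (inPart_disj hr ((mem_PF hn h1 p).1 hp) ((mem_PF hn h1 q).1 hq) ht ht')
  · intro p _
    exact measurableSet_binInt _ _

lemma neg_log_ge (hr : 0 < r) (hr' : r < Real.exp (-2)) (l : ℕ) :
    l * Real.log 2 < -Real.log (r / 2 ^ l) := by
  rw [Real.log_div hr.ne' (by positivity), Real.log_pow]
  have := (Real.log_lt_iff_lt_exp hr).2 hr'
  linarith

lemma level_div (hr : 0 < r) (hr' : r < Real.exp (-2)) (l : ℕ) :
    (l:ℝ) * (1 / (-Real.log (r / 2 ^ l))) ≤ 1 / Real.log 2 := by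
  have h := neg_log_ge hr hr' l
  have h2 : 0 < Real.log 2 := Real.log_pos (by norm_num)
  have h3 : (0:ℝ) ≤ l * Real.log 2 := by positivity
  rw [mul_one_div, div_le_div_iff₀ (by linarith) h2]
  linarith

/-- the common final summation -/
lemma sum_weights (hr : 0 < r) (hr' : r < Real.exp (-2)) (hn : 0 < n)
    (h1 : μ.totalVariation Set.univ ≤ 1) :
    ∑ p ∈ PF μ r n, μ.totalVariation.real (binInt r p.1 p.2) * ((p.1:ℝ) / n) *
      (1 / (-Real.log (r / 2 ^ p.1))) ≤ 1 / Real.log 2 / n := by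
  have h2 : 0 < Real.log 2 := Real.log_pos (by norm_num)
  calc _ ≤ ∑ p ∈ PF μ r n, μ.totalVariation.real (binInt r p.1 p.2) * (1 / Real.log 2 / n) := by
        refine Finset.sum_le_sum fun p _ => ?_
        rw [mul_assoc]
        refine mul_le_mul_of_nonneg_left ?_ measureReal_nonneg
        rw [div_mul_eq_mul_div]
        have := level_div hr hr' p.1
        gcongr
    _ ≤ _ := by
        rw [← Finset.sum_mul]
        exact mul_le_of_le_one_left (by positivity) (sum_mass_le hr hn h1)

noncomputable def Af (μ : SignedMeasure ℝ) (r : ℝ) (n : ℕ) (s : ℝ) : ℝ :=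
  ∑ p ∈ PF μ r n, μ.totalVariation.real (binInt r p.1 p.2) * av r p.1 p.2 s

lemma measurable_Af : Measurable (Af μ r n) :=
  Finset.measurable_fun_sum _ fun p _ => (measurable_av r p.1 p.2).const_mul _

lemma sq_sum_le {ι : Type*} (P : Finset ι) (x : ι → ℝ) (lv : ι → ℕ) (hx : ∀ p ∈ P, 0 ≤ x p) :
    (∑ p ∈ P, x p) ^ 2 ≤ 2 * ∑ p ∈ P, x p * ∑ q ∈ P.filter (fun q => lv q ≤ lv p), x q := by
  have e1 : ∑ p ∈ P, x p * ∑ q ∈ P.filter (fun q => lv q ≤ lv p), x q =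
      ∑ p ∈ P, ∑ q ∈ P, if lv q ≤ lv p then x p * x q else 0 := by
    refine Finset.sum_congr rfl fun p _ => ?_
    rw [Finset.mul_sum, Finset.sum_filter]
  have e2 : ∑ p ∈ P, ∑ q ∈ P, (if lv q ≤ lv p then x p * x q else 0) =
      ∑ p ∈ P, ∑ q ∈ P, if lv p ≤ lv q then x p * x q else 0 := by
    rw [Finset.sum_comm]
    refine Finset.sum_congr rfl fun p _ => Finset.sum_congr rfl fun q _ => ?_
    rw [mul_comm (x q)]
  rw [two_mul, e1]
  nth_rewrite 2 [e2]
  rw [← Finset.sum_add_distrib, sq, Finset.sum_mul_sum]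
  refine Finset.sum_le_sum fun p hp => ?_
  rw [← Finset.sum_add_distrib]
  refine Finset.sum_le_sum fun q hq => ?_
  have := mul_nonneg (hx p hp) (hx q hq)
  rcases le_total (lv p) (lv q) with h | h
  · rw [if_pos h]; split_ifs <;> linarith
  · rw [if_pos h]; split_ifs <;> linarith

lemma Af_sq_le (hr : 0 < r) (hr' : r < Real.exp (-2)) (hn : 0 < n)
    (h1 : μ.totalVariation Set.univ ≤ 1) {s : ℝ} (hs : 0 ≤ s) :
    Af μ r n s ^ 2 ≤ ∑ p ∈ PF μ r n, 2 * (μ.totalVariation.real (binInt r p.1 p.2) *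
      ((p.1:ℝ) / n)) * (av r p.1 p.2 s * ∑ c ∈ Finset.range (2 ^ p.1), av r p.1 c s) := by
  have hin : ∀ p ∈ PF μ r n, InPartition μ r n p.1 p.2 := fun p hp => (mem_PF hn h1 p).1 hp
  have hav : ∀ p ∈ PF μ r n, 0 ≤ av r p.1 p.2 s :=
    fun p hp => av_nonneg hr hr' (inPart_lt (hin p hp)) hs
  unfold Af
  refine (sq_sum_le _ _ (fun p => p.1) fun p hp => mul_nonneg measureReal_nonneg (hav p hp)).trans ?_
  rw [Finset.mul_sum]
  refine Finset.sum_le_sum fun p hp => ?_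
  have h3 : ∑ q ∈ (PF μ r n).filter (fun q => q.1 ≤ p.1),
      μ.totalVariation.real (binInt r q.1 q.2) * av r q.1 q.2 s ≤
      ((p.1:ℝ) / n) * ∑ c ∈ Finset.range (2 ^ p.1), av r p.1 c s := by
    calc _ ≤ ∑ q ∈ (PF μ r n).filter (fun q => q.1 ≤ p.1), ((p.1:ℝ) / n) * av r q.1 q.2 s := by
          refine Finset.sum_le_sum fun q hq => ?_
          rw [Finset.mem_filter] at hq
          refine mul_le_mul_of_nonneg_right ((inPart_mass (hin q hq.1)).trans ?_) (hav q hq.1)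
          have : (q.1:ℝ) ≤ p.1 := by exact_mod_cast hq.2
          gcongr
      _ ≤ _ := by
          rw [← Finset.mul_sum]
          exact mul_le_mul_of_nonneg_left (sum_av_le hr hr' hn h1 p.1 hs) (by positivity)
  have h4 := mul_le_mul_of_nonneg_left h3
    (mul_nonneg (measureReal_nonneg (μ := μ.totalVariation) (s := binInt r p.1 p.2)) (hav p hp))
  calc _ ≤ 2 * _ := mul_le_mul_of_nonneg_left h4 (by norm_num)
    _ = _ := by ring

lemma Af_bound (hr : 0 < r) (hr' : r < Real.exp (-2)) (hn : 0 < n)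
    (h1 : μ.totalVariation Set.univ ≤ 1) :
    ∫⁻ s in Set.Ico 0 r, ENNReal.ofReal (Af μ r n s ^ 2) ≤
      ENNReal.ofReal (2 * (1 / Real.log 2 / n)) := by
  have hin : ∀ p ∈ PF μ r n, InPartition μ r n p.1 p.2 := fun p hp => (mem_PF hn h1 p).1 hp
  have hS : ∀ s, 0 ≤ s → ∀ p ∈ PF μ r n,
      0 ≤ av r p.1 p.2 s * ∑ c ∈ Finset.range (2 ^ p.1), av r p.1 c s := fun s hs p hp =>
    mul_nonneg (av_nonneg hr hr' (inPart_lt (hin p hp)) hs) (Finset.sum_nonneg fun c hc =>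
      av_nonneg hr hr' (Finset.mem_range.1 hc) hs)
  have hw : ∀ p : ℕ × ℕ, 0 ≤ 2 * (μ.totalVariation.real (binInt r p.1 p.2) * ((p.1:ℝ) / n)) :=
    fun p => by positivity
  have hl : ∀ l : ℕ, 0 ≤ 1 / (-Real.log (r / 2 ^ l)) := by
    intro l
    have h := neg_log_ge hr hr' l
    have h2 : 0 < Real.log 2 := Real.log_pos (by norm_num)
    have h3 : (0:ℝ) ≤ l * Real.log 2 := by positivity
    apply one_div_nonneg.2; linarith
  have hm : ∀ p : ℕ × ℕ, Measurable (fun s => ENNReal.ofReal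
      (av r p.1 p.2 s * ∑ c ∈ Finset.range (2 ^ p.1), av r p.1 c s)) := fun p =>
    ((measurable_av r p.1 p.2).mul
      (Finset.measurable_fun_sum _ fun c _ => measurable_av r p.1 c)).ennreal_ofReal
  calc _ ≤ ∫⁻ s in Set.Ico 0 r, ∑ p ∈ PF μ r n,
        ENNReal.ofReal (2 * (μ.totalVariation.real (binInt r p.1 p.2) * ((p.1:ℝ) / n))) *
        ENNReal.ofReal (av r p.1 p.2 s * ∑ c ∈ Finset.range (2 ^ p.1), av r p.1 c s) := by
        refine setLIntegral_mono' measurableSet_Ico fun s hs => ?_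
        refine (ENNReal.ofReal_le_ofReal (Af_sq_le hr hr' hn h1 hs.1)).trans (le_of_eq ?_)
        rw [ENNReal.ofReal_sum_of_nonneg fun p hp => mul_nonneg (hw p) (hS s hs.1 p hp)]
        refine Finset.sum_congr rfl fun p _ => ENNReal.ofReal_mul (hw p)
    _ = ∑ p ∈ PF μ r n,
        ENNReal.ofReal (2 * (μ.totalVariation.real (binInt r p.1 p.2) * ((p.1:ℝ) / n))) *
        ∫⁻ s in Set.Ico 0 r, ENNReal.ofReal
          (av r p.1 p.2 s * ∑ c ∈ Finset.range (2 ^ p.1), av r p.1 c s) := by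
        rw [lintegral_finsetSum _ fun p _ => (hm p).const_mul _]
        refine Finset.sum_congr rfl fun p _ => lintegral_const_mul _ (hm p)
    _ ≤ ∑ p ∈ PF μ r n,
        ENNReal.ofReal (2 * (μ.totalVariation.real (binInt r p.1 p.2) * ((p.1:ℝ) / n))) *
        ENNReal.ofReal (1 / (-Real.log (r / 2 ^ p.1))) := by
        refine Finset.sum_le_sum fun p hp => ?_
        gcongr
        exact lemma_one hr hr' (inPart_lt (hin p hp))
    _ = ENNReal.ofReal (∑ p ∈ PF μ r n,
        2 * (μ.totalVariation.real (binInt r p.1 p.2) * ((p.1:ℝ) / n)) *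
          (1 / (-Real.log (r / 2 ^ p.1)))) := by
        rw [ENNReal.ofReal_sum_of_nonneg fun p hp => mul_nonneg (hw p) (hl _)]
        refine Finset.sum_congr rfl fun p _ => (ENNReal.ofReal_mul (hw p)).symm
    _ ≤ _ := by
        apply ENNReal.ofReal_le_ofReal
        have := sum_weights hr hr' hn h1
        simp_rw [mul_assoc (2:ℝ)]
        rw [← Finset.mul_sum]
        linarith

noncomputable def Gf (μ : SignedMeasure ℝ) (r : ℝ) (n : ℕ) (s : ℝ) : ℝ≥0∞ :=
  ∑ p ∈ PF μ r n, (binIco r p.1 p.2).indicator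
    (fun s => ∫⁻ t in binInt r p.1 p.2, ENNReal.ofReal (Ker t s) ∂μ.totalVariation) s

lemma measurable_Gf : Measurable (Gf μ r n) := by
  refine Finset.measurable_fun_sum _ fun p _ => Measurable.indicator ?_ measurableSet_Ico
  exact Measurable.lintegral_prod_left' (f := fun q : ℝ × ℝ => ENNReal.ofReal (Ker q.1 q.2))
    measurable_Ker.ennreal_ofReal

lemma lint_Ker_sq (hr : 0 < r) (hr' : r < Real.exp (-2)) (l i : ℕ) {t : ℝ}
    (ht : t ∈ binInt r l i) :
    ∫⁻ s in binIco r l i, ENNReal.ofReal (Ker t s) ^ 2 ≤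
      ENNReal.ofReal (1 / (-Real.log (r / 2 ^ l))) := by
  have hh : 0 < r / 2 ^ l := by positivity
  have hle : r / 2 ^ l ≤ r := div_le_self hr.le (one_le_pow₀ (by norm_num))
  have hm : Measurable fun s => ENNReal.ofReal (Ker t s) ^ 2 :=
    (measurable_Ker_right t).ennreal_ofReal.pow_const 2
  rw [binInt_eq] at ht
  have e : leftPt r l (i+1) = leftPt r l i + r / 2 ^ l := by unfold leftPt; push_cast; ring
  rw [← lint_kk_sq hh (hle.trans_lt hr')]
  calc _ ≤ ∫⁻ s in Set.Ico (t - r / 2 ^ l) t, ENNReal.ofReal (Ker t s) ^ 2 := by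
        rw [← lintegral_indicator measurableSet_Ico]
        calc _ ≤ ∫⁻ s in binIco r l i, (Set.Ico (t - r / 2 ^ l) t).indicator
                (fun s => ENNReal.ofReal (Ker t s) ^ 2) s := by
              refine setLIntegral_mono' measurableSet_Ico fun s hs => ?_
              by_cases h : s < t
              · rw [Set.indicator_of_mem]
                exact ⟨by linarith [hs.1, ht.2], h⟩
              · rw [Ker_of_le (not_lt.1 h)]; simp
          _ ≤ _ := setLIntegral_le_lintegral _ _
    _ = ∫⁻ x in Set.Ioc 0 (r / 2 ^ l), ENNReal.ofReal (Ker t (t - x)) ^ 2 := by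
        have mp := Measure.measurePreserving_sub_left (volume : Measure ℝ) t
        rw [← mp.setLIntegral_comp_preimage measurableSet_Ico hm]
        congr 2
        rw [Set.preimage_const_sub_Ico]
        congr 1 <;> ring
    _ = _ := by
        refine setLIntegral_congr_fun measurableSet_Ioc fun x hx => ?_
        rw [Ker_of_lt (by linarith [hx.1]), sub_sub_cancel,
          ENNReal.ofReal_pow (kk_nonneg hx.1.le)]

lemma Gf_sq_le (hr : 0 < r) (hn : 0 < n)
    (h1 : μ.totalVariation Set.univ ≤ 1) (s : ℝ) :
    Gf μ r n s ^ 2 ≤ ∑ p ∈ PF μ r n, (binIco r p.1 p.2).indicator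
    (fun s => μ.totalVariation (binInt r p.1 p.2) *
      ∫⁻ t in binInt r p.1 p.2, ENNReal.ofReal (Ker t s) ^ 2 ∂μ.totalVariation) s := by
  have hin : ∀ p ∈ PF μ r n, InPartition μ r n p.1 p.2 := fun p hp => (mem_PF hn h1 p).1 hp
  unfold Gf
  by_cases h : ∃ p ∈ PF μ r n, s ∈ binIco r p.1 p.2
  · obtain ⟨p, hp, hs⟩ := h
    rw [Finset.sum_eq_single_of_mem p hp]
    · refine le_trans ?_ (Finset.single_le_sum (fun _ _ => zero_le) hp)
      rw [Set.indicator_of_mem hs, Set.indicator_of_mem hs]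
      have := cs_lint (μ.totalVariation.restrict (binInt r p.1 p.2))
        (f := fun t => ENNReal.ofReal (Ker t s)) (measurable_Ker_left s).ennreal_ofReal
      simpa using this
    · intro q hq hne
      rw [Set.indicator_of_notMem]
      intro hs'
      exact hne (inPart_disj_Ico hr (hin q hq) (hin p hp) hs' hs)
  · push Not at h
    rw [Finset.sum_eq_zero fun p hp => Set.indicator_of_notMem (h p hp) _]
    simp

lemma Gf_bound (hr : 0 < r) (hr' : r < Real.exp (-2)) (hn : 0 < n)
    (h1 : μ.totalVariation Set.univ ≤ 1) :
    ∫⁻ s, Gf μ r n s ^ 2 ≤ ENNReal.ofReal (1 / Real.log 2 / n) := by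
  have hin : ∀ p ∈ PF μ r n, InPartition μ r n p.1 p.2 := fun p hp => (mem_PF hn h1 p).1 hp
  have hl : ∀ l : ℕ, 0 ≤ 1 / (-Real.log (r / 2 ^ l)) := by
    intro l
    have h := neg_log_ge hr hr' l
    have h2 : 0 < Real.log 2 := Real.log_pos (by norm_num)
    have h3 : (0:ℝ) ≤ l * Real.log 2 := by positivity
    apply one_div_nonneg.2; linarith
  have hK : Measurable (fun q : ℝ × ℝ => ENNReal.ofReal (Ker q.1 q.2) ^ 2) :=
    measurable_Ker.ennreal_ofReal.pow_const 2
  have hm : ∀ p : ℕ × ℕ, Measurable fun s =>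
      ∫⁻ t in binInt r p.1 p.2, ENNReal.ofReal (Ker t s) ^ 2 ∂μ.totalVariation := fun p =>
    Measurable.lintegral_prod_left' (f := fun q : ℝ × ℝ => ENNReal.ofReal (Ker q.1 q.2) ^ 2) hK
  calc _ ≤ ∫⁻ s, ∑ p ∈ PF μ r n, (binIco r p.1 p.2).indicator
          (fun s => μ.totalVariation (binInt r p.1 p.2) *
          ∫⁻ t in binInt r p.1 p.2, ENNReal.ofReal (Ker t s) ^ 2 ∂μ.totalVariation) s :=
        lintegral_mono fun s => Gf_sq_le hr hn h1 s
    _ = ∑ p ∈ PF μ r n, μ.totalVariation (binInt r p.1 p.2) * ∫⁻ s in binIco r p.1 p.2,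
          ∫⁻ t in binInt r p.1 p.2, ENNReal.ofReal (Ker t s) ^ 2 ∂μ.totalVariation := by
        rw [lintegral_finsetSum _ fun p _ =>
          ((hm p).const_mul _).indicator (measurableSet_binIco p.1 p.2)]
        refine Finset.sum_congr rfl fun p _ => ?_
        rw [lintegral_indicator (measurableSet_binIco p.1 p.2), lintegral_const_mul _ (hm p)]
    _ ≤ ∑ p ∈ PF μ r n, ENNReal.ofReal (μ.totalVariation.real (binInt r p.1 p.2) * ((p.1:ℝ) / n) *
          (1 / (-Real.log (r / 2 ^ p.1)))) := by
        refine Finset.sum_le_sum fun p hp => ?_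
        have h4 : ∫⁻ s in binIco r p.1 p.2,
            ∫⁻ t in binInt r p.1 p.2, ENNReal.ofReal (Ker t s) ^ 2 ∂μ.totalVariation ≤
            ENNReal.ofReal (1 / (-Real.log (r / 2 ^ p.1))) *
              μ.totalVariation (binInt r p.1 p.2) := by
          rw [lintegral_lintegral_swap (f := fun s t => ENNReal.ofReal (Ker t s) ^ 2) (hK.comp measurable_swap).aemeasurable]
          rw [← setLIntegral_const]
          exact setLIntegral_mono' (measurableSet_binInt _ _) fun t ht =>
            lint_Ker_sq hr hr' p.1 p.2 ht
        have h5 : μ.totalVariation (binInt r p.1 p.2) =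
            ENNReal.ofReal (μ.totalVariation.real (binInt r p.1 p.2)) :=
          (ofReal_measureReal (measure_ne_top _ _)).symm
        refine (mul_le_mul' le_rfl h4).trans ?_
        rw [h5, ← ENNReal.ofReal_mul (hl _), ← ENNReal.ofReal_mul measureReal_nonneg]
        apply ENNReal.ofReal_le_ofReal
        have h6 := inPart_mass (hin p hp)
        rw [mul_assoc]
        refine mul_le_mul_of_nonneg_left ?_ measureReal_nonneg
        rw [mul_comm]
        exact mul_le_mul_of_nonneg_right h6 (hl _)
    _ ≤ _ := by
        rw [← ENNReal.ofReal_sum_of_nonneg fun p _ => mul_nonneg (by positivity) (hl _)]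
        exact ENNReal.ofReal_le_ofReal (sum_weights hr hr' hn h1)

end Bd

section Fin
variable {μ : SignedMeasure ℝ} {r : ℝ} {n : ℕ}

lemma intOn_Ker (hr : 0 < r) (hr' : r < Real.exp (-2)) (hn : 0 < n)
    (h1 : μ.totalVariation Set.univ ≤ 1) {s : ℝ} (hs : 0 ≤ s) (hG : Gf μ r n s < ⊤)
    {p : ℕ × ℕ} (hp : p ∈ PF μ r n) :
    IntegrableOn (fun t => Ker t s) (binInt r p.1 p.2) μ.totalVariation := by
  have hP := (mem_PF hn h1 p).1 hp
  have hm : AEStronglyMeasurable (fun t => Ker t s)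
      (μ.totalVariation.restrict (binInt r p.1 p.2)) := (measurable_Ker_left s).aestronglyMeasurable
  rcases lt_or_ge s (leftPt r p.1 p.2) with h | h
  · refine Measure.integrableOn_of_bounded (M := Ker (leftPt r p.1 p.2) s) (measure_ne_top _ _)
      (measurable_Ker_left s).aestronglyMeasurable ?_
    refine (ae_restrict_iff' (measurableSet_binInt _ _)).2 (Filter.Eventually.of_forall fun t ht => ?_)
    rw [binInt_eq] at ht
    rw [Real.norm_of_nonneg (Ker_nonneg _ _)]
    exact Ker_anti hr' hs h ht.1.le (ht.2.trans (leftPt_le hr (inPart_lt hP)))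
  rcases lt_or_ge s (leftPt r p.1 (p.2+1)) with h2 | h2
  · refine ⟨hm, ?_⟩
    rw [hasFiniteIntegral_iff_ofReal (Filter.Eventually.of_forall fun t => Ker_nonneg _ _)]
    refine lt_of_le_of_lt ?_ hG
    unfold Gf
    refine le_trans (le_of_eq ?_) (Finset.single_le_sum (fun _ _ => zero_le) hp)
    rw [Set.indicator_of_mem (show s ∈ binIco r p.1 p.2 from ⟨h, h2⟩)]
  · refine integrableOn_zero.congr_fun (fun t ht => ?_) (measurableSet_binInt _ _)
    rw [binInt_eq] at ht
    exact (Ker_of_le (ht.2.trans h2)).symm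

lemma piece_bound (hr : 0 < r) (hr' : r < Real.exp (-2)) (hn : 0 < n)
    (h1 : μ.totalVariation Set.univ ≤ 1) {s : ℝ} (hs : 0 ≤ s) (hG : Gf μ r n s < ⊤)
    {p : ℕ × ℕ} (hp : p ∈ PF μ r n) :
    ∫ t in binInt r p.1 p.2, |Ker t s - Ker (leftPt r p.1 p.2) s| ∂μ.totalVariation ≤
      μ.totalVariation.real (binInt r p.1 p.2) * av r p.1 p.2 s +
      ((binIco r p.1 p.2).indicator (fun s => ∫⁻ t in binInt r p.1 p.2,
        ENNReal.ofReal (Ker t s) ∂μ.totalVariation) s).toReal := by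
  have hP := (mem_PF hn h1 p).1 hp
  have hI := intOn_Ker hr hr' hn h1 hs hG hp
  have hD : IntegrableOn (fun t => |Ker t s - Ker (leftPt r p.1 p.2) s|) (binInt r p.1 p.2)
      μ.totalVariation := (hI.sub (integrable_const _)).abs
  rcases lt_or_ge s (leftPt r p.1 p.2) with h | h
  · refine le_trans ?_ (le_add_of_nonneg_right ENNReal.toReal_nonneg)
    rw [← smul_eq_mul, ← setIntegral_const]
    refine setIntegral_mono_on hD (integrable_const _) (measurableSet_binInt _ _) fun t ht => ?_
    rw [binInt_eq] at ht
    have hr1 := leftPt_le hr (inPart_lt hP)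
    have a := Ker_anti hr' hs h ht.1.le (ht.2.trans hr1)
    have b := Ker_anti hr' hs (h.trans ht.1) ht.2 hr1
    unfold av
    rw [if_pos h, abs_of_nonpos (by linarith)]
    linarith
  have hav : av r p.1 p.2 s = 0 := by unfold av; rw [if_neg (not_lt.2 h)]
  simp only [Ker_of_le h, sub_zero, hav, mul_zero, zero_add, abs_of_nonneg (Ker_nonneg _ _)]
  rcases lt_or_ge s (leftPt r p.1 (p.2+1)) with h2 | h2
  · rw [Set.indicator_of_mem (show s ∈ binIco r p.1 p.2 from ⟨h, h2⟩)]
    rw [integral_eq_lintegral_of_nonneg_ae (Filter.Eventually.of_forall fun t => Ker_nonneg _ _)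
      hI.aestronglyMeasurable]
  · refine le_trans (le_of_eq ?_) ENNReal.toReal_nonneg
    rw [setIntegral_congr_fun (g := fun _ => (0:ℝ)) (measurableSet_binInt _ _)]
    · simp
    · intro t ht
      rw [binInt_eq] at ht
      exact Ker_of_le (ht.2.trans h2)

lemma integral_split (hr : 0 < r) (hn : 0 < n)
    (h1 : μ.totalVariation Set.univ ≤ 1) (h0 : μ.totalVariation (Set.Ioc (0 : ℝ) r)ᶜ = 0)
    (ρ : Measure ℝ) (hρ : ρ ≤ μ.totalVariation) (f : ℝ → ℝ)
    (hf : ∀ p ∈ PF μ r n, IntegrableOn f (binInt r p.1 p.2) ρ) :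
    ∫ t, f t ∂ρ = ∑ p ∈ PF μ r n, ∫ t in binInt r p.1 p.2, f t ∂ρ := by
  have hU : ρ (⋃ p ∈ PF μ r n, binInt r p.1 p.2)ᶜ = 0 := by
    refine le_antisymm ?_ zero_le
    rw [← h0]
    exact (hρ _).trans (measure_mono (Set.compl_subset_compl.2 (PF_cover hr hn h1)))
  rw [← integral_biUnion_finset _ (fun p _ => measurableSet_binInt _ _) _ hf]
  · rw [Measure.restrict_eq_self_of_ae_mem]
    exact hU
  · intro p hp q hq hpq
    rw [Function.onFun, Set.disjoint_left]
    intro t ht ht'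
    exact hpq (inPart_disj hr ((mem_PF hn h1 p).1 hp) ((mem_PF hn h1 q).1 hq) ht ht')

lemma pointwise (hr : 0 < r) (hr' : r < Real.exp (-2)) (hn : 0 < n)
    (h1 : μ.totalVariation Set.univ ≤ 1) (h0 : μ.totalVariation (Set.Ioc (0 : ℝ) r)ᶜ = 0)
    {s : ℝ} (hs : 0 ≤ s) (hG : Gf μ r n s < ⊤) :
    |VstarInt μ s - VstarPart μ r n s| ≤ Af μ r n s + (Gf μ r n s).toReal := by
  have hpos : μ.toJordanDecomposition.posPart ≤ μ.totalVariation := Measure.le_add_right le_rfl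
  have hneg : μ.toJordanDecomposition.negPart ≤ μ.totalVariation := Measure.le_add_left le_rfl
  have hI := fun p hp => intOn_Ker hr hr' hn h1 hs hG (p := p) hp
  have hIp := fun p hp => (hI p hp).mono_measure hpos
  have hIn := fun p hp => (hI p hp).mono_measure hneg
  have hGs : (Gf μ r n s).toReal = ∑ p ∈ PF μ r n,
      ((binIco r p.1 p.2).indicator (fun s => ∫⁻ t in binInt r p.1 p.2,
        ENNReal.ofReal (Ker t s) ∂μ.totalVariation) s).toReal := by
    unfold Gf
    rw [ENNReal.toReal_sum]
    intro p hp
    refine ((Finset.single_le_sum (fun _ _ => zero_le) hp).trans_lt hG).ne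
  rw [VstarPart_eq hn h1, VstarInt,
    integral_split hr hn h1 h0 _ hpos _ hIp, integral_split hr hn h1 h0 _ hneg _ hIn, hGs, Af,
    ← Finset.sum_sub_distrib, ← Finset.sum_sub_distrib, ← Finset.sum_add_distrib]
  refine (Finset.abs_sum_le_sum_abs _ _).trans (Finset.sum_le_sum fun p hp => ?_)
  refine le_trans ?_ (piece_bound hr hr' hn h1 hs hG hp)
  have hDp := (hIp p hp).sub (integrable_const (Ker (leftPt r p.1 p.2) s))
  have hDn := (hIn p hp).sub (integrable_const (Ker (leftPt r p.1 p.2) s))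
  have e : ∫ t in binInt r p.1 p.2, |Ker t s - Ker (leftPt r p.1 p.2) s| ∂μ.totalVariation =
      ∫ t in binInt r p.1 p.2, |Ker t s - Ker (leftPt r p.1 p.2) s|
        ∂μ.toJordanDecomposition.posPart +
      ∫ t in binInt r p.1 p.2, |Ker t s - Ker (leftPt r p.1 p.2) s|
        ∂μ.toJordanDecomposition.negPart := by
    unfold SignedMeasure.totalVariation
    rw [Measure.restrict_add]
    exact integral_add_measure hDp.abs hDn.abs
  rw [e, SignedMeasure.apply_eq_posPart_real_sub_negPart_real _ (measurableSet_binInt _ _)]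
  have e2 : ∀ ρ : Measure ℝ, [IsFiniteMeasure ρ] →
      IntegrableOn (fun t => Ker t s) (binInt r p.1 p.2) ρ →
      ∫ t in binInt r p.1 p.2, (Ker t s - Ker (leftPt r p.1 p.2) s) ∂ρ =
      ∫ t in binInt r p.1 p.2, Ker t s ∂ρ -
        ρ.real (binInt r p.1 p.2) * Ker (leftPt r p.1 p.2) s := by
    intro ρ _ h
    rw [integral_sub h (integrable_const _), setIntegral_const, smul_eq_mul]
  have e3 := e2 _ (hIp p hp)
  have e4 := e2 _ (hIn p hp)
  have b1 := abs_integral_le_integral_abs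
    (μ := μ.toJordanDecomposition.posPart.restrict (binInt r p.1 p.2))
    (f := fun t => Ker t s - Ker (leftPt r p.1 p.2) s)
  have b2 := abs_integral_le_integral_abs
    (μ := μ.toJordanDecomposition.negPart.restrict (binInt r p.1 p.2))
    (f := fun t => Ker t s - Ker (leftPt r p.1 p.2) s)
  rw [e3] at b1
  rw [e4] at b2
  refine le_trans (le_of_eq ?_) ((abs_sub _ _).trans (add_le_add b1 b2))
  congr 1
  ring

lemma final_bound (hr : 0 < r) (hr' : r < Real.exp (-2)) (hn : 0 < n)
    (h1 : μ.totalVariation Set.univ ≤ 1) (h0 : μ.totalVariation (Set.Ioc (0 : ℝ) r)ᶜ = 0) :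
    (∫⁻ s in Set.Ioc (0 : ℝ) r,
            ENNReal.ofReal ((VstarInt μ s - VstarPart μ r n s) ^ 2)) ≤
          ENNReal.ofReal ((3:ℝ) ^ 2 / (n : ℝ)) := by
  have hl2 : (0.69:ℝ) < Real.log 2 := lt_trans (by norm_num) Real.log_two_gt_d9
  have hGb := Gf_bound (μ := μ) hr hr' hn h1
  have hAb := Af_bound (μ := μ) hr hr' hn h1
  have hfin : ∀ᵐ s, Gf μ r n s < ⊤ := by
    have := ae_lt_top (measurable_Gf.pow_const 2) (hGb.trans_lt ENNReal.ofReal_lt_top).ne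
    filter_upwards [this] with s hs
    by_contra h
    rw [not_lt, top_le_iff] at h
    simp [h] at hs
  rw [setLIntegral_congr (Ioc_ae_eq_Icc.trans Ico_ae_eq_Icc.symm)]
  calc _ ≤ ∫⁻ s in Set.Ico 0 r,
        (2 * ENNReal.ofReal (Af μ r n s ^ 2) + 2 * Gf μ r n s ^ 2) := by
        refine lintegral_mono_ae ?_
        refine (ae_restrict_iff' measurableSet_Ico).2 ?_
        filter_upwards [hfin] with s hs hsr
        have hp := pointwise hr hr' hn h1 h0 hsr.1 hs
        have hg : Gf μ r n s ^ 2 = ENNReal.ofReal ((Gf μ r n s).toReal ^ 2) := by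
          rw [ENNReal.ofReal_pow ENNReal.toReal_nonneg, ENNReal.ofReal_toReal hs.ne]
        rw [hg, show (2:ℝ≥0∞) = ENNReal.ofReal 2 by simp, ← ENNReal.ofReal_mul (by norm_num),
          ← ENNReal.ofReal_mul (by norm_num), ← ENNReal.ofReal_add (by positivity) (by positivity)]
        apply ENNReal.ofReal_le_ofReal
        have h3 := pow_le_pow_left₀ (abs_nonneg _) hp 2
        rw [sq_abs] at h3
        nlinarith [sq_nonneg (Af μ r n s - (Gf μ r n s).toReal)]
    _ = 2 * (∫⁻ s in Set.Ico 0 r, ENNReal.ofReal (Af μ r n s ^ 2)) +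
        2 * ∫⁻ s in Set.Ico 0 r, Gf μ r n s ^ 2 := by
        rw [lintegral_add_right _ ((measurable_Gf.pow_const 2).const_mul _),
          lintegral_const_mul _ (measurable_Gf.pow_const 2),
          lintegral_const_mul _ (measurable_Af.pow_const 2).ennreal_ofReal]
    _ ≤ 2 * ENNReal.ofReal (2 * (1 / Real.log 2 / n)) + 2 * ENNReal.ofReal (1 / Real.log 2 / n) := by
        gcongr
        exact (setLIntegral_le_lintegral _ _).trans hGb
    _ = ENNReal.ofReal (6 * (1 / Real.log 2 / n)) := by
        rw [show (2:ℝ≥0∞) = ENNReal.ofReal 2 by simp, ← ENNReal.ofReal_mul (by norm_num),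
          ← ENNReal.ofReal_mul (by norm_num), ← ENNReal.ofReal_add (by positivity) (by positivity)]
        congr 1
        ring
    _ ≤ _ := by
        apply ENNReal.ofReal_le_ofReal
        rw [← mul_div_assoc]
        gcongr
        rw [mul_one_div, div_le_iff₀ (by linarith)]
        linarith

end Fin

/-- Approximation by the `n`-essential partition: there is a numerical constant `C`
such that for every `r < e^{-2}`, `n ≥ 1` and signed measure `μ` supported on
`(0,r]` with `‖μ‖₁ ≤ 1`, `‖Δ_{𝕀ⁿ_μ} μ‖₂ = ‖V*μ - V*_{𝕀ⁿ_μ} μ‖₂ ≤ C n^{-1/2}`. -/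
theorem essential_partition_approximation :
    ∃ C : ℝ, 0 < C ∧ ∀ r : ℝ, 0 < r → r < Real.exp (-2) → ∀ n : ℕ, 0 < n →
      ∀ μ : MeasureTheory.SignedMeasure ℝ,
        μ.totalVariation (Set.Ioc (0 : ℝ) r)ᶜ = 0 →
        μ.totalVariation Set.univ ≤ 1 →
        (∫⁻ s in Set.Ioc (0 : ℝ) r,
            ENNReal.ofReal ((VstarInt μ s - VstarPart μ r n s) ^ 2)) ≤
          ENNReal.ofReal (C ^ 2 / (n : ℝ)) := by
  exact ⟨3, by norm_num, fun r hr hr' n hn μ h0 h1 => final_bound hr hr' hn h1 h0⟩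
end
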